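/- arXiv:1506.03741 — 3 statements merged into one kernel-verified Lean document; each statement's English description precedes it below -/
import Mathlib

section
/- Assume the Riemann Hypothesis. There exists an absolute constant C > 0 such that for all X ≥ 1 and all h with 0 < h ≤ X, ∫_{1}^{X} (ψ(x+h) − ψ(x) − h)² dx ≤ C·h·X·(log(2X/h))². -/
/-- The Chebyshev function `ψ(x) = ∑_{n ≤ x} Λ(n)`. -/
noncomputable def chebyshevPsi (x : ℝ) : ℝ :=
  ∑ n ∈ Finset.range (⌊x⌋₊ + 1), ArithmeticFunction.vonMangoldt n

section

open Complex Metric Set Filter Topology MeasureTheory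

namespace SV

lemma exists_log {f : ℂ → ℂ} {c : ℂ} {R : ℝ} (hR : 0 < R)
    (hf : DifferentiableOn ℂ f (ball c R)) (h0 : ∀ z ∈ ball c R, f z ≠ 0) :
    ∃ L : ℂ → ℂ, L c = 0 ∧ (∀ z ∈ ball c R, HasDerivAt L (deriv f z / f z) z) ∧
      ∀ z ∈ ball c R, f z = f c * exp (L z) := by
  have hd : DifferentiableOn ℂ (fun z => deriv f z / f z) (ball c R) :=
    (hf.deriv isOpen_ball).div hf h0
  obtain ⟨G, hG⟩ := hd.isExactOn_ball
  have hG : ∀ z ∈ ball c R, HasDerivAt G (deriv f z / f z) z := hG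
  refine ⟨fun z => G z - G c, by simp, fun z hz => (hG z hz).sub_const _, ?_⟩
  have hcb : c ∈ ball c R := mem_ball_self hR
  have key : ∀ z ∈ ball c R, f z * exp (-(G z - G c)) = f c * exp (-(G c - G c)) := by
    intro z hz
    have hder : ∀ x ∈ ball c R, HasDerivAt (fun z => f z * exp (-(G z - G c))) 0 x := by
      intro x hx
      have h1 := (hf.differentiableAt (isOpen_ball.mem_nhds hx)).hasDerivAt
      have h2 := ((hG x hx).sub_const (G c)).neg.cexp
      have h3 := h1.mul h2
      refine h3.congr_deriv ?_
      have e : f x * (deriv f x / f x) = deriv f x := mul_div_cancel₀ _ (h0 x hx)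
      linear_combination -exp (-(G x - G c)) * e
    exact (convex_ball c R).is_const_of_fderivWithin_eq_zero (𝕜 := ℂ)
      (fun x hx => (hder x hx).differentiableAt.differentiableWithinAt)
      (fun x hx => by
        rw [fderivWithin_of_isOpen isOpen_ball hx]
        have := (hder x hx).hasFDerivAt.fderiv
        rw [this]; ext; simp) hz hcb
  intro z hz
  have := key z hz
  simp only [sub_self, neg_zero, exp_zero, mul_one] at this
  rw [← this, mul_assoc, ← exp_add]; simp

lemma bc_log {f : ℂ → ℂ} {c : ℂ} {R r M : ℝ} (hr : 0 ≤ r) (hrR : r < R) (hM : 1 < M)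
    (hf : DifferentiableOn ℂ f (ball c R)) (h0 : ∀ z ∈ ball c R, f z ≠ 0)
    (hb : ∀ z ∈ ball c R, ‖f z‖ ≤ M * ‖f c‖) :
    (∀ z, ‖z - c‖ ≤ r → ‖f c‖ * Real.exp (-(2 * Real.log M * R / (R - r))) ≤ ‖f z‖) ∧
    (∀ z, ‖z - c‖ ≤ r → ‖deriv f z / f z‖ ≤ 8 * R / (R - r) ^ 2 * Real.log M) := by
  have hR : 0 < R := by linarith
  obtain ⟨L, hLc, hL, hfL⟩ := exists_log hR hf h0
  have hlM : 0 < Real.log M := Real.log_pos hM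
  have hfc : 0 < ‖f c‖ := norm_pos_iff.2 (h0 c (mem_ball_self hR))
  have hB : ∀ z ∈ ball c R, ‖L z‖ ≤ 2 * Real.log M * ‖z - c‖ / (R - ‖z - c‖) := by
    intro z hz
    have hm : ∀ x ∈ ball (0:ℂ) R, x + c ∈ ball c R := by
      intro x hx; simpa [mem_ball, dist_eq_norm] using hx
    have := borelCaratheodory_zero (f := fun x => L (x + c)) (M := Real.log M) (R := R)
      (z := z - c) hlM ?_ ?_ hR ?_ (by simpa using hLc)
    · simpa using this
    · intro x hx
      have h1 := (hL (x + c) (hm x hx)).differentiableAt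
      exact (h1.comp x (by fun_prop : DifferentiableAt ℂ (fun x => x + c) x)).differentiableWithinAt
    · intro x hx
      have h1 := hb _ (hm x hx)
      rw [hfL _ (hm x hx), norm_mul, norm_exp, mul_comm] at h1
      have h2 := le_of_mul_le_mul_right h1 hfc
      show (L (x + c)).re ≤ Real.log M
      rwa [Real.le_log_iff_exp_le (by linarith)]
    · simpa [mem_ball, dist_eq_norm] using hz
  constructor
  · intro z hz
    have hzb : z ∈ ball c R := by rw [mem_ball, dist_eq_norm]; linarith
    rw [hfL z hzb, norm_mul, norm_exp]
    gcongr
    have h1 := hB z hzb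
    have h2 : 2 * Real.log M * ‖z - c‖ / (R - ‖z - c‖) ≤ 2 * Real.log M * R / (R - r) := by
      gcongr
      linarith
    have h3 := abs_le.1 (abs_re_le_norm (L z))
    linarith [h3.1]
  · intro z hz
    have hzb : z ∈ ball c R := by rw [mem_ball, dist_eq_norm]; linarith
    set ρ := (R - r) / 2 with hρ
    have hρ0 : 0 < ρ := by rw [hρ]; linarith
    have hsub : ∀ x ∈ closedBall z ρ, ‖x - c‖ ≤ (R + r) / 2 := by
      intro x hx
      rw [mem_closedBall, dist_eq_norm] at hx
      calc ‖x - c‖ = ‖(x - z) + (z - c)‖ := by ring_nf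
        _ ≤ ‖x - z‖ + ‖z - c‖ := norm_add_le _ _
        _ ≤ _ := by rw [hρ] at hx; linarith
    have hsub' : ∀ x ∈ closedBall z ρ, x ∈ ball c R := by
      intro x hx; rw [mem_ball, dist_eq_norm]; have := hsub x hx; linarith
    rw [← (hL z hzb).deriv]
    have hdc : DiffContOnCl ℂ L (ball z ρ) := by
      refine DifferentiableOn.diffContOnCl (fun x hx => ?_)
      rw [closure_ball z hρ0.ne'] at hx
      exact (hL x (hsub' x hx)).differentiableAt.differentiableWithinAt
    have := norm_deriv_le_of_forall_mem_sphere_norm_le (C := 4 * Real.log M * R / (R - r)) hρ0 hdc ?_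
    · refine this.trans (le_of_eq ?_)
      rw [hρ]
      have : R - r ≠ 0 := by linarith
      field_simp
      ring
    · intro x hx
      have hx' := sphere_subset_closedBall hx
      refine (hB x (hsub' x hx')).trans ?_
      have h5 := hsub x hx'
      have : 2 * Real.log M * ‖x - c‖ / (R - ‖x - c‖) ≤ 2 * Real.log M * R / ((R - r) / 2) := by
        gcongr
        · linarith
        · linarith
      refine this.trans (le_of_eq ?_)
      have : R - r ≠ 0 := by linarith
      field_simp
      ring

/-- contour shift -/
lemma shift {F : ℂ → ℂ} {a b C : ℝ} (hab : a ≤ b)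
    (hF : ∀ z : ℂ, a ≤ z.re → z.re ≤ b → DifferentiableAt ℂ F z)
    (hC : ∀ z : ℂ, a ≤ z.re → z.re ≤ b → ‖F z‖ ≤ C * (1 + z.im ^ 2) ^ (-(3/4) : ℝ)) :
    (∫ τ : ℝ, F (a + τ * I)) = ∫ τ : ℝ, F (b + τ * I) := by
  have hdec : Integrable (fun x : ℝ => C * (1 + x ^ 2) ^ (-(3/4) : ℝ)) := by
    have := integrable_rpow_neg_one_add_norm_sq (E := ℝ) (μ := volume) (r := 3/2) (by simp; norm_num)
    refine (this.congr (Eventually.of_forall fun x => ?_)).const_mul C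
    simp; norm_num
  have hint : ∀ σ : ℝ, a ≤ σ → σ ≤ b → Integrable (fun τ : ℝ => F (σ + τ * I)) := by
    intro σ h1 h2
    refine hdec.mono' ?_ (Eventually.of_forall fun τ => ?_)
    · refine Continuous.aestronglyMeasurable ?_
      rw [continuous_iff_continuousAt]
      intro τ
      have h3 : ContinuousAt F (σ + τ * I) := (hF _ (by simpa using h1) (by simpa using h2)).continuousAt
      exact ContinuousAt.comp (f := fun τ : ℝ => (σ + τ * I : ℂ)) h3 (by fun_prop)
    · simpa using hC (σ + τ * I) (by simpa using h1) (by simpa using h2)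
  have hlimA := intervalIntegral_tendsto_integral (hint a le_rfl hab) tendsto_neg_atTop_atBot tendsto_id
  have hlimB := intervalIntegral_tendsto_integral (hint b hab le_rfl) tendsto_neg_atTop_atBot tendsto_id
  have hdiff := hlimB.sub hlimA
  have hbound : ∀ T : ℝ, ‖(∫ y : ℝ in (-T)..T, F (b + y * I)) - ∫ y : ℝ in (-T)..T, F (a + y * I)‖
      ≤ 2 * (C * (1 + T ^ 2) ^ (-(3/4) : ℝ) * (b - a)) := by
    intro T
    have h := integral_boundary_rect_eq_zero_of_differentiableOn F (⟨a, -T⟩ : ℂ) (⟨b, T⟩ : ℂ) ?_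
    · simp only at h
      have e1 : ∀ S : ℝ, S ^ 2 = T ^ 2 → ‖∫ x : ℝ in a..b, F (x + S * I)‖
          ≤ C * (1 + T ^ 2) ^ (-(3/4) : ℝ) * (b - a) := by
        intro S hS
        have := intervalIntegral.norm_integral_le_of_norm_le_const (a := a) (b := b)
          (f := fun x : ℝ => F (x + S * I)) (C := C * (1 + T ^ 2) ^ (-(3/4) : ℝ)) ?_
        · rwa [abs_of_nonneg (by linarith)] at this
        · intro x hx
          rw [uIoc_of_le hab] at hx
          have := hC (x + S * I) (by simpa using hx.1.le) (by simpa using hx.2)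
          simpa [hS] using this
      have e2 := e1 T rfl
      have e3 := e1 (-T) (by ring)
      have e4 : I * ((∫ y : ℝ in (-T)..T, F (b + y * I)) - ∫ y : ℝ in (-T)..T, F (a + y * I))
        = (∫ x : ℝ in a..b, F (x + T * I)) - (∫ x : ℝ in a..b, F (x + (-T : ℝ) * I)) := by
        simp only [smul_eq_mul] at h
        linear_combination h
      calc _ = ‖I * ((∫ y : ℝ in (-T)..T, F (b + y * I)) - ∫ y : ℝ in (-T)..T, F (a + y * I))‖ := by
            simp
        _ ≤ _ := by rw [e4]; exact (norm_sub_le _ _).trans (by linarith)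
    · intro z hz
      rw [mem_reProdIm] at hz
      simp only [uIcc_of_le hab] at hz
      exact (hF z hz.1.1 hz.1.2).differentiableWithinAt
  have hz : Tendsto (fun T : ℝ => 2 * (C * (1 + T ^ 2) ^ (-(3/4) : ℝ) * (b - a))) atTop (𝓝 0) := by
    have h1 : Tendsto (fun T : ℝ => 1 + T ^ 2) atTop atTop :=
      tendsto_atTop_add_const_left _ _ (tendsto_pow_atTop (by norm_num))
    have h2 := (tendsto_rpow_neg_atTop (by norm_num : (0:ℝ) < 3/4)).comp h1
    have := ((h2.const_mul C).mul_const (b - a)).const_mul 2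
    simpa using this
  have h0 := squeeze_zero_norm hbound hz
  have := tendsto_nhds_unique hdiff h0
  exact (sub_eq_zero.1 this).symm

end SV

end

section

open Complex Metric Set Filter Topology MeasureTheory

namespace SV

noncomputable def phi (t : ℝ) : ℂ := (Ioi (1:ℝ)).indicator (fun t => ((Int.fract t : ℝ) : ℂ)) t

lemma norm_phi_le (t : ℝ) : ‖phi t‖ ≤ 1 := by
  unfold phi
  by_cases h : t ∈ Ioi (1:ℝ)
  · rw [indicator_of_mem h, norm_real, Real.norm_eq_abs, abs_of_nonneg (Int.fract_nonneg _)]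
    exact (Int.fract_lt_one _).le
  · rw [indicator_of_notMem h]; simp

lemma measurable_phi : Measurable phi := by
  unfold phi
  exact (measurable_ofReal.comp measurable_fract).indicator measurableSet_Ioi

lemma phi_diff {s : ℂ} (hs : s.re < 0) : DifferentiableAt ℂ (mellin phi) s := by
  refine mellin_differentiableAt_of_isBigO_rpow (a := 0) (b := s.re - 1) ?_ ?_ hs ?_ (by linarith)
  · refine LocallyIntegrable.locallyIntegrableOn ?_ _
    refine (locallyIntegrable_const (1:ℝ)).mono measurable_phi.aestronglyMeasurable
      (Eventually.of_forall fun x => ?_)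
    simpa using norm_phi_le x
  · refine Asymptotics.IsBigO.of_bound 1 (Eventually.of_forall fun x => ?_)
    simpa using norm_phi_le x
  · have : ∀ᶠ x in 𝓝[>] (0:ℝ), phi x = 0 := by
      filter_upwards [mem_nhdsWithin_of_mem_nhds (Iio_mem_nhds (zero_lt_one))] with x hx
      unfold phi
      exact indicator_of_notMem (by simpa using (show x < 1 from hx).le) _
    exact (Asymptotics.isBigO_zero _ _).congr' (by filter_upwards [this] with x hx; rw [hx]) (by rfl)

lemma mellin_phi (s : ℂ) :
    mellin phi (-s) = ∫ t in Ioi (1:ℝ), ((Int.fract t : ℝ) : ℂ) * (t : ℂ) ^ (-(s + 1)) := by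
  unfold mellin phi
  have : ∀ t : ℝ, (t : ℂ) ^ (-s - 1) • (Ioi (1:ℝ)).indicator (fun t => ((Int.fract t : ℝ) : ℂ)) t
     = (Ioi (1:ℝ)).indicator (fun t : ℝ => ((Int.fract t : ℝ) : ℂ) * (t : ℂ) ^ (-(s + 1))) t := by
    intro t
    by_cases h : t ∈ Ioi (1:ℝ)
    · rw [indicator_of_mem h, indicator_of_mem h, smul_eq_mul, mul_comm]
      congr 2; ring
    · rw [indicator_of_notMem h, indicator_of_notMem h, smul_zero]
  simp_rw [this]
  rw [setIntegral_indicator measurableSet_Ioi]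
  congr 2
  ext x; simp
  try (intro h; linarith)

lemma norm_mellin_phi {s : ℂ} (hs : 0 < s.re) : ‖mellin phi (-s)‖ ≤ 1 / s.re := by
  rw [mellin_phi]
  have h1 : ∫ t in Ioi (1:ℝ), t ^ (-(s.re + 1)) = 1 / s.re := by
    rw [integral_Ioi_rpow_of_lt (by linarith) one_pos]
    simp
  rw [← h1]
  refine norm_integral_le_of_norm_le (integrableOn_Ioi_rpow_of_lt (by linarith) one_pos) ?_
  refine (ae_restrict_iff' measurableSet_Ioi).2 (Eventually.of_forall fun t ht => ?_)
  have ht : (1:ℝ) < t := ht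
  rw [norm_mul, norm_cpow_eq_rpow_re_of_pos (by linarith), norm_real, Real.norm_eq_abs,
    abs_of_nonneg (Int.fract_nonneg _)]
  have := (Int.fract_lt_one t).le
  have h2 : (-(s+1)).re = -(s.re+1) := by simp
  rw [h2]
  have : 0 ≤ t ^ (-(s.re+1)) := Real.rpow_nonneg (by linarith) _
  nlinarith

lemma zeta1_eq_of_one_lt {s : ℂ} (hs : 1 < s.re) :
    riemannZeta₁ s = s - s * (s - 1) * mellin phi (-s) := by
  have hs1 : s ≠ 1 := by rintro rfl; simp at hs
  have h1 : riemannZeta s = s * ∫ t in Ioi (1:ℝ), (∑ k ∈ Finset.Icc 1 ⌊t⌋₊, (1 : ℕ → ℂ) k) * (t:ℂ) ^ (-(s + 1)) := by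
    rw [← LSeries_one_eq_riemannZeta hs]
    refine LSeries_eq_mul_integral _ zero_le_one (by simpa using hs) (LSeriesSummable_one_iff.2 hs) ?_
    refine Asymptotics.IsBigO.of_bound 1 (Eventually.of_forall fun x => ?_)
    simp
  have h2 : ∫ t in Ioi (1:ℝ), (∑ k ∈ Finset.Icc 1 ⌊t⌋₊, (1 : ℕ → ℂ) k) * (t:ℂ) ^ (-(s + 1))
     = (∫ t in Ioi (1:ℝ), (t:ℂ) ^ (-s)) - mellin phi (-s) := by
    rw [mellin_phi, ← integral_sub]
    · refine setIntegral_congr_fun measurableSet_Ioi (fun t ht => ?_)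
      have ht : (1:ℝ) < t := ht
      have h3 : (t:ℂ) ^ (-s) = t * (t:ℂ) ^ (-(s + 1)) := by
        have : (t:ℂ) ≠ 0 := by exact_mod_cast (by linarith : t ≠ 0)
        rw [show -s = 1 + -(s+1) by ring, cpow_add _ _ this, cpow_one]
      have h4 : (∑ k ∈ Finset.Icc 1 ⌊t⌋₊, (1 : ℕ → ℂ) k) = ((t - Int.fract t : ℝ) : ℂ) := by
        rw [Int.self_sub_fract]
        simp
        have h7 := natCast_floor_eq_intCast_floor (R := ℝ) (a := t) (by linarith)
        exact_mod_cast h7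
      show (∑ k ∈ Finset.Icc 1 ⌊t⌋₊, (1 : ℕ → ℂ) k) * (t:ℂ) ^ (-(s + 1)) = _
      rw [h3, h4]; push_cast; ring
    · exact integrableOn_Ioi_cpow_of_lt (by simpa using hs) one_pos
    · have := integrableOn_Ioi_rpow_of_lt (a := -(s.re+1)) (by linarith) one_pos
      refine Integrable.mono' this ?_ ?_
      · refine AEStronglyMeasurable.mul (measurable_ofReal.comp measurable_fract).aestronglyMeasurable ?_
        refine ContinuousOn.aestronglyMeasurable (fun t ht => ?_) measurableSet_Ioi
        have ht : (1:ℝ) < t := ht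
        exact (continuousAt_ofReal_cpow_const t _ (Or.inr (by linarith))).continuousWithinAt
      · refine (ae_restrict_iff' measurableSet_Ioi).2 (Eventually.of_forall fun t ht => ?_)
        have ht : (1:ℝ) < t := ht
        rw [norm_mul, norm_cpow_eq_rpow_re_of_pos (by linarith), norm_real, Real.norm_eq_abs,
          abs_of_nonneg (Int.fract_nonneg _)]
        have := (Int.fract_lt_one t).le
        have h2 : (-(s+1)).re = -(s.re+1) := by simp
        rw [h2]
        have : 0 ≤ t ^ (-(s.re+1)) := Real.rpow_nonneg (by linarith) _
        nlinarith
  rw [h2, integral_Ioi_cpow_of_lt (by simpa using hs) one_pos] at h1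
  have h5 : riemannZeta₁ s = (s - 1) * riemannZeta s := by
    rw [riemannZeta_eq_inv_sub_mul hs1, mul_inv_cancel_left₀ (sub_ne_zero.2 hs1)]
  rw [h5, h1]
  have h6 : -s + 1 ≠ 0 := by intro h; apply hs1; linear_combination -h
  simp
  field_simp
  ring

lemma zeta1_eq {s : ℂ} (hs : 0 < s.re) :
    riemannZeta₁ s = s - s * (s - 1) * mellin phi (-s) := by
  have hU : IsOpen {z : ℂ | 0 < z.re} := isOpen_lt continuous_const continuous_re
  have hc : IsPreconnected {z : ℂ | 0 < z.re} := (convex_halfSpace_re_gt 0).isPreconnected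
  have hA : AnalyticOnNhd ℂ riemannZeta₁ {z : ℂ | 0 < z.re} :=
    differentiable_riemannZeta₁.differentiableOn.analyticOnNhd hU
  have hB : AnalyticOnNhd ℂ (fun s => s - s * (s - 1) * mellin phi (-s)) {z : ℂ | 0 < z.re} := by
    refine DifferentiableOn.analyticOnNhd (fun z hz => ?_) hU
    have hz : 0 < z.re := hz
    have h1 : DifferentiableAt ℂ (mellin phi) (-z) := phi_diff (by simpa using hz)
    have h2 : DifferentiableAt ℂ (fun z => mellin phi (-z)) z :=
      h1.comp z (by fun_prop : DifferentiableAt ℂ (fun z : ℂ => -z) z)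
    exact (DifferentiableAt.sub (by fun_prop) (DifferentiableAt.mul (by fun_prop) h2)).differentiableWithinAt
  refine hA.eqOn_of_preconnected_of_eventuallyEq hB hc (z₀ := 2) (by simp) ?_ hs
  have : {z : ℂ | 1 < z.re} ∈ 𝓝 (2:ℂ) := (isOpen_lt continuous_const continuous_re).mem_nhds (by simp)
  filter_upwards [this] with z hz
  exact zeta1_eq_of_one_lt hz

lemma norm_zeta1_le {s : ℂ} (hs : 1/8 ≤ s.re) : ‖riemannZeta₁ s‖ ≤ 9 * (1 + ‖s‖) ^ 2 := by
  rw [zeta1_eq (by linarith)]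
  have h1 : ‖mellin phi (-s)‖ ≤ 8 := by
    refine (norm_mellin_phi (by linarith)).trans ?_
    rw [div_le_iff₀ (by linarith)]; linarith
  have h2 : ‖s - 1‖ ≤ ‖s‖ + 1 := by simpa using norm_sub_le s 1
  have h0 := norm_nonneg s
  calc ‖s - s * (s - 1) * mellin phi (-s)‖ ≤ ‖s‖ + ‖s‖ * ‖s - 1‖ * ‖mellin phi (-s)‖ := by
        refine (norm_sub_le _ _).trans ?_; rw [norm_mul, norm_mul]
    _ ≤ ‖s‖ + ‖s‖ * (‖s‖ + 1) * 8 := by gcongr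
    _ ≤ _ := by nlinarith

/-! Gamma ratio -/

noncomputable def betaK (η : ℝ) : ℝ :=
  ∫ x : ℝ in (0:ℝ)..1, ‖(x : ℂ) ^ ((1/8 : ℝ) - 1 : ℂ) * (1 - (x : ℂ)) ^ ((η : ℂ) - 1)‖

lemma norm_beta_le {z w : ℂ} {η : ℝ} (hη : 0 < η) (hz : 1/8 ≤ z.re) (hw : η ≤ w.re) :
    ‖betaIntegral z w‖ ≤ betaK η := by
  unfold betaIntegral betaK
  have hconv := betaIntegral_convergent (u := ((1/8:ℝ):ℂ)) (v := (η:ℂ)) (by simp) (by simpa using hη)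
  refine intervalIntegral.norm_integral_le_of_norm_le zero_le_one ?_ hconv.norm
  have h1 : ∀ᵐ x : ℝ, x ≠ 1 := by simp [ae_iff]
  filter_upwards [h1] with x hx1 hx
  have hx0 : 0 < x := hx.1
  have hx2 : x < 1 := lt_of_le_of_ne hx.2 hx1
  have e : (1 - (x:ℂ)) = ((1 - x : ℝ) : ℂ) := by push_cast; ring
  rw [e, norm_mul, norm_mul, norm_cpow_eq_rpow_re_of_pos hx0, norm_cpow_eq_rpow_re_of_pos hx0,
    norm_cpow_eq_rpow_re_of_pos (by linarith), norm_cpow_eq_rpow_re_of_pos (by linarith)]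
  gcongr ?_ * ?_
  · apply Real.rpow_le_rpow_of_exponent_ge hx0 hx2.le
    simp at hz ⊢; linarith
  · apply Real.rpow_le_rpow_of_exponent_ge (by linarith) (by linarith)
    simpa using hw

lemma betaK_nonneg (η : ℝ) : 0 ≤ betaK η :=
  intervalIntegral.integral_nonneg zero_le_one (fun _ _ => norm_nonneg _)

lemma gamma_ratio {z w : ℂ} {η : ℝ} (hη : 0 < η) (hz : 1/8 ≤ z.re) (hw : η ≤ w.re) :
    ‖Gamma z / Gamma (z + w)‖ ≤ betaK η * ‖(Gamma w)⁻¹‖ := by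
  have h := Gamma_mul_Gamma_eq_betaIntegral (s := z) (t := w) (by linarith) (by linarith)
  have h1 : Gamma w ≠ 0 := Gamma_ne_zero_of_re_pos (by linarith)
  have h2 : Gamma (z + w) ≠ 0 := Gamma_ne_zero_of_re_pos (by simp; linarith)
  have : Gamma z / Gamma (z + w) = betaIntegral z w * (Gamma w)⁻¹ := by
    field_simp; rw [h]
  rw [this, norm_mul]
  gcongr
  exact norm_beta_le hη hz hw

lemma digamma_bound : ∃ C : ℝ, 0 < C ∧ ∀ z : ℂ, 1/8 ≤ z.re →
    ‖digamma z‖ ≤ C * Real.log (2 + ‖z‖) := by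
  obtain ⟨B, hB⟩ := (isCompact_closedBall (2:ℂ) 1).exists_bound_of_continuousOn
    (f := fun w => (Gamma w)⁻¹) (differentiable_one_div_Gamma.continuous.continuousOn)
  have hB0 : 0 ≤ B := (norm_nonneg _).trans (hB 2 (by simp))
  set C0 := betaK 1 * B + 2 with hC0
  have hC02 : 2 ≤ C0 := by have := mul_nonneg (betaK_nonneg 1) hB0; linarith
  have hl2 : 0 < Real.log 2 := Real.log_pos (by norm_num)
  refine ⟨8 * (Real.log C0 / Real.log 2 + 2) + 16 / Real.log 2, ?_, ?_⟩
  · have : 0 < Real.log C0 := Real.log_pos (by linarith)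
    positivity
  intro z hz
  have hzn : 0 ≤ ‖z‖ := norm_nonneg z
  have hre : ∀ w ∈ ball (2:ℂ) 1, 1 ≤ w.re := by
    intro w hw
    rw [mem_ball, dist_eq_norm] at hw
    have := (abs_le.1 ((abs_re_le_norm (w - 2)).trans hw.le)).1
    simp at this; linarith
  have hz0 : ∀ m : ℕ, z ≠ -m := by
    intro m h; rw [h] at hz; simp at hz; have : (0:ℝ) ≤ m := m.cast_nonneg; linarith
  have hz1 : ∀ m : ℕ, z + 1 ≠ -m := by
    intro m h
    have h' := congrArg re h
    simp at h'; have : (0:ℝ) ≤ m := m.cast_nonneg; linarith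
  have hzne : z ≠ 0 := by simpa using hz0 0
  have hz1ne : z + 1 ≠ 0 := by simpa using hz1 0
  have hGz : Gamma z ≠ 0 := Gamma_ne_zero hz0
  have hG2 : Gamma z / Gamma (z + 2) = 1 / (z * (z + 1)) := by
    rw [show z + 2 = (z + 1) + 1 by ring, Gamma_add_one _ hz1ne, Gamma_add_one _ hzne]
    field_simp
  have hd : ∀ w ∈ ball (2:ℂ) 1, HasDerivAt (fun w => Gamma z / Gamma (z + w))
      (-(digamma (z + w)) * (Gamma z / Gamma (z + w))) w := by
    intro w hw
    have hzw : ∀ m : ℕ, z + w ≠ -m := by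
      intro m h
      have h' := congrArg re h
      have := hre w hw
      simp at h'; have : (0:ℝ) ≤ m := m.cast_nonneg; linarith
    have hne : Gamma (z + w) ≠ 0 := Gamma_ne_zero hzw
    have h1 : HasDerivAt (fun w => Gamma (z + w)) (deriv Gamma (z + w)) w :=
      (differentiableAt_Gamma _ hzw).hasDerivAt.comp_const_add z w
    have h2 := (h1.inv hne).const_mul (Gamma z)
    refine HasDerivAt.congr_deriv (f := fun w => Gamma z / Gamma (z + w)) (f' := _) h2 ?_
    rw [digamma_def, logDeriv_apply]
    field_simp
  have hM : (1:ℝ) < C0 * (2 + ‖z‖) ^ 2 := by nlinarith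
  have key := (bc_log (f := fun w => Gamma z / Gamma (z + w)) (c := 2) (R := 1) (r := 0)
    (M := C0 * (2 + ‖z‖) ^ 2) le_rfl one_pos hM
    (fun w hw => (hd w hw).differentiableAt.differentiableWithinAt) ?_ ?_).2 2 (by simp)
  · have e1 : digamma (z + 2) = digamma z + z⁻¹ + (z+1)⁻¹ := by
      rw [show z + 2 = (z + 1) + 1 by ring, digamma_apply_add_one _ hz1, digamma_apply_add_one _ hz0]
    have h20 : Gamma z / Gamma (z + 2) ≠ 0 := by
      rw [hG2]; exact div_ne_zero one_ne_zero (mul_ne_zero hzne hz1ne)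
    rw [(hd 2 (by simp)).deriv] at key
    rw [mul_div_assoc, div_self h20, mul_one, norm_neg] at key
    have e2 : digamma z = digamma (z + 2) - z⁻¹ - (z+1)⁻¹ := by rw [e1]; ring
    have e3 : ‖z⁻¹‖ ≤ 8 := by
      rw [norm_inv]
      have : 1/8 ≤ ‖z‖ := hz.trans (re_le_norm z)
      rw [inv_le_comm₀ (by linarith) (by norm_num)]; linarith
    have e4 : ‖(z+1)⁻¹‖ ≤ 8 := by
      rw [norm_inv]
      have : 1/8 ≤ ‖z+1‖ := le_trans (by simp; linarith) (re_le_norm (z+1))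
      rw [inv_le_comm₀ (by linarith) (by norm_num)]; linarith
    have e5 : Real.log 2 ≤ Real.log (2 + ‖z‖) := Real.log_le_log (by norm_num) (by linarith)
    have e6 : Real.log (C0 * (2 + ‖z‖) ^ 2) = Real.log C0 + 2 * Real.log (2 + ‖z‖) := by
      rw [Real.log_mul (by linarith) (by positivity), Real.log_pow]; norm_num
    have e7 : 0 < Real.log C0 := Real.log_pos (by linarith)
    rw [e6] at key
    have e8 : ‖digamma z‖ ≤ 8 * (Real.log C0 + 2 * Real.log (2 + ‖z‖)) + 16 := by
      rw [e2]
      refine (norm_sub_le _ _).trans ?_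
      have := norm_sub_le (digamma (z+2)) z⁻¹
      norm_num at key
      linarith
    have e9 : Real.log C0 ≤ Real.log C0 / Real.log 2 * Real.log (2 + ‖z‖) := by
      rw [div_mul_eq_mul_div, le_div_iff₀ hl2]; gcongr
    have e10 : 16 ≤ 16 / Real.log 2 * Real.log (2 + ‖z‖) := by
      rw [div_mul_eq_mul_div, le_div_iff₀ hl2]; gcongr
    nlinarith
  · intro w hw
    refine div_ne_zero hGz (Gamma_ne_zero_of_re_pos ?_)
    have := hre w hw
    simp; linarith
  · intro w hw
    have h1 := gamma_ratio (z := z) (w := w) one_pos hz (hre w hw)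
    have h2 := hB w (ball_subset_closedBall hw)
    simp only [hG2]
    have h3 : betaK 1 * ‖(Gamma w)⁻¹‖ ≤ C0 := by
      have := mul_le_mul_of_nonneg_left h2 (betaK_nonneg 1)
      linarith
    have h4 : ‖z * (z+1)‖ ≤ (2 + ‖z‖)^2 := by
      rw [norm_mul]
      have : ‖z + 1‖ ≤ ‖z‖ + 1 := by simpa using norm_add_le z 1
      nlinarith [norm_nonneg (z+1)]
    have h5 : 0 < ‖z * (z+1)‖ := norm_pos_iff.2 (mul_ne_zero hzne hz1ne)
    rw [norm_div (1:ℂ), norm_one, mul_one_div]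
    refine (h1.trans h3).trans ?_
    rw [le_div_iff₀ h5]
    gcongr
    

end SV

end

section

open Complex Metric Set Filter Topology MeasureTheory ComplexConjugate

namespace SV

noncomputable def xi (s : ℂ) : ℂ := s * (s - 1) * completedRiemannZeta₀ s + 1

lemma xi_diff : Differentiable ℂ xi := by
  unfold xi
  have := differentiable_completedZeta₀
  fun_prop

lemma xi_one_sub (s : ℂ) : xi (1 - s) = xi s := by
  unfold xi; rw [completedRiemannZeta₀_one_sub]; ring

lemma xi_eq {s : ℂ} (hs : 0 < s.re) : xi s = s * Gammaℝ s * riemannZeta₁ s := by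
  have hs0 : s ≠ 0 := by rintro rfl; simp at hs
  by_cases h1 : s = 1
  · subst h1; simp [xi, Gammaℝ_one]
  have h2 : riemannZeta₁ s = (s - 1) * riemannZeta s := by
    rw [riemannZeta_eq_inv_sub_mul h1, mul_inv_cancel_left₀ (sub_ne_zero.2 h1)]
  have hG : Gammaℝ s ≠ 0 := Gammaℝ_ne_zero_of_re_pos hs
  rw [h2, riemannZeta_def_of_ne_zero hs0, completedRiemannZeta_eq, xi]
  have h3 : (1:ℂ) - s ≠ 0 := sub_ne_zero.2 (Ne.symm h1)
  have h4 : (1:ℂ) / (1 - s) = - (1 / (s - 1)) := by rw [← neg_sub, div_neg]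
  have h5 : s - 1 ≠ 0 := sub_ne_zero.2 h1
  rw [h4]
  field_simp
  ring

lemma zeta1_conj (s : ℂ) : riemannZeta₁ (conj s) = conj (riemannZeta₁ s) := by
  by_cases h1 : s = 1
  · subst h1; simp
  have h1' : conj s ≠ 1 := by
    intro h; apply h1; rw [← conj_conj s, h]; simp
  have h2 : ∀ s : ℂ, s ≠ 1 → riemannZeta₁ s = (s - 1) * riemannZeta s := fun s h1 => by
    rw [riemannZeta_eq_inv_sub_mul h1, mul_inv_cancel_left₀ (sub_ne_zero.2 h1)]
  rw [h2 _ h1, h2 _ h1', riemannZeta_conj]; simp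

lemma Gammaℝ_conj (s : ℂ) : Gammaℝ (conj s) = conj (Gammaℝ s) := by
  rw [Gammaℝ_def, Gammaℝ_def, map_mul, ← Gamma_conj]
  have : conj ((Real.pi : ℂ) ^ (-s / 2)) = (Real.pi : ℂ) ^ (-(conj s) / 2) := by
    have hpi : (Real.pi : ℂ) ≠ 0 := by exact_mod_cast Real.pi_pos.ne'
    rw [cpow_def_of_ne_zero hpi, cpow_def_of_ne_zero hpi, ← exp_conj, ← ofReal_log Real.pi_pos.le]
    simp [map_div₀, show conj (2:ℂ) = 2 from Complex.conj_ofNat 2]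
  rw [this]
  simp [map_div₀, show conj (2:ℂ) = 2 from Complex.conj_ofNat 2]

lemma xi_conj {s : ℂ} (hs : 0 < s.re) : xi (conj s) = conj (xi s) := by
  rw [xi_eq hs, xi_eq (by simpa using hs), Gammaℝ_conj, zeta1_conj]; simp

lemma zeta1_ne_zero (hRH : RiemannHypothesis) {s : ℂ} (hs : 1/2 < s.re) : riemannZeta₁ s ≠ 0 := by
  intro h
  have h1 : s ≠ 1 := by rintro rfl; simp at h
  have h2 : riemannZeta s = 0 := by rw [riemannZeta_eq_inv_sub_mul h1, h, mul_zero]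
  have := hRH s h2 ?_ h1
  · linarith
  · rintro ⟨n, rfl⟩
    simp at hs
    have : (0:ℝ) ≤ n := n.cast_nonneg
    linarith

lemma xi_ne_zero (hRH : RiemannHypothesis) {s : ℂ} (hs : 1/2 < s.re) : xi s ≠ 0 := by
  rw [xi_eq (by linarith)]
  refine mul_ne_zero (mul_ne_zero ?_ (Gammaℝ_ne_zero_of_re_pos (by linarith))) (zeta1_ne_zero hRH hs)
  rintro rfl; simp at hs; linarith

lemma zeta_sub_one {s : ℂ} (hs : 2 ≤ s.re) : ‖riemannZeta s - 1‖ ≤ 3/4 := by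
  have hsum2 : Summable (fun n : ℕ => 1 / ((n:ℝ) + 1) ^ 2) := by
    have := (summable_nat_add_iff 1).2 (Real.summable_one_div_nat_pow (p := 2).2 (by norm_num))
    simpa using this
  have hterm : ∀ n : ℕ, ‖1 / ((n:ℂ) + 1) ^ s‖ ≤ 1 / ((n:ℝ) + 1) ^ 2 := by
    intro n
    rw [norm_div, norm_one, show ((n:ℂ) + 1) = (((n:ℝ) + 1 : ℝ) : ℂ) by push_cast; ring,
      norm_cpow_eq_rpow_re_of_pos (by positivity), ← Real.rpow_natCast]
    gcongr
    · have : (0:ℝ) ≤ n := n.cast_nonneg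
      linarith
    · exact_mod_cast hs
  have hsum : Summable (fun n : ℕ => 1 / ((n:ℂ) + 1) ^ s) := Summable.of_norm_bounded hsum2 hterm
  rw [zeta_eq_tsum_one_div_nat_add_one_cpow (by linarith), hsum.tsum_eq_zero_add]
  simp only [Nat.cast_zero, zero_add, one_cpow, div_one, add_sub_cancel_left]
  have h3 : HasSum (fun n : ℕ => 1 / ((n:ℝ) + 1) ^ 2) (Real.pi ^ 2 / 6) := by
    have := (hasSum_nat_add_iff' 1).2 hasSum_zeta_two
    simpa using this
  have h4 : HasSum (fun n : ℕ => 1 / (((n + 1 : ℕ):ℝ) + 1) ^ 2) (Real.pi ^ 2 / 6 - 1) := by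
    have := (hasSum_nat_add_iff' 1).2 h3
    simpa using this
  refine (tsum_of_norm_bounded h4 (fun n => hterm (n+1))).trans ?_
  nlinarith [Real.pi_lt_d2, Real.pi_gt_three]

lemma zeta_lower {s : ℂ} (hs : 2 ≤ s.re) : 1/4 ≤ ‖riemannZeta s‖ := by
  have h1 := zeta_sub_one hs
  have h2 := norm_sub_norm_le (1:ℂ) (1 - riemannZeta s)
  rw [norm_sub_rev] at h1
  simp only [sub_sub_cancel, norm_one] at h2
  linarith

lemma zeta_upper {s : ℂ} (hs : 2 ≤ s.re) : ‖riemannZeta s‖ ≤ 2 := by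
  have h1 := zeta_sub_one hs
  have h2 := norm_le_norm_sub_add (riemannZeta s) 1
  simp only [norm_one] at h2
  linarith

lemma zeta1_eq_mul {s : ℂ} (h1 : s ≠ 1) : riemannZeta₁ s = (s - 1) * riemannZeta s := by
  rw [riemannZeta_eq_inv_sub_mul h1, mul_inv_cancel_left₀ (sub_ne_zero.2 h1)]

lemma zeta1_lower {s : ℂ} (hs : 2 ≤ s.re) : 1/4 ≤ ‖riemannZeta₁ s‖ := by
  have hne : s ≠ 1 := by rintro rfl; norm_num at hs
  rw [zeta1_eq_mul hne, norm_mul]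
  have h1 : 1 ≤ ‖s - 1‖ := le_trans (by simp; linarith) (re_le_norm (s-1))
  nlinarith [zeta_lower hs]

/-- bounds near the critical line -/
lemma zeta1_strip (hRH : RiemannHypothesis) {η : ℝ} (hη : 0 < η) (hη' : η < 1) {s : ℂ}
    (hs : 1/2 + η ≤ s.re) (hs2 : s.re ≤ 2) :
    1/4 * Real.exp (-(6/η * Real.log (144 * (2 + ‖s‖)^2))) ≤ ‖riemannZeta₁ s‖ ∧
    ‖deriv riemannZeta₁ s / riemannZeta₁ s‖ ≤ 48/η^2 * Real.log (144 * (2 + ‖s‖)^2) := by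
  have hsn := norm_nonneg s
  set c : ℂ := 2 + s.im * I with hc
  have hcre : c.re = 2 := by simp [hc]
  have hsc : ‖s - c‖ ≤ 3/2 - η := by
    have : s - c = ((s.re - 2 : ℝ) : ℂ) := by
      apply Complex.ext <;> simp [hc]
    rw [this, norm_real, Real.norm_eq_abs, abs_le]
    constructor <;> linarith
  have hfc := zeta1_lower hcre.ge
  have hre : ∀ z ∈ ball c (3/2 - η/2), 1/2 + η/2 < z.re := by
    intro z hz
    rw [mem_ball, dist_eq_norm] at hz
    have := (abs_le.1 ((abs_re_le_norm (z - c)).trans hz.le)).1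
    have h3 := abs_lt.1 ((abs_re_le_norm (z - c)).trans_lt hz)
    simp only [sub_re, hcre] at h3
    linarith [h3.1]
  have hM1 : 1 < 144 * (2 + ‖s‖)^2 := by nlinarith
  have hlM := Real.log_pos hM1
  obtain ⟨h1, h2⟩ := bc_log (f := riemannZeta₁) (c := c) (R := 3/2 - η/2) (r := 3/2 - η)
    (M := 144 * (2 + ‖s‖)^2) (by linarith) (by linarith) hM1
    differentiable_riemannZeta₁.differentiableOn
    (fun z hz => zeta1_ne_zero hRH (by have := hre z hz; linarith)) (by
      intro z hz
      have h3 := norm_zeta1_le (s := z) (by have := hre z hz; linarith)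
      rw [mem_ball, dist_eq_norm] at hz
      have h4 : ‖z‖ ≤ ‖s‖ + 3 := by
        have e : z = s + ((z - c) - (s - c)) := by ring
        rw [e]
        refine (norm_add_le _ _).trans ?_
        have := norm_sub_le (z - c) (s - c)
        linarith
      have h5 : 9 * (1 + ‖z‖)^2 ≤ 9 * (2 * (2 + ‖s‖))^2 := by gcongr; linarith
      have h6 : 144 * (2 + ‖s‖)^2 * (1/4) ≤ 144 * (2 + ‖s‖)^2 * ‖riemannZeta₁ c‖ := by gcongr
      nlinarith)
  refine ⟨?_, (h2 s hsc).trans ?_⟩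
  · refine le_trans ?_ (h1 s hsc)
    gcongr
    rw [show 3/2 - η/2 - (3/2 - η) = η/2 by ring, div_le_iff₀ (by linarith)]
    have : 6 / η * Real.log (144 * (2 + ‖s‖)^2) * (η/2) = 3 * Real.log (144 * (2 + ‖s‖)^2) := by
      field_simp; ring
    rw [this]; nlinarith
  · apply mul_le_mul_of_nonneg_right _ hlM.le
    rw [show 3/2 - η/2 - (3/2 - η) = η/2 by ring, div_le_div_iff₀ (by positivity) (by positivity)]
    nlinarith [sq_nonneg η, pow_pos hη 3]

lemma log_le_lin {x : ℝ} (hx : 0 ≤ x) : Real.log (144 * (2 + x)^2) ≤ 16 + 2 * x := by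
  have h1 : Real.log (144 * (2+x)^2) = 2 * Real.log (12 * (2 + x)) := by
    rw [show 144 * (2+x)^2 = (12 * (2+x))^2 by ring, Real.log_pow]; norm_num
  rw [h1, Real.log_mul (by norm_num) (by positivity)]
  have h2 := Real.log_le_sub_one_of_pos (show 0 < 2 + x by linarith)
  have h3 : Real.log 12 ≤ 3 := by
    rw [Real.log_le_iff_le_exp (by norm_num)]
    have := Real.exp_one_gt_d9
    calc (12:ℝ) ≤ 2.7182818283 ^ 3 := by norm_num
      _ ≤ (Real.exp 1)^3 := by gcongr
      _ = Real.exp 3 := by rw [← Real.exp_nat_mul]; norm_num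
  linarith

lemma zeta1_inv_exp (hRH : RiemannHypothesis) {η : ℝ} (hη : 0 < η) (hη' : η < 1) {s : ℂ}
    (hs : 1/2 + η ≤ s.re) : ‖(riemannZeta₁ s)⁻¹‖ ≤ 4 * Real.exp (6/η * (16 + 2 * ‖s‖)) := by
  rw [norm_inv]
  rcases le_total s.re 2 with h | h
  · have h1 := (zeta1_strip hRH hη hη' hs h).1
    have h2 : 1/4 * Real.exp (-(6/η * (16 + 2 * ‖s‖))) ≤ ‖riemannZeta₁ s‖ := by
      refine le_trans ?_ h1
      gcongr
      exact log_le_lin (norm_nonneg _)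
    rw [Real.exp_neg] at h2
    refine (inv_anti₀ (by positivity) h2).trans (le_of_eq ?_)
    rw [mul_inv, inv_inv]; norm_num
  · have h1 := zeta1_lower h
    have : (‖riemannZeta₁ s‖)⁻¹ ≤ 4 := by
      rw [inv_le_comm₀ (by linarith) (by norm_num)]; linarith
    refine this.trans ?_
    have : 1 ≤ Real.exp (6/η * (16 + 2 * ‖s‖)) := Real.one_le_exp (by positivity)
    linarith

lemma xi_ratio_eq {η : ℝ} (hη : 0 < η) (hη' : η < 1/4) {s : ℂ} (hs : 1/2 ≤ s.re) :
    xi (s - η) / xi (s + η) = ((s - η) / (s + η)) *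
      ((Real.pi : ℂ) ^ (η : ℂ) * (Gamma ((s - η)/2) / Gamma ((s - η)/2 + η))) *
      (riemannZeta₁ (s - η) / riemannZeta₁ (s + η)) := by
  have hpi : (Real.pi : ℂ) ≠ 0 := by exact_mod_cast Real.pi_pos.ne'
  rw [xi_eq (by simp; linarith), xi_eq (by simp; linarith), Gammaℝ_def, Gammaℝ_def]
  have e1 : (Real.pi : ℂ) ^ (-(s - η) / 2) = (Real.pi : ℂ) ^ (η : ℂ) * (Real.pi : ℂ) ^ (-(s + η) / 2) := by
    rw [← cpow_add _ _ hpi]; congr 1; ring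
  have e2 : (s - η) / 2 + η = (s + η) / 2 := by ring
  have e3 : (Real.pi : ℂ) ^ (-(s + η) / 2) ≠ 0 := by simp [cpow_eq_zero_iff, hpi]
  rw [e1, e2]
  field_simp

lemma xi_ratio_bound {η : ℝ} (hη : 0 < η) (hη' : η < 1/4) {s : ℂ} (hs : 1/2 ≤ s.re) :
    ‖xi (s - η) / xi (s + η)‖ ≤ ‖(Real.pi : ℂ) ^ (η : ℂ)‖ * (betaK η * ‖(Gamma (η:ℂ))⁻¹‖) *
      ‖riemannZeta₁ (s - η) / riemannZeta₁ (s + η)‖ := by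
  rw [xi_ratio_eq hη hη' hs, norm_mul, norm_mul, norm_mul]
  have h1 : ‖(s - η) / (s + η)‖ ≤ 1 := by
    rw [norm_div]
    refine div_le_one_of_le₀ ?_ (norm_nonneg _)
    rw [← sq_le_sq₀ (norm_nonneg _) (norm_nonneg _), Complex.sq_norm, Complex.sq_norm, normSq_apply, normSq_apply]
    simp; nlinarith
  have h2 := gamma_ratio (z := (s - η)/2) (w := η) hη (by
    rw [show (2:ℂ) = ((2:ℝ):ℂ) by norm_num, div_ofReal_re]; simp; linarith) (by simp)
  refine mul_le_mul_of_nonneg_right ?_ (norm_nonneg _)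
  have : ‖(s - η) / (s + η)‖ * (‖(Real.pi : ℂ) ^ (η : ℂ)‖ * ‖Gamma ((s - η)/2) / Gamma ((s - η)/2 + η)‖)
    ≤ 1 * (‖(Real.pi : ℂ) ^ (η : ℂ)‖ * (betaK η * ‖(Gamma (η:ℂ))⁻¹‖)) := by gcongr
  linarith

lemma xi_mono (hRH : RiemannHypothesis) {η : ℝ} (hη : 0 < η) (hη' : η < 1/4) {s : ℂ}
    (hs : 1/2 ≤ s.re) : ‖xi (s - η)‖ ≤ ‖xi (s + η)‖ := by
  set Θ : ℂ → ℂ := fun z => xi (1/2 + z - η) / xi (1/2 + z + η) with hΘ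
  have hne : ∀ z : ℂ, 0 ≤ z.re → xi (1/2 + z + η) ≠ 0 := fun z hz =>
    xi_ne_zero hRH (by simp; linarith)
  set K := ‖(Real.pi : ℂ) ^ (η : ℂ)‖ * (betaK η * ‖(Gamma (η:ℂ))⁻¹‖) with hK
  have hK0 : 0 ≤ K := by have := betaK_nonneg η; positivity
  have hre12 : ∀ z : ℂ, (1/2 + z).re = 1/2 + z.re := by intro z; simp
  have key : ‖Θ (s - 1/2)‖ ≤ 1 := by
    refine PhragmenLindelof.right_half_plane_of_bounded_on_real ?_ ?_ ?_ ?_ (by simp; linarith)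
    · refine DifferentiableOn.diffContOnCl (fun z hz => ?_)
      rw [closure_setOfPred_lt_re] at hz
      have hz : 0 ≤ z.re := hz
      refine DifferentiableAt.differentiableWithinAt ?_
      have := xi_diff
      exact DifferentiableAt.div (by fun_prop) (by fun_prop) (hne z hz)
    · refine ⟨1, by norm_num, 2 + 12/η, ?_⟩
      refine Asymptotics.IsBigO.of_bound (K * (9 * Real.exp 4 * (4 * Real.exp (6/η * 20)))) ?_
      refine eventually_inf_principal.2 (Eventually.of_forall fun z hz => ?_)
      have hz : 0 < z.re := hz
      have hzn := norm_nonneg z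
      have h1 := xi_ratio_bound hη hη' (s := 1/2 + z) (by rw [hre12]; linarith)
      rw [← hK] at h1
      refine h1.trans ?_
      rw [norm_div, div_eq_mul_inv, ← norm_inv, Real.rpow_one, Real.norm_of_nonneg (Real.exp_pos _).le]
      have n1 : ‖1/2 + z - η‖ ≤ 1 + ‖z‖ := by
        refine (norm_sub_le _ _).trans ?_
        have := norm_add_le (1/2:ℂ) z
        rw [norm_real, Real.norm_of_nonneg hη.le]
        norm_num at this ⊢; linarith
      have n2 : ‖1/2 + z + η‖ ≤ 1 + ‖z‖ := by
        refine (norm_add_le _ _).trans ?_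
        have := norm_add_le (1/2:ℂ) z
        rw [norm_real, Real.norm_of_nonneg hη.le]
        norm_num at this ⊢; linarith
      have h2 : ‖riemannZeta₁ (1/2 + z - η)‖ ≤ 9 * Real.exp 4 * Real.exp (2 * ‖z‖) := by
        refine (norm_zeta1_le (by simp; linarith)).trans ?_
        rw [mul_assoc, ← Real.exp_add]
        gcongr
        calc (1 + ‖1/2 + z - η‖)^2 ≤ (Real.exp (1 + ‖z‖))^2 := by
              gcongr
              have := Real.add_one_le_exp (1 + ‖z‖)
              linarith
          _ = Real.exp (2 * (1 + ‖z‖)) := by rw [← Real.exp_nat_mul]; norm_num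
          _ ≤ _ := by gcongr; linarith
      have h3 : ‖(riemannZeta₁ (1/2 + z + η))⁻¹‖ ≤ 4 * Real.exp (6/η * 20) * Real.exp (12/η * ‖z‖) := by
        refine (zeta1_inv_exp hRH hη (by linarith) (by simp; linarith)).trans ?_
        rw [mul_assoc, ← Real.exp_add]
        gcongr
        rw [show 12/η * ‖z‖ = 6/η * (2 * ‖z‖) by ring, ← mul_add]
        exact mul_le_mul_of_nonneg_left (by linarith) (by positivity)
      calc _ ≤ K * ((9 * Real.exp 4 * Real.exp (2 * ‖z‖)) * (4 * Real.exp (6/η * 20) * Real.exp (12/η * ‖z‖))) := by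
            gcongr
        _ = _ := by rw [add_mul, Real.exp_add]; ring
    · refine ⟨K * 8, ?_⟩
      rw [eventually_map]
      filter_upwards [eventually_ge_atTop (3:ℝ)] with x hx
      have h1 := xi_ratio_bound hη hη' (s := 1/2 + x) (by rw [hre12]; simp; linarith)
      rw [← hK] at h1
      refine h1.trans ?_
      gcongr
      have er : ∀ y : ℝ, 1/2 + (x:ℂ) + y = ((1/2 + x + y : ℝ) : ℂ) := by intro y; push_cast; ring
      have er' : 1/2 + (x:ℂ) - η = ((1/2 + x - η : ℝ) : ℂ) := by push_cast; ring
      rw [er, er', zeta1_eq_mul (by norm_cast; linarith), zeta1_eq_mul (by norm_cast; linarith),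
        mul_div_mul_comm, norm_mul]
      have a1 : ‖(((1/2 + x - η : ℝ) : ℂ) - 1) / (((1/2 + x + η : ℝ) : ℂ) - 1)‖ ≤ 1 := by
        have : (((1/2 + x - η : ℝ) : ℂ) - 1) / (((1/2 + x + η : ℝ) : ℂ) - 1)
          = (((1/2 + x - η - 1) / (1/2 + x + η - 1) : ℝ) : ℂ) := by push_cast; ring
        rw [this, norm_real, Real.norm_of_nonneg (div_nonneg (by linarith) (by linarith))]
        exact div_le_one_of_le₀ (by linarith) (by linarith)
      have a2 := zeta_upper (s := ((1/2 + x - η : ℝ) : ℂ)) (by rw [ofReal_re]; linarith)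
      have a3 := zeta_lower (s := ((1/2 + x + η : ℝ) : ℂ)) (by rw [ofReal_re]; linarith)
      have a4 : ‖riemannZeta ((1/2 + x - η : ℝ) : ℂ) / riemannZeta ((1/2 + x + η : ℝ) : ℂ)‖ ≤ 8 := by
        rw [norm_div, div_le_iff₀ (by linarith)]; linarith
      calc _ ≤ 1 * (8:ℝ) := by gcongr
        _ = 8 := by norm_num
    · intro x
      have h1 : 1/2 + (x:ℂ) * I - η = 1 - conj (1/2 + (x:ℂ) * I + η) := by
        apply Complex.ext <;> simp <;> norm_num <;> ring
      have h2 : ‖xi (1/2 + (x:ℂ) * I - η)‖ = ‖xi (1/2 + (x:ℂ) * I + η)‖ := by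
        rw [h1, xi_one_sub, xi_conj (by simp; linarith), norm_conj]
      simp only [hΘ, norm_div, h2]
      exact div_self_le_one _
  simp only [hΘ, norm_div] at key
  rw [show 1/2 + (s - 1/2) - η = s - η by ring, show 1/2 + (s - 1/2) + η = s + η by ring] at key
  have hpos : 0 < ‖xi (s + η)‖ := norm_pos_iff.2 (xi_ne_zero hRH (by simp; linarith))
  rwa [div_le_one hpos] at key

theorem re_logDeriv_xi (hRH : RiemannHypothesis) {s : ℂ} (hs : 1/2 < s.re) :
    0 ≤ (deriv xi s / xi s).re := by
  -- phi η = normSq xi (s+η) - normSq xi (s-η)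
  have hxi : HasDerivAt xi (deriv xi s) s := (xi_diff s).hasDerivAt
  have e1 : HasDerivAt (fun η : ℝ => xi (s + η)) (deriv xi s) 0 := by
    have h : HasDerivAt (fun w : ℂ => xi (s + w)) (deriv xi s) ((0:ℝ):ℂ) := by
      have : HasDerivAt xi (deriv xi s) (s + ((0:ℝ):ℂ)) := by simpa using hxi
      exact this.comp_const_add s _
    exact h.comp_ofReal
  have e2 : HasDerivAt (fun η : ℝ => xi (s - η)) (-(deriv xi s)) 0 := by
    have h : HasDerivAt (fun w : ℂ => xi (s - w)) (-(deriv xi s)) ((0:ℝ):ℂ) := by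
      have : HasDerivAt xi (deriv xi s) (s - ((0:ℝ):ℂ)) := by simpa using hxi
      exact this.comp_const_sub s _
    exact h.comp_ofReal
  have n1 := e1.norm_sq
  have n2 := e2.norm_sq
  have n3 := n1.sub n2
  have hn : 0 ≤ deriv (fun η : ℝ => ‖xi (s + η)‖^2 - ‖xi (s - η)‖^2) 0 := by
    have hd : HasDerivAt (fun η : ℝ => ‖xi (s + η)‖^2 - ‖xi (s - η)‖^2) _ 0 := n3
    have hs1 := hd.differentiableAt.hasDerivAt.tendsto_slope_zero_right
    refine ge_of_tendsto hs1 ?_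
    have : Ioo (0:ℝ) (1/4) ∈ 𝓝[>] (0:ℝ) := Ioo_mem_nhdsGT (by norm_num)
    filter_upwards [this] with η hη
    have h1 := xi_mono hRH hη.1 hη.2 hs.le
    have h2 : ‖xi (s - η)‖^2 ≤ ‖xi (s + η)‖^2 := by gcongr
    simp only [zero_add, ofReal_zero, add_zero, sub_zero, sub_self, smul_eq_mul]
    have := hη.1
    have := sub_nonneg.2 h2
    positivity
  have hd : HasDerivAt (fun η : ℝ => ‖xi (s + η)‖^2 - ‖xi (s - η)‖^2) _ 0 := n3
  rw [hd.deriv] at hn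
  simp only [ofReal_zero, add_zero, sub_zero, inner_neg_right] at hn
  rw [Complex.inner] at hn
  have h5 : 0 ≤ (conj (xi s) * deriv xi s).re := by rw [mul_comm]; linarith
  have h6 : deriv xi s / xi s = (conj (xi s) * deriv xi s) * ((normSq (xi s))⁻¹ : ℝ) := by
    rw [div_eq_mul_inv, Complex.inv_def]; push_cast; ring
  rw [h6, re_mul_ofReal]
  have := normSq_nonneg (xi s)
  positivity

end SV

end

section

open Complex Metric Set Filter Topology MeasureTheory ComplexConjugate

namespace SV

noncomputable def ell (t : ℝ) : ℝ := Real.log (2 + |t|)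

lemma half_le_ell (t : ℝ) : 1/2 ≤ ell t := by
  have h1 : Real.log 2 ≤ ell t := Real.log_le_log (by norm_num) (by have := abs_nonneg t; linarith)
  have := Real.log_two_gt_d9
  linarith

lemma ell_neg (t : ℝ) : ell (-t) = ell t := by simp [ell]

lemma ell_cont : Continuous ell := by
  unfold ell
  refine Continuous.log (by fun_prop) (fun x => ?_)
  have := abs_nonneg x
  positivity

lemma ell_add (τ t : ℝ) : ell (τ + t) ≤ 11 * ell t * (1 + τ^2) ^ (1/4 : ℝ) := by
  have h0 := half_le_ell t
  have ht := abs_nonneg t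
  have hτ := abs_nonneg τ
  have hp : 1 ≤ (1 + τ^2) ^ (1/4 : ℝ) := Real.one_le_rpow (by nlinarith) (by norm_num)
  have h1 : ell (τ + t) ≤ Real.log ((2 + |t|) * (2 * (1 + τ^2))) := by
    unfold ell
    have := abs_nonneg (τ + t)
    refine Real.log_le_log (by positivity) ?_
    have h2 := abs_add_le τ t
    have h3 : |τ| ≤ 1 + τ^2 := by rw [← sq_abs]; nlinarith
    nlinarith [mul_nonneg ht (sq_nonneg τ)]
  rw [Real.log_mul (by positivity) (by positivity), Real.log_mul (by positivity) (by positivity)] at h1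
  have h2 : Real.log (1 + τ^2) ≤ (1 + τ^2) ^ (1/4 : ℝ) / (1/4) :=
    Real.log_le_rpow_div (by positivity) (by norm_num)
  have h3 := Real.log_two_lt_d9
  change ell (τ + t) ≤ ell t + _ at h1
  nlinarith

lemma ell_dec (τ t : ℝ) : ell (τ + t) / (1 + τ^2) ≤ 11 * ell t * (1 + τ^2) ^ (-(3/4) : ℝ) := by
  have h : (0:ℝ) < 1 + τ^2 := by positivity
  rw [div_le_iff₀ h, mul_assoc, ← Real.rpow_add_one h.ne']
  have := ell_add τ t
  rwa [show (1/4:ℝ) = -(3/4) + 1 by norm_num] at this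

lemma int_dec : Integrable (fun x : ℝ => (1 + x ^ 2) ^ (-(3/4) : ℝ)) := by
  have := integrable_rpow_neg_one_add_norm_sq (E := ℝ) (μ := volume) (r := 3/2) (by simp; norm_num)
  refine (this.congr (Eventually.of_forall fun x => ?_))
  simp; norm_num

noncomputable def J : ℝ := ∫ x : ℝ, (1 + x ^ 2) ^ (-(3/4) : ℝ)

lemma J_nonneg : 0 ≤ J := integral_nonneg fun x => by positivity

noncomputable def g (z : ℂ) : ℂ := deriv xi (1/2 + z) / xi (1/2 + z)
noncomputable def D0 (z : ℂ) : ℂ := - (deriv riemannZeta₁ (1/2 + z) / riemannZeta₁ (1/2 + z))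
noncomputable def gam (z : ℂ) : ℂ :=
  1 / (1/2 + z) + (- (Real.log Real.pi : ℂ) / 2 + digamma ((1/2 + z)/2) / 2)

lemma g_diff (hRH : RiemannHypothesis) {z : ℂ} (hz : 0 < z.re) : DifferentiableAt ℂ g z := by
  unfold g
  have h1 := xi_diff
  have h2 : Differentiable ℂ (deriv xi) := by
    have := xi_diff.contDiff (n := 2)
    exact ((contDiff_succ_iff_deriv (n := 1)).1 this).2.2.differentiable (by norm_num)
  exact DifferentiableAt.div (by fun_prop) (by fun_prop) (xi_ne_zero hRH (by simp; linarith))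

lemma D0_diff (hRH : RiemannHypothesis) {z : ℂ} (hz : 0 < z.re) : DifferentiableAt ℂ D0 z := by
  unfold D0
  have h1 := differentiable_riemannZeta₁
  have h2 : Differentiable ℂ (deriv riemannZeta₁) := by
    have := differentiable_riemannZeta₁.contDiff (n := 2)
    exact ((contDiff_succ_iff_deriv (n := 1)).1 this).2.2.differentiable (by norm_num)
  have h3 : riemannZeta₁ (1/2 + z) ≠ 0 := zeta1_ne_zero hRH (by simp; linarith)
  refine DifferentiableAt.neg ?_
  exact DifferentiableAt.div (by fun_prop) (by fun_prop) h3

lemma g_eq (hRH : RiemannHypothesis) {z : ℂ} (hz : 0 < z.re) : g z = gam z - D0 z := by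
  set s : ℂ := 1/2 + z with hs
  have hre : s.re = 1/2 + z.re := by simp [hs]
  have hs0 : s ≠ 0 := by rintro h; rw [h] at hre; simp at hre; linarith
  have hpi : (Real.pi : ℂ) ≠ 0 := by exact_mod_cast Real.pi_pos.ne'
  have hev : xi =ᶠ[𝓝 s] fun s => s * ((Real.pi : ℂ) ^ (-s / 2) * Gamma (s / 2)) * riemannZeta₁ s := by
    have : {s : ℂ | 0 < s.re} ∈ 𝓝 s := (isOpen_lt continuous_const continuous_re).mem_nhds
      (by simp [hre]; linarith)
    filter_upwards [this] with w hw
    rw [xi_eq hw, Gammaℝ_def]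
  have hre2 : (s/2).re = s.re/2 := by
    rw [show (2:ℂ) = ((2:ℝ):ℂ) by norm_num, div_ofReal_re]
  have hG0 : Gamma (s/2) ≠ 0 := Gamma_ne_zero_of_re_pos (by rw [hre2, hre]; linarith)
  have hp0 : (Real.pi : ℂ) ^ (-s / 2) ≠ 0 := by simp [cpow_eq_zero_iff, hpi]
  have hz0 : riemannZeta₁ s ≠ 0 := zeta1_ne_zero hRH (by rw [hre]; linarith)
  have hGd : DifferentiableAt ℂ Gamma (s/2) := differentiableAt_Gamma _ (by
    intro m h
    have : (s/2).re = -(m:ℝ) := by rw [h]; simp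
    rw [hre2, hre] at this
    have : (0:ℝ) ≤ m := m.cast_nonneg
    linarith)
  have d1 : HasDerivAt (fun s : ℂ => (Real.pi : ℂ) ^ (-s / 2))
      ((Real.pi : ℂ) ^ (-s / 2) * Complex.log Real.pi * (-1/2)) s :=
    (((hasDerivAt_id s).neg).div_const 2).const_cpow (Or.inl hpi)
  have d2 : HasDerivAt (fun s : ℂ => Gamma (s / 2)) (deriv Gamma (s/2) * (1/2)) s :=
    HasDerivAt.comp s hGd.hasDerivAt ((hasDerivAt_id s).div_const 2)
  have d3 : HasDerivAt riemannZeta₁ (deriv riemannZeta₁ s) s := (differentiable_riemannZeta₁ s).hasDerivAt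
  have d4 := ((hasDerivAt_id s).mul (d1.mul d2)).mul d3
  have d5 : deriv xi s = _ := (hev.deriv_eq).trans d4.deriv
  have e0 : xi s = _ := hev.self_of_nhds
  unfold g D0 gam
  rw [← hs, d5, e0, digamma_def, logDeriv_apply, ofReal_log Real.pi_pos.le]
  simp only [id, Pi.mul_apply]
  field_simp
  ring

lemma g_conj {z : ℂ} (hz : 0 < z.re) : conj (g z) = g (conj z) := by
  unfold g
  have h1 : (1/2 + conj z : ℂ) = conj (1/2 + z) := by
    simp [map_div₀, show conj (2:ℂ) = 2 from Complex.conj_ofNat 2]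
  set s := 1/2 + z with hs
  have hre : s.re = 1/2 + z.re := by simp [hs]
  have hev : xi =ᶠ[𝓝 s] (conj ∘ xi ∘ conj) := by
    have : {s : ℂ | 0 < s.re} ∈ 𝓝 s := (isOpen_lt continuous_const continuous_re).mem_nhds
      (by simp [hre]; linarith)
    filter_upwards [this] with w hw
    simp [xi_conj hw]
  rw [h1, xi_conj (by rw [hre]; linarith), map_div₀, hev.deriv_eq, deriv_conj_conj]
  simp

lemma norm_half_add {z : ℂ} (h0 : 0 ≤ z.re) (h1 : z.re ≤ 1) :
    1/2 ≤ ‖1/2 + z‖ ∧ ‖1/2 + z‖ ≤ 2 + |z.im| := by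
  constructor
  · refine le_trans ?_ (re_le_norm _); simp; linarith
  · refine (Complex.norm_le_abs_re_add_abs_im _).trans ?_
    simp
    rw [abs_of_nonneg (by positivity)]
    norm_num; linarith

lemma log_s {z : ℂ} (h0 : 0 ≤ z.re) (h1 : z.re ≤ 1) : Real.log (2 + ‖1/2 + z‖) ≤ 2 * ell z.im := by
  have h2 := (norm_half_add h0 h1).2
  have h3 := abs_nonneg z.im
  have h4 := norm_nonneg (1/2 + z)
  have : 2 * ell z.im = Real.log ((2 + |z.im|)^2) := by rw [Real.log_pow, ell]; norm_num
  rw [this]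
  exact Real.log_le_log (by positivity) (by nlinarith)

lemma gam_bound : ∃ C : ℝ, 0 < C ∧ ∀ z : ℂ, 0 ≤ z.re → z.re ≤ 1 → ‖gam z‖ ≤ C * ell z.im := by
  obtain ⟨C, hC, h⟩ := digamma_bound
  refine ⟨4 + |Real.log Real.pi| + C, by positivity, fun z h0 h1 => ?_⟩
  have e0 := half_le_ell z.im
  have n1 := norm_half_add h0 h1
  have n2 := log_s h0 h1
  have hre2 : ((1/2 + z)/2).re = (1/2 + z.re)/2 := by
    rw [show (2:ℂ) = ((2:ℝ):ℂ) by norm_num, div_ofReal_re]; simp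
  have h3 := h ((1/2 + z)/2) (by rw [hre2]; linarith)
  have h4 : ‖(1/2 + z)/2‖ = ‖1/2 + z‖ / 2 := by rw [norm_div]; simp
  have h5 : Real.log (2 + ‖(1/2+z)/2‖) ≤ 2 * ell z.im := by
    refine le_trans (Real.log_le_log (by positivity) ?_) n2
    rw [h4]; linarith [n1.1]
  have h6 : ‖digamma ((1/2 + z)/2)‖ ≤ C * (2 * ell z.im) := h3.trans (by gcongr)
  have a1 : ‖1 / (1/2 + z)‖ ≤ 2 := by
    rw [norm_div, norm_one, div_le_iff₀ (by linarith [n1.1])]; linarith [n1.1]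
  have a2 : ‖-(Real.log Real.pi : ℂ) / 2‖ = |Real.log Real.pi| / 2 := by
    rw [norm_div, norm_neg, norm_real, Real.norm_eq_abs]; simp
  have a3 : ‖digamma ((1/2 + z)/2) / 2‖ ≤ C * ell z.im := by
    rw [norm_div]; simp; linarith
  unfold gam
  refine (norm_add_le _ _).trans ?_
  have a4 := norm_add_le (-(Real.log Real.pi : ℂ) / 2) (digamma ((1/2 + z)/2) / 2)
  nlinarith [abs_nonneg (Real.log Real.pi)]

lemma D0_bound (hRH : RiemannHypothesis) {a : ℝ} (ha : 0 < a) (ha1 : a < 1) :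
    ∃ C : ℝ, 0 < C ∧ ∀ z : ℂ, a ≤ z.re → z.re ≤ 1 → ‖D0 z‖ ≤ C * ell z.im := by
  refine ⟨48/a^2 * (2 * Real.log 144 + 4), by
    have : 0 < Real.log 144 := Real.log_pos (by norm_num)
    positivity, fun z h0 h1 => ?_⟩
  have h := (zeta1_strip hRH ha ha1 (s := 1/2 + z) (by simp; linarith) (by simp; linarith)).2
  unfold D0
  rw [norm_neg]
  refine h.trans ?_
  rw [mul_assoc]
  gcongr
  rw [Real.log_mul (by norm_num) (by positivity), Real.log_pow]
  have := log_s (ha.le.trans h0) h1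
  have e0 := half_le_ell z.im
  have : 0 < Real.log 144 := Real.log_pos (by norm_num)
  push_cast
  nlinarith

lemma g_bound (hRH : RiemannHypothesis) {a : ℝ} (ha : 0 < a) (ha1 : a < 1) :
    ∃ C : ℝ, 0 < C ∧ ∀ z : ℂ, a ≤ z.re → z.re ≤ 1 → ‖g z‖ ≤ C * ell z.im := by
  obtain ⟨C, hC, h⟩ := D0_bound hRH ha ha1
  obtain ⟨C', hC', h'⟩ := gam_bound
  refine ⟨C' + C, by positivity, fun z h0 h1 => ?_⟩
  rw [g_eq hRH (by linarith)]
  refine (norm_sub_le _ _).trans ?_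
  have := h z h0 h1
  have := h' z (by linarith) h1
  linarith

/-- the basic estimation tool -/
lemma norm_int_le {F : ℝ → ℂ} {K : ℝ} (h : ∀ τ, ‖F τ‖ ≤ K * (1 + τ ^ 2) ^ (-(3/4) : ℝ)) :
    ‖∫ τ, F τ‖ ≤ K * J := by
  refine (norm_integral_le_of_norm_le (int_dec.const_mul K) (Eventually.of_forall h)).trans ?_
  rw [integral_const_mul]; rfl

lemma dec_bound {A B c d τ t : ℝ} (hA : 0 ≤ A) (hd : 0 < d) (hc : 0 ≤ c) (hA' : A ≤ c * ell (τ + t))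
    (hB : d * (1 + τ^2) ≤ B) : A / B ≤ c * 11 / d * ell t * (1 + τ ^ 2) ^ (-(3/4) : ℝ) := by
  have h1 : A / B ≤ c * ell (τ + t) / (d * (1 + τ^2)) := by
    apply div_le_div₀ (hA.trans hA') hA' (by positivity) hB
  refine h1.trans ?_
  have h2 := ell_dec τ t
  have : c * ell (τ + t) / (d * (1 + τ^2)) = c / d * (ell (τ + t) / (1 + τ^2)) := by
    field_simp
  rw [this]
  calc _ ≤ c / d * (11 * ell t * (1 + τ^2) ^ (-(3/4) : ℝ)) := by gcongr
    _ = _ := by ring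

end SV

end

section

open Complex Metric Set Filter Topology MeasureTheory ComplexConjugate

namespace SV

lemma im_sh (z : ℂ) (t : ℝ) : (z + t * I).im = z.im + t := by simp
lemma re_sh (z : ℂ) (t : ℝ) : (z + t * I).re = z.re := by simp

lemma den4 {x y : ℝ} {w : ℂ} (hw : w.re = x) (hy : w.im = y) (hx : x^2 ≤ 1) :
    1 * (1 + y^2) ≤ ‖4 - w^2‖ := by
  refine le_trans ?_ (re_le_norm _)
  have : (4 - w^2).re = 4 - (x^2 - y^2) := by
    rw [← hw, ← hy, sub_re, pow_two, mul_re]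
    simp [pow_two]
  rw [this]; linarith

lemma den1 {x y : ℝ} {w : ℂ} (hw : w.re = x) (hy : w.im = y) (hx : x^2 ≤ 9/16) :
    7/16 * (1 + y^2) ≤ ‖1 - w^2‖ := by
  refine le_trans ?_ (re_le_norm _)
  have : (1 - w^2).re = 1 - (x^2 - y^2) := by
    rw [← hw, ← hy, sub_re, pow_two, mul_re]
    simp [pow_two]
  rw [this]; nlinarith [sq_nonneg y]

lemma ne_zero_of_le_norm {y d : ℝ} {w : ℂ} (hd : 0 < d) (h : d * (1 + y^2) ≤ ‖w‖) : w ≠ 0 := by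
  rw [← norm_pos_iff]; refine lt_of_lt_of_le ?_ h; positivity

lemma re_line (a τ : ℝ) : ((a:ℂ) + τ * I).re = a := by simp
lemma im_line (a τ : ℝ) : ((a:ℂ) + τ * I).im = τ := by simp

lemma g_line_cont (hRH : RiemannHypothesis) {a : ℝ} (ha : 0 < a) (t : ℝ) :
    Continuous fun τ : ℝ => g (a + τ * I + t * I) := by
  refine continuous_iff_continuousAt.2 fun τ => ?_
  have h1 : ContinuousAt g (a + τ * I + t * I) := (g_diff hRH (by simpa using ha)).continuousAt
  exact ContinuousAt.comp (f := fun τ : ℝ => (a:ℂ) + τ * I + t * I) h1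
    (Continuous.continuousAt (by fun_prop))

lemma P_int (hRH : RiemannHypothesis) : ∃ C : ℝ, 0 < C ∧ ∀ a : ℝ, 0 < a → a ≤ 1/8 → ∀ t : ℝ,
    Integrable (fun τ : ℝ => (g (a + τ * I + t * I)).re / (4 + τ^2)) ∧
    ∫ τ : ℝ, (g (a + τ * I + t * I)).re / (4 + τ^2) ≤ C * ell t := by
  obtain ⟨C, hC, hb⟩ := g_bound hRH (a := 3/4) (by norm_num) (by norm_num)
  have hJ := J_nonneg
  refine ⟨C * 11 / 1 * J + 1, by positivity, fun a ha ha8 t => ?_⟩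
  obtain ⟨K, hK, hKb⟩ := g_bound hRH ha (by linarith)
  set F : ℂ → ℂ := fun z => g (z + t * I) / (4 - (z - a)^2) with hF
  have hden : ∀ z : ℂ, a ≤ z.re → z.re ≤ 3/4 → 1 * (1 + z.im^2) ≤ ‖4 - (z - a)^2‖ := by
    intro z h1 h2
    refine den4 (x := z.re - a) (by simp) (by simp) (by nlinarith)
  have hFb : ∀ z : ℂ, a ≤ z.re → z.re ≤ 3/4 →
      ‖F z‖ ≤ K * 11 / 1 * ell t * (1 + z.im ^ 2) ^ (-(3/4) : ℝ) := by
    intro z h1 h2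
    rw [hF, norm_div]
    refine dec_bound (norm_nonneg _) (by norm_num) hK.le ?_ (hden z h1 h2)
    have := hKb (z + t * I) (by rw [re_sh]; exact h1) (by rw [re_sh]; linarith)
    rwa [im_sh] at this
  have hsh := shift (F := F) (a := a) (b := 3/4) (by linarith) (by
    intro z h1 h2
    have h3 : DifferentiableAt ℂ (fun z => g (z + t * I)) z := by
      have : DifferentiableAt ℂ g (z + t * I) := g_diff hRH (by rw [re_sh]; linarith)
      exact DifferentiableAt.comp (f := fun z : ℂ => z + t * I) z this (by fun_prop)
    exact h3.div (by fun_prop) (ne_zero_of_le_norm (by norm_num) (hden z h1 h2))) hFb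
  have hline : ∀ τ : ℝ, F (a + τ * I) = g (a + τ * I + t * I) / ((4 + τ^2 : ℝ) : ℂ) := by
    intro τ
    simp only [hF]
    congr 1
    push_cast
    rw [add_sub_cancel_left, mul_pow, I_sq]; ring
  have hcont : Continuous fun τ : ℝ => F (a + τ * I) := by
    simp_rw [hline]
    refine (g_line_cont hRH ha t).div (by fun_prop) (fun τ => ?_)
    norm_cast
    positivity
  have hint : Integrable fun τ : ℝ => F (a + τ * I) := by
    refine (int_dec.const_mul (K * 11 / 1 * ell t)).mono' hcont.aestronglyMeasurable
      (Eventually.of_forall fun τ => ?_)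
    have := hFb (a + τ * I) (by rw [re_line]) (by rw [re_line]; linarith)
    rwa [im_line] at this
  have hre : ∀ τ : ℝ, (F (a + τ * I)).re = (g (a + τ * I + t * I)).re / (4 + τ^2) := by
    intro τ; rw [hline, div_ofReal_re]
  constructor
  · have := hint.re
    refine this.congr (Eventually.of_forall fun τ => ?_)
    exact hre τ
  · have e1 : ∫ τ : ℝ, (g (a + τ * I + t * I)).re / (4 + τ^2) = (∫ τ : ℝ, F (a + τ * I)).re := by
      have h2 : (∫ τ : ℝ, (F (a + τ * I)).re) = (∫ τ : ℝ, F (a + τ * I)).re := integral_re hint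
      rw [← h2]
      exact integral_congr_ae (Eventually.of_forall fun τ => (hre τ).symm)
    rw [e1, hsh]
    refine (re_le_norm _).trans ?_
    have h3 : ‖∫ τ : ℝ, F (((3/4 : ℝ) : ℂ) + τ * I)‖ ≤ C * 11 / 1 * ell t * J := by
      refine norm_int_le fun τ => ?_
      simp only [hF]
      rw [norm_div]
      have hd := hden (((3/4 : ℝ) : ℂ) + τ * I) (by rw [re_line]; linarith) (by rw [re_line])
      rw [im_line] at hd
      refine dec_bound (norm_nonneg _) (by norm_num) hC.le ?_ hd
      have := hb (((3/4 : ℝ) : ℂ) + τ * I + t * I) (by rw [re_sh, re_line]) (by rw [re_sh, re_line]; norm_num)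
      rwa [im_sh, im_line] at this
    push_cast at h3 ⊢
    nlinarith [half_le_ell t]

/-- The main analytic estimate. -/
lemma I_bound (hRH : RiemannHypothesis) : ∃ C : ℝ, 0 < C ∧ ∀ U : ℝ, 0 ≤ U → ∀ t : ℝ,
    ‖∫ τ : ℝ, D0 (((3/4:ℝ):ℂ) + τ * I + t * I) * (2 / (1 - (((3/4:ℝ):ℂ) + τ * I)^2)) *
      cexp ((((3/4:ℝ):ℂ) + τ * I) * U)‖ ≤ C * ell t := by
  obtain ⟨Cg, hCg, hgb⟩ := g_bound hRH (a := 3/4) (by norm_num) (by norm_num)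
  obtain ⟨Cγ, hCγ, hγb⟩ := gam_bound
  obtain ⟨CP, hCP, hPb⟩ := P_int hRH
  have hJ := J_nonneg
  refine ⟨2 * Real.exp 1 * Cγ * 11 / (7/16) * J + 20 * Real.exp 1 * CP + 2 * Cg * 11 / (7/16) * J,
    by positivity, fun U hU t => ?_⟩
  have hl := half_le_ell t
  obtain ⟨a, ha, ha8, haU⟩ : ∃ a : ℝ, 0 < a ∧ a ≤ 1/8 ∧ a * U ≤ 1 := by
    refine ⟨min (1/8) (1/(1+U)), by positivity, min_le_left _ _, ?_⟩
    calc min (1/8) (1/(1+U)) * U ≤ 1/(1+U) * U := by gcongr; exact min_le_right _ _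
      _ ≤ 1 := by rw [one_div, inv_mul_le_iff₀ (by positivity)]; linarith
  set W : ℂ → ℂ := fun z => 2 / (1 - z^2) * cexp (z * U) with hW
  have hden : ∀ z : ℂ, -(3/4) ≤ z.re → z.re ≤ 3/4 → 7/16 * (1 + z.im^2) ≤ ‖1 - z^2‖ := by
    intro z h1 h2
    exact den1 rfl rfl (by nlinarith)
  have hWd : ∀ z : ℂ, -(3/4) ≤ z.re → z.re ≤ 3/4 → DifferentiableAt ℂ W z := by
    intro z h1 h2
    have h3 := ne_zero_of_le_norm (by norm_num) (hden z h1 h2)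
    have h4 : DifferentiableAt ℂ (fun z : ℂ => 2 / (1 - z^2)) z :=
      DifferentiableAt.div (by fun_prop) (by fun_prop) h3
    exact h4.mul (by fun_prop)
  have hWn : ∀ z : ℂ, ‖W z‖ = 2 * Real.exp (z.re * U) / ‖1 - z^2‖ := by
    intro z
    simp only [hW]
    rw [norm_mul, norm_div, Complex.norm_exp]; simp; ring
  have hprod : ∀ (A z : ℂ) (c E : ℝ), -(3/4) ≤ z.re → z.re ≤ 3/4 → 0 ≤ c → 0 ≤ E →
      ‖A‖ ≤ c * ell (z.im + t) → Real.exp (z.re * U) ≤ E →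
      ‖A * W z‖ ≤ 2 * E * c * 11 / (7/16) * ell t * (1 + z.im ^ 2) ^ (-(3/4) : ℝ) := by
    intro A z c E h1 h2 hc hE hA hE'
    rw [norm_mul, hWn, ← mul_div_assoc]
    refine dec_bound (by positivity) (by norm_num) (by positivity) ?_ (hden z h1 h2)
    calc ‖A‖ * (2 * Real.exp (z.re * U)) ≤ (c * ell (z.im + t)) * (2 * E) := by
          have := half_le_ell (z.im + t)
          have : 0 ≤ c * ell (z.im + t) := mul_nonneg hc (by linarith)
          gcongr
      _ = _ := by ring
  have hWc : ∀ b : ℝ, -(3/4) ≤ b → b ≤ 3/4 → Continuous fun τ : ℝ => W (b + τ * I) := by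
    intro b h1 h2
    refine continuous_iff_continuousAt.2 fun τ => ?_
    exact ContinuousAt.comp (f := fun τ : ℝ => (b:ℂ) + τ * I)
      (hWd _ (by rwa [re_line]) (by rwa [re_line])).continuousAt (Continuous.continuousAt (by fun_prop))
  -- first shift
  obtain ⟨K, hK, hKb⟩ := D0_bound hRH ha (by linarith)
  obtain ⟨K', hK', hKb'⟩ := g_bound hRH ha (by linarith)
  have s1 := shift (F := fun z => D0 (z + t * I) * W z) (a := a) (b := 3/4)
    (C := 2 * Real.exp U * K * 11 / (7/16) * ell t) (by linarith) (by
      intro z h1 h2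
      have : DifferentiableAt ℂ D0 (z + t * I) := D0_diff hRH (by rw [re_sh]; linarith)
      have h3 : DifferentiableAt ℂ (fun z => D0 (z + t * I)) z :=
        DifferentiableAt.comp (f := fun z : ℂ => z + t * I) z this (by fun_prop)
      exact h3.mul (hWd z (by linarith) h2)) (by
      intro z h1 h2
      refine hprod _ z _ _ (by linarith) h2 hK.le (Real.exp_pos _).le ?_ ?_
      · have := hKb (z + t * I) (by rw [re_sh]; linarith) (by rw [re_sh]; linarith)
        rwa [im_sh] at this
      · apply Real.exp_le_exp.2; nlinarith)
  have e0 : ∀ τ : ℝ, D0 (((3/4:ℝ):ℂ) + τ * I + t * I) * (2 / (1 - (((3/4:ℝ):ℂ) + τ * I)^2)) *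
      cexp ((((3/4:ℝ):ℂ) + τ * I) * U) = (fun z => D0 (z + t * I) * W z) (((3/4:ℝ):ℂ) + τ * I) := by
    intro τ; simp only [hW]; ring
  simp_rw [e0]
  rw [← s1]
  -- second shift
  have s2 := shift (F := fun z => g (2 * a - z - t * I) * W z) (a := -(3/4)) (b := a)
    (C := 2 * Real.exp 1 * K' * 11 / (7/16) * ell t) (by linarith) (by
      intro z h1 h2
      have : DifferentiableAt ℂ g (2 * a - z - t * I) := g_diff hRH (by simp; linarith)
      have h3 : DifferentiableAt ℂ (fun z => g (2 * a - z - t * I)) z :=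
        DifferentiableAt.comp (f := fun z : ℂ => 2 * a - z - t * I) z this (by fun_prop)
      exact h3.mul (hWd z h1 (by linarith))) (by
      intro z h1 h2
      refine hprod _ z _ _ h1 (by linarith) hK'.le (Real.exp_pos _).le ?_ ?_
      · have := hKb' (2 * a - z - t * I) (by simp; linarith) (by simp; linarith)
        refine this.trans (le_of_eq ?_)
        have : (2 * a - z - t * I).im = -(z.im + t) := by simp; ring
        rw [this, ell_neg]
      · apply Real.exp_le_exp.2
        nlinarith)
  have hsplit : ∀ τ : ℝ, D0 (a + τ * I + t * I) * W (a + τ * I) =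
      gam (a + τ * I + t * I) * W (a + τ * I) - ((2 * (g (a + τ * I + t * I)).re : ℝ) : ℂ) * W (a + τ * I)
      + g (2 * a - (a + τ * I) - t * I) * W (a + τ * I) := by
    intro τ
    have h1 : 0 < ((a:ℂ) + τ * I + t * I).re := by rw [re_sh, re_line]; exact ha
    have h2 := g_eq hRH h1
    have h3 : (2 * a - (a + τ * I) - t * I : ℂ) = conj (a + τ * I + t * I) := by
      simp; ring
    have h4 : ((2 * (g (a + τ * I + t * I)).re : ℝ) : ℂ) = g (a + τ * I + t * I) + conj (g (a + τ * I + t * I)) := by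
      rw [add_conj]
    rw [h3, ← g_conj h1, h4, h2]
    ring
  have hac : Continuous fun τ : ℝ => W (a + τ * I) := hWc a (by linarith) (by linarith)
  have hgc := g_line_cont hRH ha t
  have hDc : Continuous fun τ : ℝ => D0 (a + τ * I + t * I) := by
    refine continuous_iff_continuousAt.2 fun τ => ?_
    have h1 : ContinuousAt D0 (a + τ * I + t * I) := (D0_diff hRH (by simpa using ha)).continuousAt
    exact ContinuousAt.comp (f := fun τ : ℝ => (a:ℂ) + τ * I + t * I) h1
      (Continuous.continuousAt (by fun_prop))
  have hγc : Continuous fun τ : ℝ => gam (a + τ * I + t * I) := by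
    refine (hgc.add hDc).congr fun τ => ?_
    simp only [Pi.add_apply]
    rw [g_eq hRH (show 0 < ((a:ℂ) + τ * I + t * I).re by rw [re_sh, re_line]; exact ha)]; ring
  have hconjc : Continuous fun τ : ℝ => g (2 * a - (a + τ * I) - t * I) := by
    refine (continuous_conj.comp hgc).congr fun τ => ?_
    have h1 : 0 < ((a:ℂ) + τ * I + t * I).re := by rw [re_sh, re_line]; exact ha
    simp only [Function.comp]
    rw [g_conj h1]
    congr 1
    simp; ring
  have hEa : Real.exp (a * U) ≤ Real.exp 1 := Real.exp_le_exp.2 haU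
  have b1 : ∀ τ : ℝ, ‖gam (a + τ * I + t * I) * W (a + τ * I)‖ ≤
      2 * Real.exp 1 * Cγ * 11 / (7/16) * ell t * (1 + τ ^ 2) ^ (-(3/4) : ℝ) := by
    intro τ
    have := hprod (gam (a + τ * I + t * I)) (a + τ * I) Cγ (Real.exp 1) (by rw [re_line]; linarith)
      (by rw [re_line]; linarith) hCγ.le (Real.exp_pos _).le (by
        have := hγb (a + τ * I + t * I) (by rw [re_sh, re_line]; linarith) (by rw [re_sh, re_line]; linarith)
        rwa [im_sh] at this) (by rw [re_line]; exact hEa)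
    rwa [im_line] at this
  have b3 : ∀ τ : ℝ, ‖g (2 * a - (a + τ * I) - t * I) * W (a + τ * I)‖ ≤
      2 * Real.exp 1 * K' * 11 / (7/16) * ell t * (1 + τ ^ 2) ^ (-(3/4) : ℝ) := by
    intro τ
    have := hprod (g (2 * a - (a + τ * I) - t * I)) (a + τ * I) K' (Real.exp 1) (by rw [re_line]; linarith)
      (by rw [re_line]; linarith) hK'.le (Real.exp_pos _).le (by
        have := hKb' (2 * a - (a + τ * I) - t * I) (by simp; linarith) (by simp; linarith)
        refine this.trans (le_of_eq ?_)
        have : (2 * a - (a + τ * I) - t * I : ℂ).im = -(((a:ℂ) + τ * I).im + t) := by simp; ring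
        rw [this, ell_neg]) (by rw [re_line]; exact hEa)
    rwa [im_line] at this
  have b4 : ∀ τ : ℝ, ‖g (2 * a - (((-(3/4) : ℝ) : ℂ) + τ * I) - t * I) * W (((-(3/4) : ℝ) : ℂ) + τ * I)‖ ≤
      2 * 1 * Cg * 11 / (7/16) * ell t * (1 + τ ^ 2) ^ (-(3/4) : ℝ) := by
    intro τ
    have := hprod (g (2 * a - (((-(3/4) : ℝ) : ℂ) + τ * I) - t * I)) (((-(3/4) : ℝ) : ℂ) + τ * I) Cg 1
      (by rw [re_line]) (by rw [re_line]; linarith) hCg.le (by norm_num) (by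
        have hr : (2 * a - (((-(3/4) : ℝ) : ℂ) + τ * I) - t * I : ℂ).re = 2 * a + 3/4 := by simp
        have := hgb (2 * a - (((-(3/4) : ℝ) : ℂ) + τ * I) - t * I) (by rw [hr]; linarith) (by rw [hr]; linarith)
        refine this.trans (le_of_eq ?_)
        have : (2 * a - (((-(3/4) : ℝ) : ℂ) + τ * I) - t * I : ℂ).im = -((((-(3/4) : ℝ) : ℂ) + τ * I).im + t) := by
          simp; ring
        rw [this, ell_neg]) (by
        rw [re_line]; rw [← Real.exp_zero]; apply Real.exp_le_exp.2; nlinarith)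
    rwa [im_line] at this
  obtain ⟨hPi, hPle⟩ := hPb a ha ha8 t
  have hPnn : ∀ τ : ℝ, 0 ≤ (g (a + τ * I + t * I)).re := by
    intro τ
    unfold g
    exact re_logDeriv_xi hRH (by simp; linarith)
  have b2 : ∀ τ : ℝ, ‖((2 * (g (a + τ * I + t * I)).re : ℝ) : ℂ) * W (a + τ * I)‖ ≤
      20 * Real.exp 1 * ((g (a + τ * I + t * I)).re / (4 + τ^2)) := by
    intro τ
    have h0 := hPnn τ
    rw [norm_mul, hWn, norm_real, Real.norm_of_nonneg (by linarith), re_line]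
    have hd : (4 + τ^2) / 5 ≤ ‖1 - ((a:ℂ) + τ * I)^2‖ := by
      refine le_trans ?_ (re_le_norm _)
      have : (1 - ((a:ℂ) + τ * I)^2).re = 1 - (a^2 - τ^2) := by
        rw [sub_re, pow_two, mul_re]
        simp [pow_two]
      rw [this]; nlinarith [sq_nonneg τ]
    calc _ ≤ 2 * (g (a + τ * I + t * I)).re * (2 * Real.exp 1 / ((4 + τ^2)/5)) := by gcongr
      _ = _ := by field_simp; ring
  have i1 : Integrable fun τ : ℝ => gam (a + τ * I + t * I) * W (a + τ * I) :=
    (int_dec.const_mul _).mono' (hγc.mul hac).aestronglyMeasurable (Eventually.of_forall b1)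
  have i3 : Integrable fun τ : ℝ => g (2 * a - (a + τ * I) - t * I) * W (a + τ * I) :=
    (int_dec.const_mul _).mono' (hconjc.mul hac).aestronglyMeasurable (Eventually.of_forall b3)
  have i2 : Integrable fun τ : ℝ => ((2 * (g (a + τ * I + t * I)).re : ℝ) : ℂ) * W (a + τ * I) := by
    refine (hPi.const_mul _).mono' (Continuous.aestronglyMeasurable ?_) (Eventually.of_forall b2)
    have := continuous_re.comp hgc
    simp only [Function.comp_def] at this
    refine Continuous.mul ?_ hac
    fun_prop
  have hfin : (∫ τ : ℝ, D0 (a + τ * I + t * I) * W (a + τ * I)) =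
      (∫ τ : ℝ, gam (a + τ * I + t * I) * W (a + τ * I)) -
      (∫ τ : ℝ, ((2 * (g (a + τ * I + t * I)).re : ℝ) : ℂ) * W (a + τ * I)) +
      ∫ τ : ℝ, g (2 * a - (a + τ * I) - t * I) * W (a + τ * I) := by
    have i12 := i1.sub i2
    simp only [Pi.sub_def] at i12
    rw [← integral_sub i1 i2, ← integral_add i12 i3]
    exact integral_congr_ae (Eventually.of_forall hsplit)
  rw [hfin, ← s2]
  have n1 := norm_int_le b1
  have n3 := norm_int_le b4
  have n2 := norm_integral_le_of_norm_le (hPi.const_mul _) (Eventually.of_forall b2)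
  rw [integral_const_mul] at n2
  have n2' : 20 * Real.exp 1 * (∫ τ : ℝ, (g (a + τ * I + t * I)).re / (4 + τ^2)) ≤
    20 * Real.exp 1 * (CP * ell t) := by gcongr
  refine (norm_add_le _ _).trans ?_
  refine (add_le_add (norm_sub_le _ _) le_rfl).trans ?_
  refine (add_le_add (add_le_add n1 (n2.trans n2')) n3).trans (le_of_eq ?_)
  ring

end SV

end

section

open Complex Metric Set Filter Topology MeasureTheory ComplexConjugate FourierTransform SchwartzMap

namespace SV

lemma plancherel {H : ℝ → ℂ} (h1 : Integrable H) (h2 : MemLp H 2) (h3 : MemLp (𝓕 H) 2) :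
    ∫ x, ‖H x‖^2 = ∫ x, ‖𝓕 H x‖^2 := by
  have key : 𝓕 (h2.toLp H) = h3.toLp (𝓕 H) := by
    have hinj : Function.Injective (Lp.toTemperedDistributionCLM (E := ℝ) ℂ volume 2) :=
      LinearMap.ker_eq_bot.1 Lp.ker_toTemperedDistributionCLM_eq_bot
    apply hinj
    rw [Lp.toTemperedDistributionCLM_apply, Lp.toTemperedDistributionCLM_apply,
      ← Lp.fourier_toTemperedDistribution_eq]
    ext φ
    rw [TemperedDistribution.fourier_apply, Lp.toTemperedDistribution_apply,
      Lp.toTemperedDistribution_apply]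
    have e1 : ∫ x, (𝓕 φ) x • (h2.toLp H) x = ∫ x, (𝓕 (φ : ℝ → ℂ)) x • H x := by
      refine integral_congr_ae ?_
      filter_upwards [h2.coeFn_toLp] with x hx
      rw [hx, SchwartzMap.fourier_coe]
    have e2 : ∫ x, φ x • (h3.toLp (𝓕 H)) x = ∫ x, φ x • 𝓕 H x := by
      refine integral_congr_ae ?_
      filter_upwards [h3.coeFn_toLp] with x hx
      rw [hx]
    rw [e1, e2]
    have := VectorFourier.integral_fourierIntegral_smul_eq_flip (L := innerₗ ℝ) (μ := volume) (ν := volume)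
      Real.continuous_fourierChar continuous_inner φ.integrable h1
    rw [flip_innerₗ] at this
    exact this
  have hn := Lp.norm_fourier_eq (h2.toLp H)
  rw [key] at hn
  have n1 : ∀ f : Lp ℂ 2 (volume : Measure ℝ), ‖f‖^2 = ∫ x, ‖f x‖^2 := by
    intro f
    have h := @L2.inner_def ℝ ℂ ℂ _ _ _ _ _ f f
    have h' : (inner ℂ f f : ℂ) = ((‖f‖^2 : ℝ) : ℂ) := by
      rw [inner_self_eq_norm_sq_to_K]; simp
    have h'' : ∫ a, inner ℂ (f a) (f a) = ((∫ a, ‖f a‖^2 : ℝ) : ℂ) := by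
      rw [← integral_complex_ofReal]
      refine integral_congr_ae (Eventually.of_forall fun a => ?_)
      simp only
      rw [inner_self_eq_norm_sq_to_K]; simp
    rw [h', h''] at h
    exact_mod_cast h
  have n2 := n1 (h2.toLp H)
  have n3 := n1 (h3.toLp (𝓕 H))
  rw [hn] at n3
  have m2 : ∫ x, ‖(h2.toLp H) x‖^2 = ∫ x, ‖H x‖^2 := by
    refine integral_congr_ae ?_
    filter_upwards [h2.coeFn_toLp] with x hx
    rw [hx]
  have m3 : ∫ x, ‖(h3.toLp (𝓕 H)) x‖^2 = ∫ x, ‖𝓕 H x‖^2 := by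
    refine integral_congr_ae ?_
    filter_upwards [h3.coeFn_toLp] with x hx
    rw [hx]
  rw [← m2, ← m3, ← n2, ← n3]

lemma WK_fourier (ξ : ℝ) : 𝓕 (fun x : ℝ => cexp (-(|x| : ℝ) - ((3/4:ℝ):ℂ) * x)) ξ =
    2 / (1 - (((3/4:ℝ):ℂ) + ((2 * Real.pi * ξ : ℝ) : ℂ) * I)^2) ∧
    Integrable (fun x : ℝ => cexp (-(|x| : ℝ) - ((3/4:ℝ):ℂ) * x)) := by
  set z : ℂ := ((3/4:ℝ):ℂ) + ((2 * Real.pi * ξ : ℝ) : ℂ) * I with hz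
  have hzre : z.re = 3/4 := by simp [hz]
  have hI : ∀ z : ℂ, z.re = 3/4 → IntegrableOn (fun x : ℝ => cexp (-(|x| : ℝ) - z * x)) (Iic 0) ∧
      IntegrableOn (fun x : ℝ => cexp (-(|x| : ℝ) - z * x)) (Ioi 0) ∧
      (∫ x in Iic (0:ℝ), cexp (-(|x| : ℝ) - z * x)) = 1 / (1 - z) ∧
      (∫ x in Ioi (0:ℝ), cexp (-(|x| : ℝ) - z * x)) = 1 / (1 + z) := by
    intro z hzre
    have a1 : EqOn (fun x : ℝ => cexp ((1 - z) * x)) (fun x : ℝ => cexp (-(|x| : ℝ) - z * x)) (Iic 0) := by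
      intro x hx
      simp only
      rw [abs_of_nonpos hx]; congr 1; push_cast; ring
    have a2 : EqOn (fun x : ℝ => cexp (-(1 + z) * x)) (fun x : ℝ => cexp (-(|x| : ℝ) - z * x)) (Ioi 0) := by
      intro x hx
      simp only
      rw [abs_of_pos hx]; congr 1; push_cast; ring
    refine ⟨(integrableOn_exp_mul_complex_Iic (by simp [hzre]; norm_num) 0).congr_fun a1 measurableSet_Iic,
      (integrableOn_exp_mul_complex_Ioi (by simp [hzre]; norm_num) 0).congr_fun a2 measurableSet_Ioi, ?_, ?_⟩
    · rw [← setIntegral_congr_fun measurableSet_Iic a1, integral_exp_mul_complex_Iic (by simp [hzre]; norm_num)]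
      simp
    · rw [← setIntegral_congr_fun measurableSet_Ioi a2, integral_exp_mul_complex_Ioi (by simp [hzre]; norm_num)]
      have h9 : -(1 + z) ≠ 0 := by
        intro h; have := congrArg re h; simp [hzre] at this; norm_num at this
      have h8 : 1 + z ≠ 0 := by
        intro h; apply h9; rw [h]; simp
      simp only [ofReal_zero, mul_zero, Complex.exp_zero]
      rw [div_neg, neg_div, neg_neg]
  have hglue : ∀ z : ℂ, z.re = 3/4 → Integrable (fun x : ℝ => cexp (-(|x| : ℝ) - z * x)) := by
    intro z hz
    obtain ⟨i1, i2, -, -⟩ := hI z hz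
    rw [← integrableOn_univ, ← Iic_union_Ioi (a := (0:ℝ))]
    exact i1.union i2
  constructor
  · rw [Real.fourier_real_eq_integral_exp_smul]
    obtain ⟨i1, i2, v1, v2⟩ := hI z hzre
    have : ∀ v : ℝ, cexp (((-2 * Real.pi * v * ξ : ℝ) : ℂ) * I) • cexp (-(|v| : ℝ) - ((3/4:ℝ):ℂ) * v) =
        cexp (-(|v| : ℝ) - z * v) := by
      intro v
      rw [smul_eq_mul, ← Complex.exp_add]
      congr 1
      simp only [hz]; push_cast; ring
    simp_rw [this]
    rw [← integral_add_compl measurableSet_Iic (hglue z hzre), compl_Iic, v1, v2]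
    have h1 : 1 - z ≠ 0 := by
      intro h; have := congrArg re h; simp [hzre] at this; norm_num at this
    have h2 : 1 + z ≠ 0 := by
      intro h; have := congrArg re h; simp [hzre] at this; norm_num at this
    have h3 : 1 - z^2 ≠ 0 := by
      rw [show 1 - z^2 = (1 - z) * (1 + z) by ring]; exact mul_ne_zero h1 h2
    field_simp
    ring
  · exact hglue _ (by simp)

lemma W_int : Integrable (fun τ : ℝ => (2:ℂ) / (1 - (((3/4:ℝ):ℂ) + (τ:ℂ) * I)^2)) := by
  have hden : ∀ τ : ℝ, 7/16 * (1 + τ^2) ≤ ‖1 - (((3/4:ℝ):ℂ) + (τ:ℂ) * I)^2‖ := fun τ =>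
    den1 (re_line _ _) (im_line _ _) (by norm_num)
  refine (integrable_inv_one_add_sq.const_mul (2 / (7/16))).mono' (Continuous.aestronglyMeasurable ?_)
    (Eventually.of_forall fun τ => ?_)
  · refine Continuous.div (by fun_prop) (by fun_prop) fun τ => ne_zero_of_le_norm (by norm_num) (hden τ)
  · rw [norm_div]
    calc _ ≤ (2:ℝ) / (7/16 * (1 + τ^2)) := by
          rw [show ‖(2:ℂ)‖ = 2 by simp]
          exact div_le_div_of_nonneg_left (by norm_num) (by positivity) (hden τ)
      _ = _ := by field_simp

lemma W_inv (x : ℝ) : (∫ τ : ℝ, (2:ℂ) / (1 - (((3/4:ℝ):ℂ) + (τ:ℂ) * I)^2) * cexp ((((3/4:ℝ):ℂ) + τ * I) * x))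
    = ((2 * Real.pi * Real.exp (-|x|) : ℝ) : ℂ) := by
  set K : ℝ → ℂ := fun x : ℝ => cexp (-(|x| : ℝ) - ((3/4:ℝ):ℂ) * x) with hK
  set G : ℝ → ℂ := fun τ => 2 / (1 - (((3/4:ℝ):ℂ) + (τ:ℂ) * I)^2) * cexp ((((3/4:ℝ):ℂ) + τ * I) * x) with hG
  have hKi : Integrable K := (WK_fourier 0).2
  have hKc : Continuous K := by simp only [hK]; fun_prop
  have hF : 𝓕 K = fun ξ : ℝ => (2:ℂ) / (1 - (((3/4:ℝ):ℂ) + ((2 * Real.pi * ξ : ℝ) : ℂ) * I)^2) := by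
    ext ξ; exact (WK_fourier ξ).1
  have hFi : Integrable (𝓕 K) := by
    rw [hF]
    exact W_int.comp_mul_left' (by positivity : (2 * Real.pi) ≠ 0)
  have hinv := congrFun (hKc.fourierInv_fourier_eq hKi hFi) x
  rw [Real.fourierInv_eq'] at hinv
  simp only [hF] at hinv
  have e1 : ∀ ξ : ℝ, cexp ((((3/4:ℝ):ℂ)) * x) * (cexp (((2 * Real.pi * inner ℝ ξ x : ℝ) : ℂ) * I) •
      ((2:ℂ) / (1 - (((3/4:ℝ):ℂ) + ((2 * Real.pi * ξ : ℝ) : ℂ) * I)^2))) = G ((2 * Real.pi) * ξ) := by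
    intro ξ
    simp only [hG, smul_eq_mul]
    rw [← mul_assoc, ← Complex.exp_add, mul_comm]
    congr 2
    simp
    ring
  have e2 : ∫ ξ : ℝ, G ((2 * Real.pi) * ξ) = cexp ((((3/4:ℝ):ℂ)) * x) * K x := by
    rw [← hinv, ← integral_const_mul]
    exact integral_congr_ae (Eventually.of_forall fun ξ => (e1 ξ).symm)
  rw [Measure.integral_comp_mul_left] at e2
  have e3 : cexp ((((3/4:ℝ):ℂ)) * x) * K x = Real.exp (-|x|) := by
    simp only [hK]
    rw [← Complex.exp_add]; push_cast; congr 1; ring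
  rw [e3, abs_of_pos (by positivity), inv_smul_eq_iff₀ (by positivity)] at e2
  change ∫ τ, G τ = _
  rw [e2, real_smul]; push_cast; ring

lemma G1_prod (μ : Measure ℝ) [IsFiniteMeasure μ] (U t : ℝ) :
    Integrable (Function.uncurry fun (τ v : ℝ) => cexp (-((τ + t) * v) * I) *
      ((2 / (1 - (((3/4:ℝ):ℂ) + τ * I)^2)) * cexp ((((3/4:ℝ):ℂ) + τ * I) * U))) (volume.prod μ) := by
  have h1 : Integrable (fun p : ℝ × ℝ => ((2:ℂ) / (1 - (((3/4:ℝ):ℂ) + (p.1:ℂ) * I)^2)) * (1:ℂ)) (volume.prod μ) :=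
    W_int.mul_prod (integrable_const (1:ℂ))
  have h2 : Integrable (fun p : ℝ × ℝ => (cexp (-((p.1 + t) * p.2) * I) * cexp ((((3/4:ℝ):ℂ) + p.1 * I) * U)) *
      (((2:ℂ) / (1 - (((3/4:ℝ):ℂ) + (p.1:ℂ) * I)^2)) * (1:ℂ))) (volume.prod μ) := by
    refine h1.bdd_mul (c := Real.exp (3/4 * U)) (Continuous.aestronglyMeasurable (by fun_prop)) (Eventually.of_forall fun p => ?_)
    rw [norm_mul, Complex.norm_exp, Complex.norm_exp]
    simp
  refine h2.congr (Eventually.of_forall fun p => ?_)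
  simp only [Function.uncurry]
  ring

/-- Generic inversion against a finite measure. -/
lemma G1 (μ : Measure ℝ) [IsFiniteMeasure μ] (U t : ℝ) :
    Integrable (fun τ : ℝ => (∫ v, cexp (-((τ + t) * v) * I) ∂μ) * (2 / (1 - (((3/4:ℝ):ℂ) + τ * I)^2)) *
      cexp ((((3/4:ℝ):ℂ) + τ * I) * U)) ∧ (∫ τ : ℝ, (∫ v, cexp (-((τ + t) * v) * I) ∂μ) * (2 / (1 - (((3/4:ℝ):ℂ) + τ * I)^2)) *
      cexp ((((3/4:ℝ):ℂ) + τ * I) * U)) =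
    2 * Real.pi * ∫ v, cexp (-(t * v) * I) * (Real.exp (3/4 * v - |v - U|) : ℂ) ∂μ := by
  have e1 : ∀ τ : ℝ, (∫ v, cexp (-((τ + t) * v) * I) ∂μ) * (2 / (1 - (((3/4:ℝ):ℂ) + τ * I)^2)) *
      cexp ((((3/4:ℝ):ℂ) + τ * I) * U) =
      ∫ v, cexp (-((τ + t) * v) * I) * ((2 / (1 - (((3/4:ℝ):ℂ) + τ * I)^2)) * cexp ((((3/4:ℝ):ℂ) + τ * I) * U)) ∂μ := by
    intro τ; rw [integral_mul_const, mul_assoc]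
  simp_rw [e1]
  refine ⟨(G1_prod μ U t).integral_prod_left, ?_⟩
  rw [integral_integral_swap (G1_prod μ U t)]
  · rw [← integral_const_mul]
    refine integral_congr_ae (Eventually.of_forall fun v => ?_)
    simp only
    have h := W_inv (U - v)
    have e2 : ∀ τ : ℝ, cexp (-((τ + t) * v) * I) * ((2 / (1 - (((3/4:ℝ):ℂ) + τ * I)^2)) * cexp ((((3/4:ℝ):ℂ) + τ * I) * U))
      = (cexp (-(t * v) * I) * Real.exp (3/4 * v)) * ((2:ℂ) / (1 - (((3/4:ℝ):ℂ) + (τ:ℂ) * I)^2) * cexp ((((3/4:ℝ):ℂ) + τ * I) * ((U - v : ℝ) : ℂ))) := by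
      intro τ
      have : cexp (-((τ + t) * v) * I) * cexp ((((3/4:ℝ):ℂ) + τ * I) * U) =
        (cexp (-(t * v) * I) * Real.exp (3/4 * v)) * cexp ((((3/4:ℝ):ℂ) + τ * I) * ((U - v : ℝ) : ℂ)) := by
        rw [ofReal_exp, ← Complex.exp_add, ← Complex.exp_add, ← Complex.exp_add]
        congr 1; push_cast; ring
      linear_combination (2 / (1 - (((3/4:ℝ):ℂ) + τ * I)^2)) * this
    simp_rw [e2]
    rw [integral_const_mul, h, sub_eq_add_neg (3/4 * v), Real.exp_add, abs_sub_comm]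
    push_cast; ring

end SV

end

section

open Complex Metric Set Filter Topology MeasureTheory ComplexConjugate

namespace SV

noncomputable def w (n : ℕ) : ℝ := ArithmeticFunction.vonMangoldt n * (n:ℝ) ^ (-(5/4) : ℝ)

lemma w_nonneg (n : ℕ) : 0 ≤ w n := mul_nonneg ArithmeticFunction.vonMangoldt_nonneg (by positivity)

noncomputable def mu1 : Measure ℝ :=
  Measure.sum (fun n : ℕ => ENNReal.ofReal (w n) • Measure.dirac (Real.log n))

noncomputable def mu2 : Measure ℝ :=
  (volume.restrict (Ioi 0)).withDensity (fun v => ENNReal.ofReal (Real.exp (-v/4)))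

lemma term_eq (y : ℝ) (n : ℕ) : LSeries.term (fun n => (ArithmeticFunction.vonMangoldt n : ℂ))
    (((5/4:ℝ):ℂ) + y * I) n = (w n : ℂ) * cexp (-(y * Real.log n) * I) := by
  rcases Nat.eq_zero_or_pos n with rfl | hn
  · simp [w]
  rw [LSeries.term_of_ne_zero hn.ne']
  have hn' : (n:ℂ) ≠ 0 := by exact_mod_cast hn.ne'
  have hn'' : (0:ℝ) < n := by exact_mod_cast hn
  unfold w
  rw [div_eq_mul_inv, ← cpow_neg, ofReal_mul, ofReal_cpow hn''.le, mul_assoc]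
  congr 1
  rw [ofReal_natCast, cpow_def_of_ne_zero hn', cpow_def_of_ne_zero hn', ← Complex.exp_add]
  congr 1
  rw [← Complex.natCast_log]
  push_cast
  ring

lemma w_summable : Summable w := by
  have h := ArithmeticFunction.LSeriesSummable_vonMangoldt (s := ((5/4:ℝ):ℂ) + (0:ℝ) * I) (by simp; norm_num)
  unfold LSeriesSummable at h
  have h2 : ∀ n, LSeries.term (fun n => (ArithmeticFunction.vonMangoldt n : ℂ)) (((5/4:ℝ):ℂ) + (0:ℝ) * I) n = (w n : ℂ) := by
    intro n; rw [term_eq]; simp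
  have h3 := h.congr (fun n => h2 n)
  exact Complex.summable_ofReal.1 h3

instance : IsFiniteMeasure mu1 := by
  constructor
  unfold mu1
  rw [Measure.sum_apply _ MeasurableSet.univ]
  simp only [Measure.smul_apply, measure_univ, smul_eq_mul, mul_one]
  exact w_summable.tsum_ofReal_lt_top

lemma mu2_aux : IntegrableOn (fun v : ℝ => Real.exp (-v/4)) (Ioi 0) := by
  have := integrableOn_exp_mul_Ioi (a := -(1/4)) (by norm_num) 0
  refine this.congr_fun (fun v _ => ?_) measurableSet_Ioi
  simp only; congr 1; ring

instance : IsFiniteMeasure mu2 := by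
  unfold mu2
  exact isFiniteMeasure_withDensity_ofReal mu2_aux.2

lemma mu1_int {E : Type*} [NormedAddCommGroup E] [NormedSpace ℝ E] [CompleteSpace E] {F : ℝ → E}
    (hF : Integrable F mu1) : HasSum (fun n => w n • F (Real.log n)) (∫ v, F v ∂mu1) := by
  have h := hasSum_integral_measure (f := F) hF
  have e : (fun n : ℕ => w n • F (Real.log n)) =
      fun n : ℕ => ∫ v, F v ∂(ENNReal.ofReal (w n) • Measure.dirac (Real.log n)) := by
    ext n
    rw [integral_smul_measure, integral_dirac, ENNReal.toReal_ofReal (w_nonneg n)]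
  rw [e]
  exact h

lemma mu2_int {E : Type*} [NormedAddCommGroup E] [NormedSpace ℝ E] (F : ℝ → E) :
    ∫ v, F v ∂mu2 = ∫ v in Ioi (0:ℝ), Real.exp (-v/4) • F v := by
  unfold mu2
  rw [integral_withDensity_eq_integral_toReal_smul (by fun_prop) (by simp)]
  refine integral_congr_ae (Eventually.of_forall fun v => ?_)
  simp only
  rw [ENNReal.toReal_ofReal (Real.exp_pos _).le]

lemma int_char (μ : Measure ℝ) [IsFiniteMeasure μ] (y : ℝ) : Integrable (fun v : ℝ => cexp (-(y * v) * I)) μ := by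
  refine (integrable_const (1:ℝ)).mono' (Continuous.aestronglyMeasurable (by fun_prop)) (Eventually.of_forall fun v => ?_)
  rw [Complex.norm_exp]; simp

lemma mu1_char (y : ℝ) : ∫ v, cexp (-(y * v) * I) ∂mu1 =
    - deriv riemannZeta (((5/4:ℝ):ℂ) + y * I) / riemannZeta (((5/4:ℝ):ℂ) + y * I) := by
  rw [← ArithmeticFunction.LSeries_vonMangoldt_eq_deriv_riemannZeta_div (by simp; norm_num)]
  rw [← (mu1_int (int_char mu1 y)).tsum_eq]
  unfold LSeries
  refine tsum_congr fun n => ?_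
  rw [term_eq, real_smul]

lemma mu2_char (y : ℝ) : ∫ v, cexp (-(y * v) * I) ∂mu2 = 1 / (((1/4:ℝ):ℂ) + y * I) := by
  rw [mu2_int]
  have : ∀ v : ℝ, Real.exp (-v/4) • cexp (-(y * v) * I) = cexp (-(((1/4:ℝ):ℂ) + y * I) * v) := by
    intro v
    rw [real_smul, ofReal_exp, ← Complex.exp_add]; congr 1; push_cast; ring
  simp_rw [this]
  rw [integral_exp_mul_complex_Ioi (by simp)]
  simp only [ofReal_zero, mul_zero, Complex.exp_zero]
  rw [div_neg, neg_div, neg_neg]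

lemma G2 (hRH : RiemannHypothesis) (y : ℝ) : D0 (((3/4:ℝ):ℂ) + y * I) =
    (∫ v, cexp (-(y * v) * I) ∂mu1) - ∫ v, cexp (-(y * v) * I) ∂mu2 := by
  rw [mu1_char, mu2_char]
  unfold D0
  set s : ℂ := ((5/4:ℝ):ℂ) + y * I with hs
  have e1 : (1/2 + (((3/4:ℝ):ℂ) + y * I)) = s := by rw [hs]; push_cast; ring
  have e2 : ((1/4:ℝ):ℂ) + y * I = s - 1 := by rw [hs]; push_cast; ring
  rw [e1, e2]
  have hs1 : s ≠ 1 := by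
    intro h; have := congrArg re h; simp [hs] at this; norm_num at this
  have hz : riemannZeta₁ s ≠ 0 := zeta1_ne_zero hRH (by simp [hs]; norm_num)
  rw [deriv_riemannZeta_eq_neg_inv_sub_sq_mul_add hs1, riemannZeta_eq_inv_sub_mul hs1]
  have : s - 1 ≠ 0 := sub_ne_zero.2 hs1
  field_simp
  ring

noncomputable def b (U v : ℝ) : ℝ := Real.exp (3/4 * v - |v - U|)

lemma b_pos (U v : ℝ) : 0 < b U v := Real.exp_pos _

lemma b_le (U v : ℝ) : b U v ≤ Real.exp (3/4 * U) := by
  unfold b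
  apply Real.exp_le_exp.2
  have := le_abs_self (v - U)
  have := abs_nonneg (v - U)
  linarith

lemma b_cont (U : ℝ) : Continuous (b U) := by unfold b; fun_prop

noncomputable def Sm (μ : Measure ℝ) (U t : ℝ) : ℂ := ∫ v, cexp (-(t * v) * I) * (b U v : ℂ) ∂μ

lemma S_bound (hRH : RiemannHypothesis) : ∃ C : ℝ, 0 < C ∧ ∀ U : ℝ, 0 ≤ U → ∀ t : ℝ,
    ‖Sm mu1 U t - Sm mu2 U t‖ ≤ C * ell t := by
  obtain ⟨C, hC, h⟩ := I_bound hRH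
  refine ⟨C, hC, fun U hU t => ?_⟩
  have h1 := G1 mu1 U t
  have h2 := G1 mu2 U t
  have e : (∫ τ : ℝ, D0 (((3/4:ℝ):ℂ) + τ * I + t * I) * (2 / (1 - (((3/4:ℝ):ℂ) + τ * I)^2)) *
      cexp ((((3/4:ℝ):ℂ) + τ * I) * U)) = 2 * Real.pi * (Sm mu1 U t - Sm mu2 U t) := by
    rw [mul_sub]
    unfold Sm b
    rw [← h1.2, ← h2.2, ← integral_sub h1.1 h2.1]
    refine integral_congr_ae (Eventually.of_forall fun τ => ?_)
    simp only
    have := G2 hRH (τ + t)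
    push_cast at this
    rw [← sub_mul, ← sub_mul, ← this]
    congr 3
    push_cast; ring
  have h3 := h U hU t
  rw [e, norm_mul, norm_mul] at h3
  have h4 : ‖(Real.pi:ℂ)‖ = Real.pi := by simp [Real.pi_pos.le]
  rw [h4] at h3
  simp only [Complex.norm_ofNat] at h3
  have := Real.pi_gt_three
  nlinarith [norm_nonneg (Sm mu1 U t - Sm mu2 U t)]

end SV

end

section

open Complex Metric Set Filter Topology MeasureTheory ComplexConjugate FourierTransform

namespace SV

noncomputable def kk (η r : ℝ) : ℝ := (Ioc 0 η).indicator (fun r => Real.exp (-r/2)) r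

lemma kk_meas (η : ℝ) : Measurable (kk η) := by
  unfold kk
  exact Measurable.indicator (by fun_prop) measurableSet_Ioc

lemma kk_nonneg (η r : ℝ) : 0 ≤ kk η r := by
  unfold kk
  exact indicator_nonneg (fun _ _ => (Real.exp_pos _).le) _

lemma kk_le (η r : ℝ) : kk η r ≤ 1 := by
  unfold kk indicator
  split_ifs with h
  · rw [Real.exp_le_one_iff]; linarith [h.1]
  · norm_num

lemma kk_int (η : ℝ) : Integrable (kk η) := by
  have : IntegrableOn (fun r : ℝ => Real.exp (-r/2)) (Ioc 0 η) :=
    (Continuous.integrableOn_Icc (by fun_prop)).mono_set Ioc_subset_Icc_self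
  have h := this.integrable_indicator measurableSet_Ioc
  exact h

noncomputable def khat (η t : ℝ) : ℂ := ∫ r : ℝ, cexp ((t * r) * I) * (kk η r : ℂ)

lemma khat_eq {η : ℝ} (hη : 0 ≤ η) (t : ℝ) : khat η t = ∫ r in (0:ℝ)..η, cexp ((t * I - 1/2) * r) := by
  rw [intervalIntegral.integral_of_le hη, ← integral_indicator measurableSet_Ioc]
  unfold khat
  refine integral_congr_ae (Eventually.of_forall fun r => ?_)
  simp only [kk, indicator]
  split_ifs
  · rw [ofReal_exp, ← Complex.exp_add]; congr 1; push_cast; ring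
  · simp

lemma khat_le1 {η : ℝ} (hη : 0 ≤ η) (t : ℝ) : ‖khat η t‖ ≤ η := by
  rw [khat_eq hη]
  have := intervalIntegral.norm_integral_le_of_norm_le_const (a := 0) (b := η) (C := 1)
    (f := fun r : ℝ => cexp ((t * I - 1/2) * r)) ?_
  · simpa [abs_of_nonneg hη] using this
  · intro r hr
    rw [uIoc_of_le hη] at hr
    rw [Complex.norm_exp, Real.exp_le_one_iff]
    simp
    linarith [hr.1]

lemma khat_le2 {η : ℝ} (hη : 0 ≤ η) {t : ℝ} : ‖khat η t‖ * |t| ≤ 2 := by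
  rw [khat_eq hη]
  have hc : (t * I - 1/2 : ℂ) ≠ 0 := by
    intro h; have := congrArg re h; simp at this
  rw [integral_exp_mul_complex hc, norm_div]
  have h1 : |t| ≤ ‖(t * I - 1/2 : ℂ)‖ := by
    have := abs_im_le_norm (t * I - 1/2 : ℂ)
    simpa using this
  have h2 : ‖cexp ((t * I - 1/2) * η) - cexp ((t * I - 1/2) * (0:ℝ))‖ ≤ 2 := by
    refine (norm_sub_le _ _).trans ?_
    rw [Complex.norm_exp, Complex.norm_exp]
    have : Real.exp (((t * I - 1/2 : ℂ) * η).re) ≤ 1 := by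
      rw [Real.exp_le_one_iff]; simp; linarith
    have h3 : Real.exp (((t * I - 1/2 : ℂ) * (0:ℝ)).re) ≤ 1 := by simp
    linarith
  have h3 : 0 < ‖(t * I - 1/2 : ℂ)‖ := norm_pos_iff.2 hc
  rw [div_mul_eq_mul_div, div_le_iff₀ h3]
  nlinarith [abs_nonneg t, norm_nonneg (cexp ((t * I - 1/2) * η) - cexp ((t * I - 1/2) * (0:ℝ)))]

lemma khat_sq {η : ℝ} (hη : 0 ≤ η) (t : ℝ) : ‖khat η t‖^2 ≤ 5 * η^2 * (1 + (η * t)^2)⁻¹ := by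
  rw [← div_eq_mul_inv, le_div_iff₀ (by positivity)]
  have h1 := khat_le1 hη t
  have h2 := khat_le2 hη (t := t)
  have h3 : ‖khat η t‖^2 ≤ η^2 := by gcongr
  have h4 : (‖khat η t‖ * |t|)^2 ≤ 2^2 := by gcongr
  rw [mul_pow, sq_abs] at h4
  nlinarith [sq_nonneg η]

lemma prod_int (μ : Measure ℝ) [IsFiniteMeasure μ] (η U : ℝ) :
    Integrable (fun p : ℝ × ℝ => ((kk η (p.2 - p.1) * b U p.2 : ℝ) : ℂ)) (volume.prod μ) := by
  have hm : Measurable (fun p : ℝ × ℝ => kk η (p.2 - p.1) * b U p.2) :=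
    ((kk_meas η).comp (by fun_prop)).mul ((b_cont U).measurable.comp (by fun_prop))
  suffices h : Integrable (fun p : ℝ × ℝ => kk η (p.2 - p.1) * b U p.2) (volume.prod μ) from h.ofReal
  rw [integrable_prod_iff' hm.aestronglyMeasurable]
  constructor
  · refine Eventually.of_forall fun v => ?_
    exact ((kk_int η).comp_sub_left v).mul_const (b U v)
  · have : ∀ v, ∫ u, ‖kk η (v - u) * b U v‖ = (∫ u, kk η u) * b U v := by
      intro v
      rw [← integral_sub_left_eq_self (kk η) volume v, ← integral_mul_const]
      refine integral_congr_ae (Eventually.of_forall fun u => ?_)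
      simp only
      rw [Real.norm_of_nonneg (mul_nonneg (kk_nonneg _ _) (b_pos _ _).le)]
    simp only [this]
    refine Integrable.const_mul ?_ _
    refine (integrable_const (Real.exp (3/4 * U))).mono' (b_cont U).aestronglyMeasurable (Eventually.of_forall fun v => ?_)
    rw [Real.norm_of_nonneg (b_pos _ _).le]
    exact b_le U v

noncomputable def Hm (μ : Measure ℝ) (η U u : ℝ) : ℂ := ∫ v, ((kk η (v - u) * b U v : ℝ) : ℂ) ∂μ

lemma Hm_int (μ : Measure ℝ) [IsFiniteMeasure μ] (η U : ℝ) : Integrable (Hm μ η U) :=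
  (prod_int μ η U).integral_prod_left

lemma kb_int (μ : Measure ℝ) [IsFiniteMeasure μ] (η U u : ℝ) :
    Integrable (fun v => kk η (v - u) * b U v) μ := by
  refine (integrable_const (Real.exp (3/4 * U))).mono' ?_ (Eventually.of_forall fun v => ?_)
  · exact (((kk_meas η).comp (by fun_prop)).mul (b_cont U).measurable).aestronglyMeasurable
  · rw [Real.norm_of_nonneg (mul_nonneg (kk_nonneg _ _) (b_pos _ _).le)]
    nlinarith [b_le U v, kk_nonneg η (v - u), kk_le η (v - u), b_pos U v]

lemma Hm_bdd (μ : Measure ℝ) [IsFiniteMeasure μ] (η U u : ℝ) :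
    ‖Hm μ η U u‖ ≤ Real.exp (3/4 * U) * μ.real univ := by
  refine norm_integral_le_of_norm_le_const (Eventually.of_forall fun v => ?_)
  rw [norm_real, Real.norm_of_nonneg (mul_nonneg (kk_nonneg _ _) (b_pos _ _).le)]
  nlinarith [b_le U v, kk_nonneg η (v - u), kk_le η (v - u), b_pos U v]

lemma Hm_fourier (μ : Measure ℝ) [IsFiniteMeasure μ] (η U ξ : ℝ) :
    𝓕 (Hm μ η U) ξ = Sm μ U (2 * Real.pi * ξ) * khat η (2 * Real.pi * ξ) := by
  rw [Real.fourier_real_eq_integral_exp_smul]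
  have e1 : ∀ u : ℝ, cexp (((-2 * Real.pi * u * ξ : ℝ) : ℂ) * I) • Hm μ η U u =
      ∫ v, cexp (((-2 * Real.pi * u * ξ : ℝ) : ℂ) * I) * ((kk η (v - u) * b U v : ℝ) : ℂ) ∂μ := by
    intro u
    rw [smul_eq_mul, Hm, integral_const_mul]
  simp_rw [e1]
  rw [integral_integral_swap]
  · unfold Sm
    rw [← integral_mul_const]
    refine integral_congr_ae (Eventually.of_forall fun v => ?_)
    simp only
    unfold khat
    rw [← integral_const_mul, ← integral_sub_left_eq_self _ volume v]
    refine integral_congr_ae (Eventually.of_forall fun u => ?_)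
    simp only
    have : cexp (((-2 * Real.pi * (v - u) * ξ : ℝ) : ℂ) * I) = cexp (-(((2 * Real.pi * ξ : ℝ):ℂ) * v) * I) *
        cexp ((((2 * Real.pi * ξ : ℝ):ℂ) * (u:ℂ)) * I) := by
      rw [← Complex.exp_add]; congr 1; push_cast; ring
    rw [this, sub_sub_cancel]
    push_cast; ring
  · refine (prod_int μ η U).bdd_mul (c := 1) (Continuous.aestronglyMeasurable (by fun_prop)) (Eventually.of_forall fun p => ?_)
    rw [Complex.norm_exp]
    simp

noncomputable def HH (η U u : ℝ) : ℂ := Hm mu1 η U u - Hm mu2 η U u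

lemma HH_int (η U : ℝ) : Integrable (HH η U) := (Hm_int _ _ _).sub (Hm_int _ _ _)

lemma HH_L2 (η U : ℝ) : MemLp (HH η U) 2 := by
  have h := HH_int η U
  rw [memLp_two_iff_integrable_sq_norm h.aestronglyMeasurable]
  set M := Real.exp (3/4 * U) * mu1.real univ + Real.exp (3/4 * U) * mu2.real univ with hM
  refine (h.norm.const_mul M).mono' (h.aestronglyMeasurable.norm.pow 2) (Eventually.of_forall fun u => ?_)
  have : ‖HH η U u‖ ≤ M := (norm_sub_le _ _).trans (add_le_add (Hm_bdd _ _ _ _) (Hm_bdd _ _ _ _))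
  rw [Real.norm_of_nonneg (by positivity), sq]
  exact mul_le_mul_of_nonneg_right this (norm_nonneg _)

lemma HH_fourier (η U ξ : ℝ) : 𝓕 (HH η U) ξ =
    (Sm mu1 U (2 * Real.pi * ξ) - Sm mu2 U (2 * Real.pi * ξ)) * khat η (2 * Real.pi * ξ) := by
  have h : 𝓕 (HH η U) ξ = 𝓕 (Hm mu1 η U) ξ - 𝓕 (Hm mu2 η U) ξ := by
    rw [Real.fourier_real_eq_integral_exp_smul, Real.fourier_real_eq_integral_exp_smul, Real.fourier_real_eq_integral_exp_smul,
      ← integral_sub]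
    · refine integral_congr_ae (Eventually.of_forall fun u => ?_)
      simp only [HH]; rw [smul_sub]
    all_goals
      refine (Hm_int _ _ _).bdd_mul (c := 1) (Continuous.aestronglyMeasurable (by fun_prop)) (Eventually.of_forall fun p => ?_)
      rw [Complex.norm_exp]
      simp
  rw [h, Hm_fourier, Hm_fourier, sub_mul]

lemma ell_scale {η : ℝ} (hη : 0 < η) (t : ℝ) :
    (ell t)^2 ≤ (21 * Real.log (2 + 1/η))^2 * (1 + (η*t)^2) ^ (1/4 : ℝ) := by
  set L := Real.log (2 + 1/η) with hL
  have hη' : 0 < 1/η := by positivity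
  have hL2 : 1/2 ≤ L := by
    have h1 : Real.log 2 ≤ L := Real.log_le_log (by norm_num) (by linarith)
    have := Real.log_two_gt_d9
    linarith
  set s := η * t with hs
  have hts : |t| = 1/η * |s| := by
    rw [hs, abs_mul, abs_of_pos hη]; field_simp
  have h1 : ell t ≤ Real.log ((2 + 1/η) * (2 * (1 + s^2))) := by
    unfold ell
    refine Real.log_le_log (by positivity) ?_
    have : |s| ≤ 1 + s^2 := by rw [← sq_abs]; nlinarith [abs_nonneg s]
    rw [hts]
    nlinarith [mul_le_mul_of_nonneg_left this hη'.le, sq_nonneg s, mul_nonneg hη'.le (sq_nonneg s)]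
  rw [Real.log_mul (by positivity) (by positivity), Real.log_mul (by positivity) (by positivity)] at h1
  have h2 : Real.log (1 + s^2) ≤ (1 + s^2) ^ (1/8 : ℝ) / (1/8) :=
    Real.log_le_rpow_div (by positivity) (by norm_num)
  have h3 := Real.log_two_lt_d9
  have hp : 1 ≤ (1 + s^2) ^ (1/8 : ℝ) := Real.one_le_rpow (by nlinarith) (by norm_num)
  have h4 : ell t ≤ 21 * L * (1 + s^2) ^ (1/8 : ℝ) := by nlinarith
  have h5 : (ell t)^2 ≤ (21 * L * (1 + s^2) ^ (1/8 : ℝ))^2 :=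
    pow_le_pow_left₀ (by linarith [half_le_ell t]) h4 2
  rw [mul_pow, ← Real.rpow_natCast ((1 + s^2) ^ (1/8 : ℝ)), ← Real.rpow_mul (by positivity)] at h5
  norm_num at h5 ⊢
  exact h5

lemma HH_bound (hRH : RiemannHypothesis) : ∃ C : ℝ, 0 < C ∧ ∀ U : ℝ, 0 ≤ U → ∀ η : ℝ, 0 < η →
    ∫ u, ‖HH η U u‖^2 ≤ C * η * (Real.log (2 + 1/η))^2 := by
  obtain ⟨C, hC, hS⟩ := S_bound hRH
  have hJ := J_nonneg
  refine ⟨C^2 * 441 * 5 * (J + 1), by positivity, fun U hU η hη => ?_⟩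
  set L := Real.log (2 + 1/η) with hL
  set a : ℝ := η * (2 * Real.pi) with ha
  have ha0 : 0 < a := by positivity
  have hb : ∀ ξ, ‖𝓕 (HH η U) ξ‖^2 ≤ C^2 * 441 * 5 * L^2 * η^2 * (1 + (a * ξ)^2) ^ (-(3/4) : ℝ) := by
    intro ξ
    rw [HH_fourier, norm_mul, mul_pow]
    set t := 2 * Real.pi * ξ with ht
    have e : a * ξ = η * t := by rw [ha, ht]; ring
    rw [e]
    have h1 : ‖Sm mu1 U t - Sm mu2 U t‖^2 ≤ C^2 * ((21 * L)^2 * (1 + (η*t)^2) ^ (1/4 : ℝ)) := by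
      calc _ ≤ (C * ell t)^2 := pow_le_pow_left₀ (norm_nonneg _) (hS U hU t) 2
        _ = C^2 * (ell t)^2 := by ring
        _ ≤ _ := by
          have := ell_scale hη t
          gcongr
    have h2 := khat_sq hη.le t
    have hpos : (0:ℝ) < 1 + (η*t)^2 := by positivity
    calc _ ≤ C^2 * ((21 * L)^2 * (1 + (η*t)^2) ^ (1/4 : ℝ)) * (5 * η^2 * (1 + (η * t)^2)⁻¹) := by
          apply mul_le_mul h1 h2 (by positivity) (by positivity)
      _ = C^2 * 441 * 5 * L^2 * η^2 * ((1 + (η*t)^2) ^ (1/4 : ℝ) * (1 + (η * t)^2)⁻¹) := by ring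
      _ = _ := by
        rw [← Real.rpow_neg_one, ← Real.rpow_add hpos]; norm_num
  have hInt : Integrable (fun ξ : ℝ => C^2 * 441 * 5 * L^2 * η^2 * (1 + (a * ξ)^2) ^ (-(3/4) : ℝ)) :=
    (int_dec.comp_mul_left' ha0.ne').const_mul _
  have hcont : Continuous (𝓕 (HH η U)) :=
    VectorFourier.fourierIntegral_continuous Real.continuous_fourierChar (by exact continuous_inner) (HH_int η U)
  have h3 : MemLp (𝓕 (HH η U)) 2 := by
    rw [memLp_two_iff_integrable_sq_norm hcont.aestronglyMeasurable]
    refine hInt.mono' (by fun_prop) (Eventually.of_forall fun ξ => ?_)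
    rw [Real.norm_of_nonneg (by positivity)]
    exact hb ξ
  rw [plancherel (HH_int η U) (HH_L2 η U) h3]
  calc _ ≤ ∫ ξ : ℝ, C^2 * 441 * 5 * L^2 * η^2 * (1 + (a * ξ)^2) ^ (-(3/4) : ℝ) :=
        integral_mono ((memLp_two_iff_integrable_sq_norm hcont.aestronglyMeasurable).1 h3) hInt hb
    _ = C^2 * 441 * 5 * L^2 * η^2 * (a⁻¹ * J) := by
        rw [integral_const_mul, Measure.integral_comp_mul_left (fun x : ℝ => (1 + x^2) ^ (-(3/4) : ℝ)) a,
          abs_of_pos (by positivity), smul_eq_mul, J]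
    _ = C^2 * 441 * 5 * L^2 * η * J * (1 / (2 * Real.pi)) := by
        rw [ha]; field_simp
    _ ≤ C^2 * 441 * 5 * L^2 * η * J * 1 := by
        have : 1 / (2 * Real.pi) ≤ 1 := by
          rw [div_le_one (by positivity)]; linarith [Real.pi_gt_three]
        gcongr
    _ ≤ _ := by
        have : 0 ≤ C^2 * 441 * 5 * L^2 * η := by positivity
        nlinarith

end SV

end

section

open Complex Metric Set Filter Topology MeasureTheory ComplexConjugate

namespace SV

noncomputable def psi (x : ℝ) : ℝ := ∑ n ∈ Finset.range (⌊x⌋₊ + 1), ArithmeticFunction.vonMangoldt n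

lemma psi_sub {x y : ℝ} (hx : 0 ≤ x) (hxy : x ≤ y) : psi y - psi x =
    ∑ n ∈ Finset.range (⌊y⌋₊ + 1), if (x < n ∧ (n:ℝ) ≤ y) then ArithmeticFunction.vonMangoldt n else 0 := by
  have hy : 0 ≤ y := hx.trans hxy
  have h1 : psi x = ∑ n ∈ Finset.range (⌊y⌋₊ + 1), if (n:ℝ) ≤ x then ArithmeticFunction.vonMangoldt n else 0 := by
    rw [← Finset.sum_filter]
    unfold psi
    congr 1
    ext n
    simp only [Finset.mem_range, Finset.mem_filter, Nat.lt_succ_iff]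
    rw [Nat.le_floor_iff hx, Nat.le_floor_iff hy]
    constructor
    · intro h; exact ⟨h.trans hxy, h⟩
    · intro h; exact h.2
  rw [h1, psi, ← Finset.sum_sub_distrib]
  refine Finset.sum_congr rfl fun n hn => ?_
  rw [Finset.mem_range, Nat.lt_succ_iff, Nat.le_floor_iff hy] at hn
  by_cases h : (n:ℝ) ≤ x
  · simp [h, not_lt.2 h]
  · simp [h, not_le.1 h, hn]

lemma psi_mono : Monotone psi := by
  intro x y hxy
  unfold psi
  refine Finset.sum_le_sum_of_subset_of_nonneg (fun n hn => ?_) (fun n _ _ => ArithmeticFunction.vonMangoldt_nonneg)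
  rw [Finset.mem_range] at hn ⊢
  have := Nat.floor_mono hxy
  omega

lemma psi_meas : Measurable psi := psi_mono.measurable

lemma kb_eq {η U u v : ℝ} (hU : u + η ≤ U) : kk η (v - u) * b U v =
    if (u < v ∧ v ≤ u + η) then Real.exp (u/2 - U) * Real.exp (5/4 * v) else 0 := by
  unfold kk b indicator
  by_cases h : u < v ∧ v ≤ u + η
  · have h' : v - u ∈ Ioc 0 η := ⟨by linarith [h.1], by linarith [h.2]⟩
    rw [if_pos h', if_pos h, ← Real.exp_add, ← Real.exp_add, abs_of_nonpos (by linarith [h.2])]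
    congr 1; ring
  · have h' : ¬ (v - u ∈ Ioc 0 η) := fun h' => h ⟨by linarith [h'.1], by linarith [h'.2]⟩
    rw [if_neg h', if_neg h, zero_mul]

lemma Hm1_eval {η U u : ℝ} (hη : 0 < η) (hu : 0 ≤ u) (hU : u + η ≤ U) :
    Hm mu1 η U u = ((Real.exp (u/2 - U) * (psi (Real.exp (u + η)) - psi (Real.exp u)) : ℝ) : ℂ) := by
  unfold Hm
  rw [integral_complex_ofReal]
  congr 1
  rw [← (mu1_int (kb_int mu1 η U u)).tsum_eq]
  rw [psi_sub (Real.exp_pos _).le (Real.exp_le_exp.2 (by linarith)), Finset.mul_sum]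
  have key : ∀ n : ℕ, w n • (kk η (Real.log n - u) * b U (Real.log n)) = Real.exp (u/2 - U) *
      if (Real.exp u < n ∧ (n:ℝ) ≤ Real.exp (u + η)) then ArithmeticFunction.vonMangoldt n else 0 := by
    intro n
    rcases Nat.eq_zero_or_pos n with rfl | hn
    · simp [w]
    have hn' : (0:ℝ) < n := by exact_mod_cast hn
    rw [kb_eq hU]
    simp only [Real.lt_log_iff_exp_lt hn', Real.log_le_iff_le_exp hn']
    split_ifs
    · unfold w
      rw [smul_eq_mul, Real.rpow_def_of_pos hn']
      have : Real.exp (Real.log n * (-(5/4))) * Real.exp (5/4 * Real.log n) = 1 := by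
        rw [← Real.exp_add]; ring_nf; simp
      linear_combination (ArithmeticFunction.vonMangoldt n * Real.exp (u/2 - U)) * this
    · simp
  simp_rw [key]
  refine tsum_eq_sum fun n hn => ?_
  rw [Finset.mem_range, Nat.lt_succ_iff, Nat.le_floor_iff (Real.exp_pos _).le] at hn
  rw [if_neg (fun h => hn h.2), mul_zero]

lemma Hm2_eval {η U u : ℝ} (hη : 0 < η) (hu : 0 ≤ u) (hU : u + η ≤ U) :
    Hm mu2 η U u = ((Real.exp (u/2 - U) * (Real.exp (u + η) - Real.exp u) : ℝ) : ℂ) := by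
  unfold Hm
  rw [integral_complex_ofReal]
  congr 1
  rw [mu2_int]
  have e : ∀ v : ℝ, Real.exp (-v/4) • (kk η (v - u) * b U v) =
      (Ioc u (u + η)).indicator (fun v => Real.exp (u/2 - U) * Real.exp v) v := by
    intro v
    rw [kb_eq hU, indicator]
    simp only [mem_Ioc]
    split_ifs
    · rw [smul_eq_mul, ← Real.exp_add, ← Real.exp_add, ← Real.exp_add]; congr 1; ring
    · simp
  simp_rw [e]
  have hsub : Ioc u (u + η) ⊆ Ioi 0 := fun v hv => lt_of_le_of_lt hu hv.1
  rw [setIntegral_indicator measurableSet_Ioc, inter_eq_right.2 hsub,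
    integral_const_mul, ← intervalIntegral.integral_of_le (by linarith), integral_exp]

lemma HH_eval {η U u : ℝ} (hη : 0 < η) (hu : 0 ≤ u) (hU : u + η ≤ U) :
    ‖HH η U u‖^2 = (Real.exp U)⁻¹^2 * (Real.exp u *
      (psi (Real.exp u * Real.exp η) - psi (Real.exp u) - (Real.exp η - 1) * Real.exp u)^2) := by
  unfold HH
  rw [Hm1_eval hη hu hU, Hm2_eval hη hu hU, ← ofReal_sub, norm_real, Real.norm_eq_abs, sq_abs, ← mul_sub, mul_pow,
    ← Real.exp_neg, Real.exp_add u η]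
  have : Real.exp (u/2 - U)^2 = Real.exp (-U)^2 * Real.exp u := by
    rw [sq, sq, ← Real.exp_add, ← Real.exp_add, ← Real.exp_add]; congr 1; ring
  rw [this]; ring

noncomputable def F (x v : ℝ) : ℝ := (psi (x + v) - psi x - v)^2

noncomputable def phi2 (x v : ℝ) : ENNReal := ENNReal.ofReal (F x v)

lemma log_eta {δ : ℝ} (hδ : 0 < δ) (h3 : δ ≤ 3) :
    Real.log (1 + δ) ≤ δ ∧ Real.log (2 + 1 / Real.log (1 + δ)) ≤ 3 * Real.log (2 + 1/δ) := by
  have hd : 0 < 1/δ := by positivity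
  have hlog : 0 < Real.log (1 + δ) := Real.log_pos (by linarith)
  constructor
  · have := Real.log_le_sub_one_of_pos (show 0 < 1 + δ by linarith); linarith
  · have h1 : δ / 4 ≤ Real.log (1 + δ) := by
      have := Real.one_sub_inv_le_log_of_pos (show 0 < 1 + δ by linarith)
      refine le_trans ?_ this
      have e : 1 - (1 + δ)⁻¹ = δ / (1 + δ) := by field_simp; ring
      rw [e]
      exact div_le_div_of_nonneg_left hδ.le (by linarith) (by linarith)
    have h2 : 1 / Real.log (1 + δ) ≤ 4 * (1/δ) := by
      calc _ ≤ 1 / (δ/4) := one_div_le_one_div_of_le (by positivity) h1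
        _ = _ := by field_simp
    have h4 : 0 < 1 / Real.log (1 + δ) := by positivity
    have h5 : 2 + 1 / Real.log (1 + δ) ≤ (2 + 1/δ)^3 := by nlinarith [pow_pos hd 2, pow_pos hd 3]
    calc _ ≤ Real.log ((2 + 1/δ)^3) := Real.log_le_log (by linarith) h5
      _ = _ := by rw [Real.log_pow]; norm_num

lemma mm (hRH : RiemannHypothesis) : ∃ C : ℝ, 0 < C ∧ ∀ δ : ℝ, 0 < δ → δ ≤ 3 → ∀ Y : ℝ, 0 < Y →
    ∫⁻ x in Icc 1 Y, phi2 x (δ * x) ≤ ENNReal.ofReal (C * δ * Y^2 * (Real.log (2 + 1/δ))^2) := by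
  obtain ⟨C, hC, h⟩ := HH_bound hRH
  refine ⟨16 * C * 9, by positivity, fun δ hδ h3 Y hY0 => ?_⟩
  by_cases hY : Y < 1
  · rw [Icc_eq_empty (not_le.2 hY)]; simp
  rw [not_lt] at hY
  set η := Real.log (1 + δ) with hη
  have hηpos : 0 < η := Real.log_pos (by linarith)
  have heη : Real.exp η = 1 + δ := Real.exp_log (by linarith)
  set U := Real.log Y + η with hU
  have hlY : 0 ≤ Real.log Y := Real.log_nonneg hY
  have heU : Real.exp U = Y * (1 + δ) := by rw [hU, Real.exp_add, heη, Real.exp_log hY0]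
  have hb := h U (by positivity) η hηpos
  have hint : Integrable (fun u => ‖HH η U u‖^2) :=
    (memLp_two_iff_integrable_sq_norm (HH_int η U).aestronglyMeasurable).1 (HH_L2 η U)
  have himg : Real.exp '' (Icc 0 (Real.log Y)) = Icc 1 Y := by
    ext x
    constructor
    · rintro ⟨u, hu, rfl⟩
      refine ⟨Real.one_le_exp hu.1, ?_⟩
      rw [← Real.exp_log hY0]; exact Real.exp_le_exp.2 hu.2
    · intro hx
      have hx0 : 0 < x := by linarith [hx.1]
      exact ⟨Real.log x, ⟨Real.log_nonneg hx.1, Real.log_le_log hx0 hx.2⟩, Real.exp_log hx0⟩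
  rw [← himg, lintegral_image_eq_lintegral_abs_deriv_mul measurableSet_Icc
    (fun x _ => (Real.hasDerivAt_exp x).hasDerivWithinAt) Real.exp_injective.injOn]
  calc _ = ∫⁻ u in Icc 0 (Real.log Y), ENNReal.ofReal ((Real.exp U)^2 * ‖HH η U u‖^2) := by
        refine setLIntegral_congr_fun measurableSet_Icc fun u hu => ?_
        rw [HH_eval hηpos hu.1 (by rw [hU]; linarith [hu.2]), phi2, ← ENNReal.ofReal_mul (abs_nonneg _),
          abs_of_pos (Real.exp_pos u), F, heη]
        congr 1
        have : (Real.exp U)^2 * (Real.exp U)⁻¹^2 = 1 := by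
          rw [← mul_pow, mul_inv_cancel₀ (Real.exp_pos _).ne', one_pow]
        rw [← mul_assoc, this, one_mul]
        ring_nf
    _ ≤ ∫⁻ u, ENNReal.ofReal ((Real.exp U)^2 * ‖HH η U u‖^2) := setLIntegral_le_lintegral _ _
    _ = ENNReal.ofReal (∫ u, (Real.exp U)^2 * ‖HH η U u‖^2) :=
        (ofReal_integral_eq_lintegral_ofReal (hint.const_mul _) (Eventually.of_forall fun u => by positivity)).symm
    _ ≤ _ := by
        refine ENNReal.ofReal_le_ofReal ?_
        rw [integral_const_mul]
        obtain ⟨l1, l2⟩ := log_eta hδ h3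
        have l0 : 0 ≤ Real.log (2 + 1/η) := Real.log_nonneg (by have : 0 < 1/η := by positivity
                                                                linarith)
        calc _ ≤ (4 * Y)^2 * (C * δ * (3 * Real.log (2 + 1/δ))^2) := by
              have a1 : Real.exp U ≤ 4 * Y := by rw [heU]; nlinarith
              have a2 : C * η * Real.log (2 + 1/η)^2 ≤ C * δ * (3 * Real.log (2 + 1/δ))^2 := by gcongr
              have a3 := hb.trans a2
              gcongr
          _ = _ := by ring

end SV

end

section

open Metric Set Filter Topology MeasureTheory

namespace SV

lemma phi2_comp {α : Type*} [MeasurableSpace α] {f g : α → ℝ} (hf : Measurable f) (hg : Measurable g) :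
    Measurable (fun x => phi2 (f x) (g x)) := by
  unfold phi2 F
  have h1 : Measurable (fun x => psi (f x + g x)) := psi_meas.comp (hf.add hg)
  have h2 : Measurable (fun x => psi (f x)) := psi_meas.comp hf
  exact ENNReal.measurable_ofReal.comp (((h1.sub h2).sub hg).pow_const 2)

noncomputable def ee (x : ℝ) : ENNReal := ENNReal.ofReal ((psi x - x)^2)

lemma ee_meas : Measurable ee :=
  ENNReal.measurable_ofReal.comp ((psi_meas.sub measurable_id).pow_const 2)

noncomputable def AA (Y : ℝ) : ENNReal := ∫⁻ x in Icc 1 Y, ee x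

lemma AA_two : AA 2 ≤ ENNReal.ofReal ((psi 2 + 2)^2) := by
  unfold AA
  calc _ ≤ ∫⁻ x in Icc (1:ℝ) 2, ENNReal.ofReal ((psi 2 + 2)^2) := by
        refine setLIntegral_mono' measurableSet_Icc fun x hx => ?_
        refine ENNReal.ofReal_le_ofReal (sq_le_sq' ?_ ?_)
        · have : 0 ≤ psi x := Finset.sum_nonneg fun _ _ => ArithmeticFunction.vonMangoldt_nonneg
          have : 0 ≤ psi 2 := Finset.sum_nonneg fun _ _ => ArithmeticFunction.vonMangoldt_nonneg
          linarith [hx.2]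
        · have := psi_mono hx.2
          linarith [hx.1]
    _ = _ := by
        rw [setLIntegral_const, Real.volume_Icc]; norm_num

lemma ee_two (x : ℝ) : ee (2 * x) ≤ ENNReal.ofReal (3/2) * ee x + ENNReal.ofReal 3 * phi2 x (1 * x) := by
  unfold ee phi2 F
  rw [← ENNReal.ofReal_mul (by norm_num), ← ENNReal.ofReal_mul (by norm_num),
    ← ENNReal.ofReal_add (by positivity) (by positivity)]
  refine ENNReal.ofReal_le_ofReal ?_
  rw [show x + 1 * x = 2 * x by ring]
  nlinarith [sq_nonneg ((psi x - x) - 2 * (psi (2*x) - psi x - 1 * x))]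

lemma AA_step {C Z : ℝ} (hC : 0 ≤ C) (hZ : 1 ≤ Z)
    (h : ∫⁻ x in Icc 1 Z, phi2 x (1 * x) ≤ ENNReal.ofReal (C * Z^2)) :
    AA (2 * Z) ≤ AA 2 + (ENNReal.ofReal 3 * AA Z + ENNReal.ofReal (6 * C * Z^2)) := by
  have hsub : Icc 1 (2 * Z) ⊆ Icc 1 2 ∪ Icc 2 (2 * Z) := by
    intro x hx
    rcases le_total x 2 with h | h
    · exact Or.inl ⟨hx.1, h⟩
    · exact Or.inr ⟨h, hx.2⟩
  have h1 : AA (2 * Z) ≤ AA 2 + ∫⁻ x in Icc 2 (2 * Z), ee x :=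
    (lintegral_mono_set hsub).trans (lintegral_union_le _ _ _)
  refine h1.trans (add_le_add le_rfl ?_)
  have himg : (fun x : ℝ => 2 * x) '' (Icc 1 Z) = Icc 2 (2 * Z) := by
    rw [image_mul_left_Icc (by norm_num) hZ, mul_one]
  rw [← himg, lintegral_image_eq_lintegral_abs_deriv_mul (f' := fun _ => 2) measurableSet_Icc
    (fun x _ => by simpa using ((hasDerivAt_id x).const_mul (2:ℝ)).hasDerivWithinAt)
    (fun a _ b _ hab => by simpa using hab)]
  have m1 : Measurable (fun x => phi2 x (1 * x)) := phi2_comp measurable_id (measurable_id.const_mul 1)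
  calc _ ≤ ∫⁻ x in Icc 1 Z, (ENNReal.ofReal 3 * ee x + ENNReal.ofReal 6 * phi2 x (1 * x)) := by
        refine lintegral_mono fun x => ?_
        refine (mul_le_mul_right (ee_two x) _).trans (le_of_eq ?_)
        rw [mul_add, ← mul_assoc, ← mul_assoc, ← ENNReal.ofReal_mul (by positivity), ← ENNReal.ofReal_mul (by positivity)]
        norm_num
    _ = ENNReal.ofReal 3 * AA Z + ENNReal.ofReal 6 * ∫⁻ x in Icc 1 Z, phi2 x (1 * x) := by
        rw [lintegral_add_left (ee_meas.const_mul _), lintegral_const_mul _ ee_meas, lintegral_const_mul _ m1, AA]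
    _ ≤ _ := by
        refine add_le_add le_rfl ?_
        calc _ ≤ ENNReal.ofReal 6 * ENNReal.ofReal (C * Z^2) := by gcongr
          _ = _ := by rw [← ENNReal.ofReal_mul (by norm_num)]; ring_nf

lemma cramer (hRH : RiemannHypothesis) : ∃ K : ℝ, 0 < K ∧ ∀ Y : ℝ, 1 ≤ Y → AA Y ≤ ENNReal.ofReal (K * Y^2) := by
  obtain ⟨C, hC, hm⟩ := mm hRH
  set C1 := C * 1 * (Real.log (2 + 1/1))^2 with hC1
  have hC1' : 0 ≤ C1 := by positivity
  set K0 := (psi 2 + 2)^2 with hK0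
  have hp : 0 ≤ psi 2 := Finset.sum_nonneg fun _ _ => ArithmeticFunction.vonMangoldt_nonneg
  have hK0' : 0 < K0 := by positivity
  refine ⟨K0 + 6 * C1, by positivity, ?_⟩
  have hbase : ∀ Y : ℝ, 1 ≤ Y → (psi 2 + 2)^2 ≤ (K0 + 6 * C1) * Y^2 := by
    intro Y h1
    rw [← hK0]
    have h2 : 1 ≤ Y^2 := by nlinarith
    have h3 := mul_nonneg hC1' (sq_nonneg Y)
    have h4 := mul_le_mul_of_nonneg_left h2 hK0'.le
    linarith
  clear_value K0 C1
  have key : ∀ n : ℕ, ∀ Y : ℝ, 1 ≤ Y → Y ≤ 2^(n+1) → AA Y ≤ ENNReal.ofReal ((K0 + 6 * C1) * Y^2) := by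
    intro n
    induction n with
    | zero =>
      intro Y h1 h2
      have : AA Y ≤ AA 2 := lintegral_mono_set (Icc_subset_Icc_right (by simpa using h2))
      refine (this.trans AA_two).trans (ENNReal.ofReal_le_ofReal ?_)
      exact hbase Y h1
    | succ n ih =>
      intro Y h1 h2
      by_cases hY : Y ≤ 2
      · have : AA Y ≤ AA 2 := lintegral_mono_set (Icc_subset_Icc_right hY)
        refine (this.trans AA_two).trans (ENNReal.ofReal_le_ofReal ?_)
        exact hbase Y h1
      · rw [not_le] at hY
        obtain ⟨Z, rfl⟩ : ∃ Z, Y = 2 * Z := ⟨Y/2, by ring⟩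
        have hZ : 1 ≤ Z := by linarith
        have h3 := ih Z hZ (by rw [pow_succ] at h2; linarith)
        have h4 := AA_step hC1' hZ (by
          refine (hm 1 one_pos (by norm_num) Z (by linarith)).trans (le_of_eq ?_)
          rw [hC1]; ring_nf)
        refine h4.trans ?_
        calc _ ≤ ENNReal.ofReal K0 + (ENNReal.ofReal 3 * ENNReal.ofReal ((K0 + 6 * C1) * Z^2) + ENNReal.ofReal (6 * C1 * Z^2)) := by
              gcongr
              exact AA_two.trans (le_of_eq (by rw [hK0]))
          _ = ENNReal.ofReal (K0 + (3 * ((K0 + 6 * C1) * Z^2) + 6 * C1 * Z^2)) := by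
              rw [← ENNReal.ofReal_mul (by norm_num), ← ENNReal.ofReal_add (by positivity) (by positivity),
                ← ENNReal.ofReal_add (by positivity) (by positivity)]
          _ ≤ _ := by
              refine ENNReal.ofReal_le_ofReal ?_
              have h2 : 1 ≤ Z^2 := by nlinarith
              have h3 := mul_nonneg hC1' (sq_nonneg Z)
              have h4 := mul_le_mul_of_nonneg_left h2 hK0'.le
              linarith
  intro Y hY
  obtain ⟨n, hn⟩ := pow_unbounded_of_one_lt Y (one_lt_two)
  refine key n Y hY (hn.le.trans ?_)
  exact pow_le_pow_right₀ (by norm_num) (by omega)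

lemma inner_cov {x h : ℝ} (hx : 0 < x) (hh : 0 < h) : ∫⁻ v in Icc h (3*h), phi2 x v =
    ∫⁻ δ in Icc (h/x) (3*h/x), ENNReal.ofReal x * phi2 x (δ * x) := by
  have himg : (fun δ : ℝ => δ * x) '' (Icc (h/x) (3*h/x)) = Icc h (3*h) := by
    rw [image_mul_right_Icc (by gcongr; linarith) hx.le]
    congr 1 <;> field_simp
  rw [← himg, lintegral_image_eq_lintegral_abs_deriv_mul (f' := fun _ => x) measurableSet_Icc
    (fun y _ => by simpa using ((hasDerivAt_id y).mul_const x).hasDerivWithinAt)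
    (fun a _ b _ hab => by simpa [hx.ne'] using hab), abs_of_pos hx]

lemma lint_sq {a : ℝ} (ha : 0 < a) : ∫⁻ δ in Icc a 3, ENNReal.ofReal (δ ^ (-2:ℝ)) ≤ ENNReal.ofReal (1/a) := by
  have hi := integrableOn_Ioi_rpow_of_lt (a := -2) (by norm_num) ha
  have hv := integral_Ioi_rpow_of_lt (a := -2) (by norm_num) ha
  calc _ ≤ ∫⁻ δ in Ici a, ENNReal.ofReal (δ ^ (-2:ℝ)) := lintegral_mono_set Icc_subset_Ici_self
    _ = ∫⁻ δ in Ioi a, ENNReal.ofReal (δ ^ (-2:ℝ)) := setLIntegral_congr Ioi_ae_eq_Ici.symm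
    _ = ENNReal.ofReal (∫ δ in Ioi a, δ ^ (-2:ℝ)) := by
        refine (ofReal_integral_eq_lintegral_ofReal hi ?_).symm
        filter_upwards [ae_restrict_mem measurableSet_Ioi] with x hx
        have : 0 < x := ha.trans hx
        simp only [Pi.zero_apply]; positivity
    _ ≤ _ := by
        rw [hv]
        refine ENNReal.ofReal_le_ofReal (le_of_eq ?_)
        norm_num
        rw [Real.rpow_neg_one]

noncomputable def TT (X h : ℝ) : ENNReal := ∫⁻ x in Icc (max 1 h) (2*X), ∫⁻ v in Icc h (3*h), phi2 x v

lemma log_X {X h : ℝ} (hh : 0 < h) (hX : h ≤ X) : 0 ≤ Real.log (2 + 1/(h/(2*X))) ∧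
    Real.log (2 + 1/(h/(2*X))) ≤ 2 * Real.log (2*X/h) ∧ 1/2 ≤ Real.log (2*X/h) := by
  have h1 : 2 ≤ 2*X/h := by rw [le_div_iff₀ hh]; linarith
  rw [one_div_div]
  refine ⟨Real.log_nonneg (by linarith), ?_, ?_⟩
  · calc _ ≤ Real.log ((2*X/h)^2) := Real.log_le_log (by linarith) (by nlinarith)
      _ = _ := by rw [Real.log_pow]; norm_num
  · have := Real.log_two_gt_d9
    have := Real.log_le_log (by norm_num) h1
    linarith

lemma TT_bound (hRH : RiemannHypothesis) : ∃ C : ℝ, 0 < C ∧ ∀ X h : ℝ, 0 < h → h ≤ X →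
    TT X h ≤ ENNReal.ofReal (C * h^2 * X * (Real.log (2*X/h))^2) := by
  obtain ⟨C, hC, hm⟩ := mm hRH
  refine ⟨216 * C, by positivity, fun X h hh hX => ?_⟩
  have hX0 : 0 < X := by linarith
  obtain ⟨l0, l1, l2⟩ := log_X hh hX
  set a := h / (2*X) with ha
  have ha0 : 0 < a := by positivity
  set L := Real.log (2 + 1/a) with hL
  set P : ℝ → ℝ → ENNReal := fun x δ =>
    {p : ℝ × ℝ | p.1 * p.2 ≤ 3*h}.indicator (fun p => ENNReal.ofReal p.1 * phi2 p.1 (p.2 * p.1)) (x, δ) with hP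
  have hPm : Measurable (Function.uncurry P) := by
    have hs : MeasurableSet {p : ℝ × ℝ | p.1 * p.2 ≤ 3*h} := measurableSet_le (by fun_prop) (by fun_prop)
    refine Measurable.indicator ?_ hs
    exact (ENNReal.measurable_ofReal.comp measurable_fst).mul (phi2_comp measurable_fst (measurable_snd.mul measurable_fst))
  have s1 : TT X h ≤ ∫⁻ x in Icc (max 1 h) (2*X), ∫⁻ δ in Icc a 3, P x δ := by
    refine setLIntegral_mono' measurableSet_Icc fun x hx => ?_
    have hx1 : 1 ≤ x := (le_max_left _ _).trans hx.1
    have hxh : h ≤ x := (le_max_right _ _).trans hx.1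
    have hx0 : 0 < x := by linarith
    rw [inner_cov hx0 hh]
    calc _ ≤ ∫⁻ δ in Icc (h/x) (3*h/x), P x δ := by
          refine setLIntegral_mono' measurableSet_Icc fun δ hδ => ?_
          have : (x, δ) ∈ {p : ℝ × ℝ | p.1 * p.2 ≤ 3*h} := by
            have := hδ.2
            rw [le_div_iff₀ hx0] at this
            change x * δ ≤ 3*h; linarith
          simp only [hP]
          rw [indicator_of_mem this]
      _ ≤ _ := by
          refine lintegral_mono_set (Icc_subset_Icc ?_ ?_)
          · exact div_le_div_of_nonneg_left hh.le hx0 hx.2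
          · rw [div_le_iff₀ hx0]; linarith
  have s2 : ∀ δ ∈ Icc a 3, ∫⁻ x in Icc (max 1 h) (2*X), P x δ ≤
      ENNReal.ofReal (27 * C * h^3 * L^2) * ENNReal.ofReal (δ ^ (-2:ℝ)) := by
    intro δ hδ
    have hδ0 : 0 < δ := ha0.trans_le hδ.1
    have m1 : Measurable (fun x => phi2 x (δ * x)) := phi2_comp measurable_id (measurable_id.const_mul δ)
    calc _ ≤ ∫⁻ x in Icc (max 1 h) (2*X), (Icc 1 (3*h/δ)).indicator (fun x => ENNReal.ofReal (3*h/δ) * phi2 x (δ * x)) x := by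
          refine setLIntegral_mono' measurableSet_Icc fun x hx => ?_
          have hx1 : 1 ≤ x := (le_max_left _ _).trans hx.1
          simp only [hP]
          by_cases hc : x * δ ≤ 3*h
          · have h1 : x ≤ 3*h/δ := by rwa [le_div_iff₀ hδ0]
            rw [indicator_of_mem (show (x, δ) ∈ {p : ℝ × ℝ | p.1 * p.2 ≤ 3*h} from hc),
              indicator_of_mem (show x ∈ Icc 1 (3*h/δ) from ⟨hx1, h1⟩)]
            gcongr
          · rw [indicator_of_notMem (show (x, δ) ∉ {p : ℝ × ℝ | p.1 * p.2 ≤ 3*h} from hc)]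
            simp
      _ ≤ ∫⁻ x, (Icc 1 (3*h/δ)).indicator (fun x => ENNReal.ofReal (3*h/δ) * phi2 x (δ * x)) x :=
          setLIntegral_le_lintegral _ _
      _ = ENNReal.ofReal (3*h/δ) * ∫⁻ x in Icc 1 (3*h/δ), phi2 x (δ * x) := by
          rw [lintegral_indicator measurableSet_Icc, lintegral_const_mul _ m1]
      _ ≤ ENNReal.ofReal (3*h/δ) * ENNReal.ofReal (C * δ * (3*h/δ)^2 * (Real.log (2 + 1/δ))^2) := by
          gcongr
          exact hm δ hδ0 hδ.2 _ (by positivity)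
      _ ≤ _ := by
          rw [← ENNReal.ofReal_mul (by positivity), ← ENNReal.ofReal_mul (by positivity)]
          refine ENNReal.ofReal_le_ofReal ?_
          have e : δ ^ (-2:ℝ) = (δ^2)⁻¹ := by
            rw [Real.rpow_neg hδ0.le]; norm_num
          rw [e]
          have hl0 : 0 ≤ Real.log (2 + 1/δ) := Real.log_nonneg (by have : 0 < 1/δ := by positivity
                                                                   linarith)
          have hl : Real.log (2 + 1/δ) ≤ L := by
            refine Real.log_le_log (by positivity) ?_
            have := one_div_le_one_div_of_le ha0 hδ.1
            linarith
          calc _ = 27 * C * h^3 * (Real.log (2 + 1/δ))^2 * (δ^2)⁻¹ := by field_simp; ring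
            _ ≤ _ := by gcongr
  calc TT X h ≤ _ := s1
    _ = ∫⁻ δ in Icc a 3, ∫⁻ x in Icc (max 1 h) (2*X), P x δ := lintegral_lintegral_swap hPm.aemeasurable
    _ ≤ ∫⁻ δ in Icc a 3, ENNReal.ofReal (27 * C * h^3 * L^2) * ENNReal.ofReal (δ ^ (-2:ℝ)) :=
        setLIntegral_mono' measurableSet_Icc s2
    _ = ENNReal.ofReal (27 * C * h^3 * L^2) * ∫⁻ δ in Icc a 3, ENNReal.ofReal (δ ^ (-2:ℝ)) := by
        rw [lintegral_const_mul]
        fun_prop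
    _ ≤ ENNReal.ofReal (27 * C * h^3 * L^2) * ENNReal.ofReal (1/a) := by
        gcongr
        exact lint_sq ha0
    _ ≤ _ := by
        rw [← ENNReal.ofReal_mul (by positivity)]
        refine ENNReal.ofReal_le_ofReal ?_
        have e : 27 * C * h^3 * L^2 * (1/a) = 54 * C * h^2 * X * L^2 := by
          rw [ha]; field_simp; ring
        rw [e]
        calc _ ≤ 54 * C * h^2 * X * (2 * Real.log (2*X/h))^2 := by gcongr
          _ = _ := by ring

lemma trick {X h : ℝ} (hh : 0 < h) (hX : h ≤ X) :
    ENNReal.ofReal h * ∫⁻ x in Icc (max 1 h) X, phi2 x h ≤ 4 * TT X h := by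
  set G : ℝ → ENNReal := fun x => ∫⁻ v in Icc h (3*h), phi2 x v with hG
  have hGm : Measurable G := by
    have : Measurable (fun p : ℝ × ℝ => phi2 p.1 p.2) := phi2_comp measurable_fst measurable_snd
    exact this.lintegral_prod_right'
  have mx : ∀ x, Measurable (phi2 x) := fun x => phi2_comp measurable_const measurable_id
  have s1 : ∀ x, ENNReal.ofReal h * phi2 x h ≤ 2 * G x + 2 * G (x + h) := by
    intro x
    have h1 : ENNReal.ofReal h * phi2 x h = ∫⁻ v in Icc (2*h) (3*h), phi2 x h := by
      rw [setLIntegral_const, Real.volume_Icc, mul_comm]; congr 2; ring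
    rw [h1]
    calc _ ≤ ∫⁻ v in Icc (2*h) (3*h), (2 * phi2 x v + 2 * phi2 (x + h) (v - h)) := by
          refine lintegral_mono fun v => ?_
          unfold phi2 F
          rw [show (2:ENNReal) = ENNReal.ofReal 2 by simp, ← ENNReal.ofReal_mul (by norm_num), ← ENNReal.ofReal_mul (by norm_num),
            ← ENNReal.ofReal_add (by positivity) (by positivity)]
          refine ENNReal.ofReal_le_ofReal ?_
          rw [show x + h + (v - h) = x + v by ring]
          nlinarith [sq_nonneg ((psi (x+v) - psi x - v) + (psi (x+v) - psi (x+h) - (v-h)))]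
      _ = 2 * (∫⁻ v in Icc (2*h) (3*h), phi2 x v) + 2 * ∫⁻ v in Icc (2*h) (3*h), phi2 (x + h) (v - h) := by
          rw [lintegral_add_left ((mx x).const_mul _), lintegral_const_mul _ (mx x), lintegral_const_mul]
          exact (mx (x+h)).comp (by fun_prop)
      _ ≤ _ := by
          gcongr
          · exact lintegral_mono_set (Icc_subset_Icc_left (by linarith))
          · calc _ ≤ ∫⁻ v in Icc (2*h) (3*h), (Icc h (3*h)).indicator (phi2 (x + h)) (v - h) := by
                  refine setLIntegral_mono' measurableSet_Icc fun v hv => ?_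
                  rw [indicator_of_mem (show v - h ∈ Icc h (3*h) from ⟨by linarith [hv.1], by linarith [hv.2]⟩)]
              _ ≤ ∫⁻ v, (Icc h (3*h)).indicator (phi2 (x + h)) (v - h) := setLIntegral_le_lintegral _ _
              _ = ∫⁻ v, (Icc h (3*h)).indicator (phi2 (x + h)) v := lintegral_sub_right_eq_self _ h
              _ = _ := by rw [lintegral_indicator measurableSet_Icc]
  have mh : Measurable (fun x => phi2 x h) := phi2_comp measurable_id measurable_const
  rw [← lintegral_const_mul _ mh]
  calc _ ≤ ∫⁻ x in Icc (max 1 h) X, (2 * G x + 2 * G (x + h)) := lintegral_mono fun x => s1 x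
    _ = 2 * (∫⁻ x in Icc (max 1 h) X, G x) + 2 * ∫⁻ x in Icc (max 1 h) X, G (x + h) := by
        rw [lintegral_add_left (hGm.const_mul _), lintegral_const_mul _ hGm, lintegral_const_mul]
        exact hGm.comp (by fun_prop)
    _ ≤ 2 * TT X h + 2 * TT X h := by
        gcongr
        · exact lintegral_mono_set (Icc_subset_Icc_right (by linarith))
        · calc _ ≤ ∫⁻ x in Icc (max 1 h) X, (Icc (max 1 h) (2*X)).indicator G (x + h) := by
                refine setLIntegral_mono' measurableSet_Icc fun x hx => ?_
                rw [indicator_of_mem (show x + h ∈ Icc (max 1 h) (2*X) from ⟨by linarith [hx.1], by linarith [hx.2]⟩)]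
            _ ≤ ∫⁻ x, (Icc (max 1 h) (2*X)).indicator G (x + h) := setLIntegral_le_lintegral _ _
            _ = ∫⁻ x, (Icc (max 1 h) (2*X)).indicator G x := lintegral_add_right_eq_self _ h
            _ = _ := by rw [lintegral_indicator measurableSet_Icc]; rfl
    _ = _ := by rw [← add_mul]; norm_num

lemma small_x {K h : ℝ} (hK : 0 < K) (hh : 0 < h) (hA : ∀ Y : ℝ, 1 ≤ Y → AA Y ≤ ENNReal.ofReal (K * Y^2)) :
    ∫⁻ x in Icc 1 h, phi2 x h ≤ ENNReal.ofReal (16 * K * h^2) := by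
  by_cases h1 : h < 1
  · rw [Icc_eq_empty (not_le.2 h1)]; simp
  rw [not_lt] at h1
  calc _ ≤ ∫⁻ x in Icc 1 h, (2 * ee x + 2 * ee (x + h)) := by
        refine lintegral_mono fun x => ?_
        unfold phi2 F ee
        rw [show (2:ENNReal) = ENNReal.ofReal 2 by simp, ← ENNReal.ofReal_mul (by norm_num), ← ENNReal.ofReal_mul (by norm_num),
            ← ENNReal.ofReal_add (by positivity) (by positivity)]
        refine ENNReal.ofReal_le_ofReal ?_
        nlinarith [sq_nonneg ((psi x - x) + (psi (x+h) - (x+h)))]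
    _ = 2 * (∫⁻ x in Icc 1 h, ee x) + 2 * ∫⁻ x in Icc 1 h, ee (x + h) := by
        rw [lintegral_add_left (ee_meas.const_mul _), lintegral_const_mul _ ee_meas, lintegral_const_mul]
        exact ee_meas.comp (by fun_prop)
    _ ≤ 2 * AA (2*h) + 2 * AA (2*h) := by
        gcongr
        · exact lintegral_mono_set (Icc_subset_Icc_right (by linarith))
        · calc _ ≤ ∫⁻ x in Icc 1 h, (Icc 1 (2*h)).indicator ee (x + h) := by
                refine setLIntegral_mono' measurableSet_Icc fun x hx => ?_
                rw [indicator_of_mem (show x + h ∈ Icc 1 (2*h) from ⟨by linarith [hx.1], by linarith [hx.2]⟩)]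
            _ ≤ ∫⁻ x, (Icc 1 (2*h)).indicator ee (x + h) := setLIntegral_le_lintegral _ _
            _ = ∫⁻ x, (Icc 1 (2*h)).indicator ee x := lintegral_add_right_eq_self _ h
            _ = _ := by rw [lintegral_indicator measurableSet_Icc]; rfl
    _ = ENNReal.ofReal 4 * AA (2*h) := by
        rw [← add_mul]; norm_num
    _ ≤ ENNReal.ofReal 4 * ENNReal.ofReal (K * (2*h)^2) := by
        gcongr
        exact hA _ (by linarith)
    _ = _ := by
        rw [← ENNReal.ofReal_mul (by norm_num)]; ring_nf

theorem main (hRH : RiemannHypothesis) : ∃ C : ℝ, 0 < C ∧ ∀ X : ℝ, 1 ≤ X → ∀ h : ℝ, 0 < h → h ≤ X →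
    (∫ x in (1:ℝ)..X, (psi (x + h) - psi x - h)^2) ≤ C * h * X * (Real.log (2*X/h))^2 := by
  obtain ⟨K, hK, hA⟩ := cramer hRH
  obtain ⟨C, hC, hT⟩ := TT_bound hRH
  refine ⟨64 * K + 4 * C, by positivity, fun X hX1 h hh hX => ?_⟩
  have hX0 : 0 < X := by linarith
  obtain ⟨-, -, l2⟩ := log_X hh hX
  set L := Real.log (2*X/h) with hL
  have b1 : ∫⁻ x in Icc (max 1 h) X, phi2 x h ≤ ENNReal.ofReal (4 * C * h * X * L^2) := by
    have e : ∫⁻ x in Icc (max 1 h) X, phi2 x h =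
        ENNReal.ofReal (1/h) * (ENNReal.ofReal h * ∫⁻ x in Icc (max 1 h) X, phi2 x h) := by
      rw [← mul_assoc, ← ENNReal.ofReal_mul (by positivity), one_div_mul_cancel hh.ne', ENNReal.ofReal_one, one_mul]
    rw [e]
    calc _ ≤ ENNReal.ofReal (1/h) * (4 * TT X h) := by
          exact mul_le_mul_right (trick hh hX) _
      _ ≤ ENNReal.ofReal (1/h) * (ENNReal.ofReal 4 * ENNReal.ofReal (C * h^2 * X * L^2)) := by
          rw [show ENNReal.ofReal 4 = 4 by simp]
          gcongr
          exact hT X h hh hX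
      _ = _ := by
          rw [← ENNReal.ofReal_mul (by norm_num), ← ENNReal.ofReal_mul (by positivity)]
          congr 1; field_simp
  have hsub : Ioc 1 X ⊆ Icc 1 h ∪ Icc (max 1 h) X := by
    intro x hx
    rcases le_total x h with h' | h'
    · exact Or.inl ⟨hx.1.le, h'⟩
    · exact Or.inr ⟨max_le hx.1.le h', hx.2⟩
  have b2 : ∫⁻ x in Ioc 1 X, phi2 x h ≤ ENNReal.ofReal ((64 * K + 4 * C) * h * X * L^2) := by
    calc _ ≤ _ := (lintegral_mono_set hsub).trans (lintegral_union_le _ _ _)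
      _ ≤ ENNReal.ofReal (16 * K * h^2) + ENNReal.ofReal (4 * C * h * X * L^2) := add_le_add (small_x hK hh hA) b1
      _ = ENNReal.ofReal (16 * K * h^2 + 4 * C * h * X * L^2) := (ENNReal.ofReal_add (by positivity) (by positivity)).symm
      _ ≤ _ := by
          refine ENNReal.ofReal_le_ofReal ?_
          have h1 : 1 ≤ 4 * L^2 := by nlinarith
          have h2 : h^2 ≤ h * X * (4 * L^2) := by
            calc h^2 ≤ h * X := by nlinarith
              _ ≤ h * X * (4 * L^2) := le_mul_of_one_le_right (by positivity) h1
          nlinarith [mul_le_mul_of_nonneg_left h2 hK.le]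
  rw [intervalIntegral.integral_of_le hX1,
    integral_eq_lintegral_of_nonneg_ae (Eventually.of_forall fun x => by positivity)]
  · exact ENNReal.toReal_le_of_le_ofReal (by positivity) b2
  · refine Measurable.aestronglyMeasurable ?_
    exact (((psi_meas.comp (by fun_prop)).sub psi_meas).sub measurable_const).pow_const 2

end SV

end

open Real MeasureTheory

/-- **Saffari–Vaughan bound.** Assuming RH,
`∫_{1}^{X} (ψ(x+h) - ψ(x) - h)² dx ≪ h X (log(2X/h))²` for `0 < h ≤ X`. -/
theorem saffari_vaughan_h (hRH : RiemannHypothesis) :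
    ∃ C : ℝ, 0 < C ∧ ∀ X : ℝ, 1 ≤ X → ∀ h : ℝ, 0 < h → h ≤ X →
      (∫ x in (1:ℝ)..X, (chebyshevPsi (x + h) - chebyshevPsi x - h) ^ 2)
        ≤ C * h * X * (Real.log (2 * X / h)) ^ 2 := by
  exact SV.main hRH
end

section
/- ∫_{0}^{∞} (sin u / u)² · log u du = (π/2)·(1 − γ₀ − log 2). -/
open Real MeasureTheory

lemma inner_u {t : ℝ} (ht : 0 < t) :
    (∫ u in Set.Ioi (0:ℝ), sin u ^ 2 * exp (-(t * u))) = 2 / (t * (t ^ 2 + 4)) := by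
  have hd : ∀ x ∈ Set.Ici (0:ℝ), HasDerivAt (fun u : ℝ => exp (-(t * u)) *
      (-1 / (2 * t) + (t * cos (2 * u) - 2 * sin (2 * u)) / (2 * (t ^ 2 + 4))))
      (sin x ^ 2 * exp (-(t * x))) x := by
    intro x _
    have h1 : HasDerivAt (fun u : ℝ => 2 * u) 2 x := by
      simpa using (hasDerivAt_id x).const_mul 2
    have h2 : HasDerivAt (fun u : ℝ => -(t * u)) (-t) x := by
      simpa using ((hasDerivAt_id x).const_mul t).fun_neg
    have h3 := h2.exp.fun_mul ((((h1.cos.const_mul t).fun_sub (h1.sin.const_mul 2)).div_const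
      (2 * (t ^ 2 + 4))).const_add (-1 / (2 * t)))
    refine h3.congr_deriv ?_
    have hs : sin x ^ 2 = 1 / 2 - cos (2 * x) / 2 := Real.sin_sq_eq_half_sub x
    rw [hs]
    symm
    have : t ^ 2 + 4 ≠ 0 := by positivity
    field_simp
    ring
  have hlim : Filter.Tendsto (fun u : ℝ => exp (-(t * u)) *
      (-1 / (2 * t) + (t * cos (2 * u) - 2 * sin (2 * u)) / (2 * (t ^ 2 + 4))))
      Filter.atTop (nhds 0) := by
    have he : Filter.Tendsto (fun u : ℝ => exp (-(t * u))) Filter.atTop (nhds 0) :=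
      Real.tendsto_exp_neg_atTop_nhds_zero.comp (Filter.tendsto_id.const_mul_atTop ht)
    refine he.zero_mul_isBoundedUnder_le ?_
    refine Filter.isBoundedUnder_of ⟨1 / (2 * t) + (t + 2) / (2 * (t ^ 2 + 4)), fun u => ?_⟩
    have hp : 0 < 2 * (t ^ 2 + 4) := by positivity
    refine (norm_add_le _ _).trans (add_le_add ?_ ?_)
    · rw [norm_div, norm_neg, norm_one, Real.norm_of_nonneg (by positivity)]
    · rw [norm_div, Real.norm_of_nonneg hp.le]
      gcongr
      refine (norm_sub_le _ _).trans (add_le_add ?_ ?_)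
      · rw [norm_mul, Real.norm_of_nonneg ht.le]
        exact mul_le_of_le_one_right ht.le (abs_cos_le_one _)
      · rw [norm_mul, Real.norm_of_nonneg (by norm_num)]
        exact mul_le_of_le_one_right (by norm_num) (abs_sin_le_one _)
  rw [integral_Ioi_of_hasDerivAt_of_nonneg' hd (fun x _ => by positivity) hlim]
  have : t ^ 2 + 4 ≠ 0 := by positivity
  simp
  field_simp
  ring

lemma mellin_real (f : ℝ → ℝ) (s : ℝ) :
    mellin (fun t => (f t : ℂ)) s = ((∫ t in Set.Ioi (0:ℝ), t ^ (s - 1) * f t : ℝ) : ℂ) := by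
  rw [mellin, ← integral_complex_ofReal]
  refine setIntegral_congr_fun measurableSet_Ioi fun t ht => ?_
  have : (0:ℝ) ≤ t := le_of_lt ht
  simp only [smul_eq_mul]
  push_cast [Complex.ofReal_cpow this]
  rfl

lemma deriv_G2 : HasDerivAt Real.Gamma (1 - Real.eulerMascheroniConstant) 2 := by
  have h1 : HasDerivAt Real.Gamma (-Real.eulerMascheroniConstant) 1 := by
    exact Real.hasDerivAt_Gamma_one
  have h2 : HasDerivAt (fun x : ℝ => (x - 1) * Real.Gamma (x - 1)) (1 * Real.Gamma (2 - 1) + (2 - 1) * (-Real.eulerMascheroniConstant)) 2 := by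
    have h3 : HasDerivAt (fun x : ℝ => x - 1) 1 2 := (hasDerivAt_id _).sub_const _
    refine h3.fun_mul ?_
    exact HasDerivAt.comp_sub_const (2:ℝ) 1 (by norm_num; exact h1)
  have h4 := h2.congr_of_eventuallyEq (f₁ := Real.Gamma) ?_
  · refine h4.congr_deriv ?_
    norm_num
    try ring
  · filter_upwards [lt_mem_nhds (show (1:ℝ) < 2 by norm_num)] with x hx
    rw [← Real.Gamma_add_one (by linarith)]
    congr 1; ring

lemma f_cont : ContinuousOn (fun u : ℝ => (sin u / u) ^ 2) (Set.Ioi 0) := by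
  have : ∀ x ∈ Set.Ioi (0:ℝ), x ≠ 0 := fun x hx => ne_of_gt hx
  fun_prop (disch := assumption)

lemma f_top : (fun u : ℝ => (sin u / u) ^ 2) =O[Filter.atTop] (fun u : ℝ => u ^ (-2:ℝ)) := by
  refine Asymptotics.IsBigO.of_bound 1 ?_
  filter_upwards [Filter.eventually_gt_atTop 0] with u hu
  rw [Real.rpow_neg hu.le, one_mul, Real.norm_of_nonneg (by positivity),
    Real.norm_of_nonneg (by positivity), div_pow, div_eq_mul_inv]
  norm_cast
  exact mul_le_of_le_one_left (by positivity) (Real.sin_sq_le_one u)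

lemma f_bot : (fun u : ℝ => (sin u / u) ^ 2) =O[nhdsWithin 0 (Set.Ioi 0)]
    (fun u : ℝ => u ^ (-0:ℝ)) := by
  refine Asymptotics.IsBigO.of_bound 1 ?_
  filter_upwards [self_mem_nhdsWithin] with u hu
  have hu' : (0:ℝ) < u := hu
  rw [neg_zero, Real.rpow_zero, norm_one, one_mul, Real.norm_of_nonneg (by positivity)]
  have h : |sin u / u| ≤ 1 := by
    rw [abs_div, abs_of_pos hu', div_le_one hu']
    simpa [abs_of_pos hu'] using Real.abs_sin_le_abs (x := u)
  rw [sq_le_one_iff_abs_le_one]; exact h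

lemma k_cont : ContinuousOn (fun u : ℝ => (1 + u ^ 2)⁻¹) (Set.Ioi 0) := by
  have : ∀ x : ℝ, 1 + x ^ 2 ≠ 0 := fun x => by positivity
  fun_prop (disch := simp [this])

lemma k_top : (fun u : ℝ => (1 + u ^ 2)⁻¹) =O[Filter.atTop] (fun u : ℝ => u ^ (-2:ℝ)) := by
  refine Asymptotics.IsBigO.of_bound 1 ?_
  filter_upwards [Filter.eventually_gt_atTop 0] with u hu
  rw [Real.rpow_neg hu.le, one_mul, Real.norm_of_nonneg (by positivity),
    Real.norm_of_nonneg (by positivity)]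
  norm_cast
  gcongr
  linarith

lemma k_bot : (fun u : ℝ => (1 + u ^ 2)⁻¹) =O[nhdsWithin 0 (Set.Ioi 0)]
    (fun u : ℝ => u ^ (-0:ℝ)) := by
  refine Asymptotics.IsBigO.of_bound 1 ?_
  filter_upwards [self_mem_nhdsWithin] with u hu
  rw [neg_zero, Real.rpow_zero, norm_one, one_mul, Real.norm_of_nonneg (by positivity)]
  exact inv_le_one_of_one_le₀ (by nlinarith)

/-- Real-variable Mellin derivative. -/
lemma mellin_deriv_real {f : ℝ → ℝ} (hc : ContinuousOn f (Set.Ioi 0))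
    (ht : f =O[Filter.atTop] (fun u : ℝ => u ^ (-2:ℝ)))
    (hb : f =O[nhdsWithin 0 (Set.Ioi 0)] (fun u : ℝ => u ^ (-0:ℝ))) :
    HasDerivAt (fun s : ℝ => ∫ t in Set.Ioi (0:ℝ), t ^ (s - 1) * f t)
      (∫ t in Set.Ioi (0:ℝ), log t * f t) 1 := by
  have h := (mellin_hasDerivAt_of_isBigO_rpow (f := fun t => (f t : ℂ)) (s := ((1:ℝ):ℂ))
    (a := 2) (b := 0)
    (ContinuousOn.locallyIntegrableOn (Complex.continuous_ofReal.comp_continuousOn hc)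
      measurableSet_Ioi) ?_ (by norm_num) ?_ (by norm_num)).2
  · have h2 := h.real_of_complex
    have e1 : (fun s : ℝ => (mellin (fun t => (f t : ℂ)) s).re) =
      fun s : ℝ => ∫ t in Set.Ioi (0:ℝ), t ^ (s - 1) * f t := by
      ext s; rw [mellin_real]; simp
    have e2 : (fun t : ℝ => log t • (f t : ℂ)) = fun t => ((log t * f t : ℝ) : ℂ) := by
      ext t; simp
    rw [e1, e2, mellin_real, Complex.ofReal_re] at h2
    simpa using h2
  · exact (Asymptotics.isBigO_norm_left.1 (by simpa using ht.norm_left))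
  · exact (Asymptotics.isBigO_norm_left.1 (by simpa using hb.norm_left))

lemma k_symm : (∫ t in Set.Ioi (0:ℝ), log t * (1 + t ^ 2)⁻¹) = 0 := by
  have hd := mellin_deriv_real k_cont k_top k_bot
  have hs : ∀ s : ℝ, (∫ t in Set.Ioi (0:ℝ), t ^ (s - 1) * (1 + t ^ 2)⁻¹) =
      ∫ t in Set.Ioi (0:ℝ), t ^ ((2 - s) - 1) * (1 + t ^ 2)⁻¹ := by
    intro s
    have h := integral_comp_rpow_Ioi (fun t : ℝ => t ^ (s - 1) * (1 + t ^ 2)⁻¹)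
      (show (-1:ℝ) ≠ 0 by norm_num)
    rw [← h]
    refine setIntegral_congr_fun measurableSet_Ioi fun t ht => ?_
    have ht' : (0:ℝ) < t := ht
    simp only [smul_eq_mul]
    rw [← Real.rpow_mul ht'.le, Real.rpow_neg_one, show (2 - s - 1 : ℝ) = (-1 - 1) + (-1 * (s - 1)) + 2 by ring,
      Real.rpow_add ht', Real.rpow_add ht']
    norm_num
    field_simp
    ring
  have hd2 : HasDerivAt (fun s : ℝ => ∫ t in Set.Ioi (0:ℝ), t ^ ((2 - s) - 1) * (1 + t ^ 2)⁻¹)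
      (-(∫ t in Set.Ioi (0:ℝ), log t * (1 + t ^ 2)⁻¹)) 1 :=
    HasDerivAt.comp_const_sub (2:ℝ) 1 (by norm_num; exact hd)
  have := hd.unique (hd2.congr_of_eventuallyEq (Filter.Eventually.of_forall hs))
  linarith

lemma key {s : ℝ} (h0 : 0 < s) (h2 : s < 2) :
    Real.Gamma (3 - s) * (∫ u in Set.Ioi (0:ℝ), u ^ (s - 1) * (sin u / u) ^ 2) =
      2 ^ (1 - s) * ∫ t in Set.Ioi (0:ℝ), t ^ ((2 - s) - 1) * (1 + t ^ 2)⁻¹ := by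
  have ha : 0 < 3 - s := by linarith
  have hin : ∀ u ∈ Set.Ioi (0:ℝ), (∫ t in Set.Ioi (0:ℝ),
      sin u ^ 2 * (t ^ ((3 - s) - 1) * exp (-(u * t)))) =
      Real.Gamma (3 - s) * (u ^ (s - 1) * (sin u / u) ^ 2) := by
    intro u hu
    have hu' : (0:ℝ) < u := hu
    rw [integral_const_mul, Real.integral_rpow_mul_exp_neg_mul_Ioi ha hu', one_div,
      Real.inv_rpow hu'.le, ← Real.rpow_neg hu'.le, show -(3 - s) = (s - 1) + (-2) by ring,
      Real.rpow_add hu', Real.rpow_neg hu'.le]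
    norm_cast
    field_simp
  have hint : Integrable (Function.uncurry fun u t : ℝ =>
      sin u ^ 2 * (t ^ ((3 - s) - 1) * exp (-(u * t))))
      ((volume.restrict (Set.Ioi 0)).prod (volume.restrict (Set.Ioi 0))) := by
    rw [integrable_prod_iff (by
      refine Measurable.aestronglyMeasurable ?_
      unfold Function.uncurry
      fun_prop)]
    constructor
    · filter_upwards [ae_restrict_mem measurableSet_Ioi] with u hu
      have hu' : (0:ℝ) < u := hu
      have hq : Integrable (fun t : ℝ => t ^ ((3 - s) - 1) * exp (-(u * t)))
          (volume.restrict (Set.Ioi 0)) := by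
        refine Integrable.of_integral_ne_zero ?_
        rw [Real.integral_rpow_mul_exp_neg_mul_Ioi ha hu']
        have := Real.Gamma_pos_of_pos ha
        positivity
      exact hq.const_mul (sin u ^ 2)
    · have hI : IntegrableOn (fun u : ℝ => u ^ (s - 1) * (sin u / u) ^ 2) (Set.Ioi 0) :=
        mellin_convergent_of_isBigO_scalar (f_cont.locallyIntegrableOn measurableSet_Ioi)
          f_top h2 f_bot h0
      refine (hI.const_mul (Real.Gamma (3 - s))).congr ?_
      filter_upwards [ae_restrict_mem measurableSet_Ioi] with u hu
      rw [← hin u hu]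
      refine setIntegral_congr_fun measurableSet_Ioi fun t ht => ?_
      have ht' : (0:ℝ) < t := ht
      simp only [Function.uncurry]
      rw [Real.norm_of_nonneg (by positivity)]
  have hsw := integral_integral_swap hint
  rw [setIntegral_congr_fun measurableSet_Ioi hin, integral_const_mul] at hsw
  rw [hsw]
  have hR : (∫ t in Set.Ioi (0:ℝ), ∫ u in Set.Ioi (0:ℝ),
      sin u ^ 2 * (t ^ ((3 - s) - 1) * exp (-(u * t)))) =
      ∫ t in Set.Ioi (0:ℝ), t ^ (1 - s) * (2 / (t ^ 2 + 4)) := by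
    refine setIntegral_congr_fun measurableSet_Ioi fun t ht => ?_
    have ht' : (0:ℝ) < t := ht
    have : ∀ u : ℝ, sin u ^ 2 * (t ^ ((3 - s) - 1) * exp (-(u * t))) =
        t ^ ((3 - s) - 1) * (sin u ^ 2 * exp (-(t * u))) := by
      intro u; rw [mul_comm u t]; ring
    simp only [this]
    rw [integral_const_mul, inner_u ht', show (3 - s - 1 : ℝ) = (1 - s) + 1 by ring,
      Real.rpow_add_one ht'.ne']
    field_simp
  rw [hR, ← integral_const_mul]
  have h := integral_comp_mul_left_Ioi' (fun t : ℝ => t ^ (1 - s) * (2 / (t ^ 2 + 4))) 0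
    (show (0:ℝ) < 2 by norm_num)
  rw [mul_zero] at h
  rw [← h, smul_eq_mul, ← integral_const_mul]
  refine setIntegral_congr_fun measurableSet_Ioi fun t ht => ?_
  have ht' : (0:ℝ) < t := ht
  rw [Real.mul_rpow (by norm_num) ht'.le, show (2 - s - 1 : ℝ) = 1 - s by ring]
  field_simp
  ring

/-- `∫_0^∞ (sin u / u)² log u du = (π/2)(1 - γ₀ - log 2)`. -/
theorem integral_sinc_sq_mul_log :
    (∫ u in Set.Ioi (0:ℝ), (Real.sin u / u) ^ 2 * Real.log u)
      = π / 2 * (1 - Real.eulerMascheroniConstant - Real.log 2) := by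
  have hM := mellin_deriv_real f_cont f_top f_bot
  have hK := mellin_deriv_real k_cont k_top k_bot
  rw [k_symm] at hK
  have hK2 : HasDerivAt (fun s : ℝ => ∫ t in Set.Ioi (0:ℝ), t ^ ((2 - s) - 1) * (1 + t ^ 2)⁻¹)
      (-0) 1 :=
    HasDerivAt.comp_const_sub (2:ℝ) 1 (by norm_num; exact hK)
  have hG : HasDerivAt (fun s : ℝ => Real.Gamma (3 - s))
      (-(1 - Real.eulerMascheroniConstant)) 1 :=
    HasDerivAt.comp_const_sub (3:ℝ) 1 (by norm_num; exact deriv_G2)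
  have hP : HasDerivAt (fun s : ℝ => (2:ℝ) ^ (1 - s)) (-log 2) 1 := by
    have := ((hasDerivAt_id (1:ℝ)).const_sub 1).const_rpow (show (0:ℝ) < 2 by norm_num)
    simpa using this
  have hL := hG.fun_mul hM
  have hR := hP.fun_mul hK2
  have hE := hL.unique (hR.congr_of_eventuallyEq (by
    filter_upwards [Ioo_mem_nhds (show (0:ℝ) < 1 by norm_num) (show (1:ℝ) < 2 by norm_num)]
      with s hs
    exact key hs.1 hs.2))
  have hk := key (s := 1) (by norm_num) (by norm_num)
  have hv : (∫ t in Set.Ioi (0:ℝ), t ^ ((2 - 1 : ℝ) - 1) * (1 + t ^ 2)⁻¹) = π / 2 := by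
    have := integral_Ioi_inv_one_add_sq (i := 0)
    norm_num at this ⊢
  have hG2 : Real.Gamma (3 - 1) = 1 := by norm_num
  rw [hv, hG2] at hk
  rw [hv, hG2] at hE
  have hk' : (∫ u in Set.Ioi (0:ℝ), u ^ ((1:ℝ) - 1) * (sin u / u) ^ 2) = π / 2 := by
    simpa using hk
  rw [hk'] at hE
  have hc : (∫ u in Set.Ioi (0:ℝ), (Real.sin u / u) ^ 2 * Real.log u) =
      ∫ u in Set.Ioi (0:ℝ), Real.log u * (Real.sin u / u) ^ 2 := by
    simp only [mul_comm]
  rw [hc]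
  linarith
end

section
/- For every η > 0, the Fourier transform of the function K_η(x) = (sin(2πx) + sin(2π(1+η)x)) / (2πx(1 − 4η²x²)) satisfies: K̂_η(t) = 1 if |t| ≤ 1; K̂_η(t) = cos²(π(|t|−1)/(2η)) if 1 ≤ |t| ≤ 1+η; and K̂_η(t) = 0 if |t| ≥ 1+η, where K̂_η(t) = ∫_{−∞}^{∞} K_η(x) e^{−2πitx} dx. -/
open Real MeasureTheory Complex

noncomputable def fK (η t : ℝ) : ℂ := ((Real.cos (π / (2*η) * max 0 (min η (|t| - 1))) ^ 2 : ℝ) : ℂ)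

lemma fK_cont (η : ℝ) : Continuous (fK η) := by unfold fK; fun_prop

lemma fK_zero (η : ℝ) (hη : 0 < η) (t : ℝ) (ht : 1 + η ≤ |t|) : fK η t = 0 := by
  unfold fK
  rw [min_eq_left (by linarith), max_eq_right hη.le]
  have : π / (2*η) * η = π / 2 := by field_simp
  rw [this]; simp

lemma fK_one (η : ℝ) (hη : 0 < η) (t : ℝ) (ht : |t| ≤ 1) : fK η t = 1 := by
  unfold fK
  rw [min_eq_right (by linarith), max_eq_left (by linarith)]
  simp

lemma fK_mid (η : ℝ) (t : ℝ) (ht : 1 ≤ |t|) (h2 : |t| ≤ 1 + η) :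
    fK η t = (((Real.cos (π * (|t| - 1) / (2 * η))) ^ 2 : ℝ) : ℂ) := by
  unfold fK
  rw [min_eq_right (by linarith), max_eq_right (by linarith)]
  rw [show π / (2 * η) * (|t| - 1) = π * (|t| - 1) / (2 * η) by ring]

lemma fK_right (η a : ℝ) (hη : 0 < η) (ha : a ≠ 0) (hb : (π/η)^2 - a^2 ≠ 0) :
    ∫ t in (1:ℝ)..(1+η), fK η t * Complex.exp (Complex.I * a * t) =
      (Complex.exp (Complex.I * a * (1+η)) - Complex.exp (Complex.I * a)) / (2 * Complex.I * a)
      - Complex.I * a * (Complex.exp (Complex.I * a * (1+η)) + Complex.exp (Complex.I * a)) /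
        (2 * ((π/η)^2 - a^2)) := by
  have haC : (a:ℂ) ≠ 0 := by exact_mod_cast ha
  have hbC : ((π:ℂ)/η)^2 - (a:ℂ)^2 ≠ 0 := by exact_mod_cast hb
  have hηC : (η:ℂ) ≠ 0 := by exact_mod_cast hη.ne'
  let b : ℂ := (π:ℂ)/η
  have hbC' : b^2 - (a:ℂ)^2 ≠ 0 := hbC
  let F : ℝ → ℂ := fun t => Complex.exp (Complex.I * a * t) / (2 * Complex.I * a) +
    Complex.exp (Complex.I * a * t) * (Complex.I * a * Complex.cos (b * (t - 1)) + b * Complex.sin (b * (t-1)))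
      / (2 * (b^2 - a^2))
  have key : ∀ t ∈ Set.uIcc (1:ℝ) (1+η), HasDerivAt F (fK η t * Complex.exp (Complex.I * a * t)) t := by
    intro t ht
    rw [Set.uIcc_of_le (by linarith)] at ht
    have h0 : |t| = t := abs_of_nonneg (by linarith [ht.1])
    have hf : fK η t = (1 + Complex.cos (b * (t - 1))) / 2 := by
      rw [fK_mid η t (by rw [h0]; exact ht.1) (by rw [h0]; exact ht.2), h0]
      push_cast
      rw [Complex.cos_sq]
      have : 2 * ((π:ℂ) * (t - 1) / (2 * η)) = b * (t-1) := by simp only [b]; field_simp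
      rw [this]; ring
    have e1 : HasDerivAt (fun z : ℂ => Complex.exp (Complex.I * a * z))
        (Complex.exp (Complex.I * a * t) * (Complex.I * a)) t := by
      simpa using ((hasDerivAt_id (t:ℂ)).const_mul (Complex.I * a)).cexp
    have l1 : HasDerivAt (fun z : ℂ => b * (z - 1)) b t := by
      simpa using ((hasDerivAt_id (t:ℂ)).sub_const 1).const_mul b
    have := (e1.div_const (2 * Complex.I * a)).add
      ((e1.mul ((l1.ccos.const_mul (Complex.I * a)).add (l1.csin.const_mul b))).div_const (2 * (b^2 - a^2)))
    have h2 := this.comp_ofReal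
    refine h2.congr_deriv ?_
    rw [hf]
    simp only [Pi.add_apply]
    field_simp
    ring_nf
    simp only [Complex.I_sq]
    ring
  rw [intervalIntegral.integral_eq_sub_of_hasDerivAt key
    (((fK_cont η).mul (by fun_prop)).intervalIntegrable _ _)]
  have hbη : b * η = π := by simp only [b]; field_simp
  simp only [F]
  push_cast
  rw [show (1 + (η:ℂ) - 1) = η by ring, hbη]
  simp only [sub_self, mul_zero, Complex.cos_zero, Complex.sin_zero, Complex.cos_pi, Complex.sin_pi, mul_one]
  change _ = _ - _ / (2 * (b^2 - a^2))
  ring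

lemma fK_int (η a : ℝ) (hη : 0 < η) (ha : a ≠ 0) (hb : (π/η)^2 - a^2 ≠ 0) :
    ∫ t : ℝ, fK η t * Complex.exp (Complex.I * a * t) =
      (((Real.sin a + Real.sin (a * (1 + η))) * (1/a + a/((π/η)^2 - a^2)) : ℝ) : ℂ) := by
  have haC : (a:ℂ) ≠ 0 := by exact_mod_cast ha
  have hbC : ((π:ℂ)/η)^2 - (a:ℂ)^2 ≠ 0 := by exact_mod_cast hb
  have hc : Continuous (fun t : ℝ => fK η t * Complex.exp (Complex.I * a * t)) :=
    (fK_cont η).mul (by fun_prop)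
  have hs : Function.support (fun t : ℝ => fK η t * Complex.exp (Complex.I * a * t)) ⊆
      Set.Ioc (-(1+η)) (1+η) := by
    intro t ht
    by_contra h
    apply ht
    have : 1 + η ≤ |t| := by
      by_contra h3
      push Not at h3
      rw [abs_lt] at h3
      exact h ⟨h3.1, h3.2.le⟩
    simp [fK_zero η hη t this]
  rw [← intervalIntegral.integral_eq_integral_of_support_subset hs]
  rw [← intervalIntegral.integral_add_adjacent_intervals (b := (1:ℝ))
    (hc.intervalIntegrable _ _) (hc.intervalIntegrable _ _),
    ← intervalIntegral.integral_add_adjacent_intervals (b := (-1:ℝ))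
    (hc.intervalIntegrable _ _) (hc.intervalIntegrable _ _), fK_right η a hη ha hb]
  have hl : ∫ t in (-(1+η))..(-1:ℝ), fK η t * Complex.exp (Complex.I * a * t) =
      ∫ t in (1:ℝ)..(1+η), fK η t * Complex.exp (Complex.I * ((-a : ℝ):ℂ) * t) := by
    rw [← intervalIntegral.integral_comp_neg]
    congr 1
    ext t
    simp [fK]
  have hm : ∫ t in (-1:ℝ)..1, fK η t * Complex.exp (Complex.I * a * t) =
      (Complex.exp (Complex.I * a) - Complex.exp (-(Complex.I * a))) / (Complex.I * a) := by
    have : ∫ t in (-1:ℝ)..1, fK η t * Complex.exp (Complex.I * a * t) =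
       ∫ t in (-1:ℝ)..1, Complex.exp (Complex.I * a * t) := by
      apply intervalIntegral.integral_congr
      intro t ht
      rw [Set.uIcc_of_le (by norm_num)] at ht
      simp [fK_one η hη t (abs_le.2 ht)]
    rw [this, integral_exp_mul_complex (by simp [ha])]
    simp
  rw [hl, hm, fK_right η (-a) hη (neg_ne_zero.2 ha) (by simpa using hb)]
  push_cast
  simp only [Complex.sin]
  have e1 : Complex.exp (Complex.I * -a) = Complex.exp (-a * Complex.I) := by ring_nf
  have e2 : Complex.exp (Complex.I * a) = Complex.exp (a * Complex.I) := by ring_nf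
  have e3 : Complex.exp (-(Complex.I * a)) = Complex.exp (-a * Complex.I) := by ring_nf
  have e4 : Complex.exp (Complex.I * -a * (1+η)) = Complex.exp (-(a * (1+η)) * Complex.I) := by ring_nf
  have e5 : Complex.exp (Complex.I * a * (1+η)) = Complex.exp (a * (1+η) * Complex.I) := by ring_nf
  rw [e1, e2, e3, e4, e5, neg_sq]
  generalize Complex.exp (-a * Complex.I) = A
  generalize Complex.exp (a * Complex.I) = B
  generalize Complex.exp (-(a * (1+η)) * Complex.I) = C
  generalize Complex.exp (a * (1+η) * Complex.I) = D
  generalize ((π:ℂ)/η)^2 - (a:ℂ)^2 = E at *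
  field_simp
  ring_nf
  simp only [Complex.I_sq]
  ring

lemma K_int (η : ℝ) (hη : 0 < η) (K : ℝ → ℝ) (hK : Continuous K)
    (hKeq : ∀ x : ℝ, x ≠ 0 → x ≠ 1 / (2 * η) → x ≠ -(1 / (2 * η)) →
      K x = (Real.sin (2 * π * x) + Real.sin (2 * π * (1 + η) * x)) /
        (2 * π * x * (1 - 4 * η ^ 2 * x ^ 2))) : Integrable K := by
  refine hK.locallyIntegrable.integrable_of_isBigO_cocompact (g := fun x : ℝ => (1 + x^2)⁻¹) ?_
    (integrable_inv_one_add_sq.integrableAtFilter _)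
  apply Asymptotics.IsBigO.of_bound (2 / η^2)
  filter_upwards [(tendsto_norm_cocompact_atTop (E := ℝ)).eventually_ge_atTop (max 1 (1/η))] with x hx
  rw [Real.norm_eq_abs] at hx
  have h1 : 1 ≤ |x| := (le_max_left _ _).trans hx
  have h2 : 1 / η ≤ |x| := (le_max_right _ _).trans hx
  have h3 : 1 ≤ η * |x| := by rwa [div_le_iff₀' hη] at h2
  have h4 : 1 ≤ x^2 := by rw [← sq_abs]; nlinarith
  have h5 : 1 ≤ η^2 * x^2 := by rw [← sq_abs x]; nlinarith
  have hne : x ≠ 0 := by rintro rfl; norm_num at h4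
  have hsq : ∀ y, y ^ 2 = (1/(2*η))^2 → x ≠ y := by
    rintro y hy rfl
    rw [hy] at h5
    field_simp at h5
    norm_num at h5
  rw [hKeq x hne (hsq _ rfl) (hsq _ (by ring)), norm_div, norm_mul, norm_mul, norm_mul]
  simp only [Real.norm_eq_abs]
  have hd : 3/2 * η^2 * (1 + x^2) ≤ |2| * |π| * |x| * |1 - 4 * η^2 * x^2| := by
    rw [abs_of_pos (by norm_num : (0:ℝ) < 2), abs_of_pos pi_pos,
      abs_of_nonpos (by nlinarith : 1 - 4 * η^2 * x^2 ≤ 0)]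
    have : 1 ≤ 2 * π * |x| := by nlinarith [pi_gt_three]
    have h6 : 0 ≤ 4 * η^2*x^2 - 1 := by nlinarith
    have : 4 * η^2*x^2 - 1 ≤ 2 * π * |x| * (4 * η^2*x^2 - 1) := le_mul_of_one_le_left h6 this
    nlinarith [sq_nonneg η]
  have hn : |Real.sin (2 * π * x) + Real.sin (2 * π * (1 + η) * x)| ≤ 2 := by
    refine (abs_add_le _ _).trans ?_
    linarith [Real.abs_sin_le_one (2 * π * x), Real.abs_sin_le_one (2 * π * (1 + η) * x)]
  have hp : 0 < η^2 * (1 + x^2) := by positivity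
  calc _ ≤ 2 / (3/2 * η^2 * (1 + x^2)) := by gcongr
    _ ≤ 2 / (η^2 * (1 + x^2)) := by gcongr; nlinarith [sq_nonneg η]
    _ = _ := by
      rw [abs_of_pos (by positivity)]; field_simp

open FourierTransform in
theorem fourier_transform_K_eta (η : ℝ) (hη : 0 < η) (K : ℝ → ℝ) (hK : Continuous K)
    (hKeq : ∀ x : ℝ, x ≠ 0 → x ≠ 1 / (2 * η) → x ≠ -(1 / (2 * η)) →
      K x = (Real.sin (2 * π * x) + Real.sin (2 * π * (1 + η) * x)) /
        (2 * π * x * (1 - 4 * η ^ 2 * x ^ 2)))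
    (t : ℝ) :
    (|t| ≤ 1 →
      (∫ x : ℝ, (K x : ℂ) * Complex.exp (-(2 * (π : ℂ)) * Complex.I * (t : ℂ) * (x : ℂ))) = 1) ∧
    (1 ≤ |t| → |t| ≤ 1 + η →
      (∫ x : ℝ, (K x : ℂ) * Complex.exp (-(2 * (π : ℂ)) * Complex.I * (t : ℂ) * (x : ℂ)))
        = (((Real.cos (π * (|t| - 1) / (2 * η))) ^ 2 : ℝ) : ℂ)) ∧
    (1 + η ≤ |t| →
      (∫ x : ℝ, (K x : ℂ) * Complex.exp (-(2 * (π : ℂ)) * Complex.I * (t : ℂ) * (x : ℂ))) = 0) := by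
  have hKi := K_int η hη K hK hKeq
  have hval : ∀ s : ℝ, s = 1 ∨ s = -1 → ∀ x : ℝ, x ≠ 0 → x ≠ 1 / (2 * η) → x ≠ -(1 / (2 * η)) →
      ∫ v : ℝ, fK η v * Complex.exp (Complex.I * ((s * (2 * π * x) : ℝ) : ℂ) * v) = (K x : ℂ) := by
    intro s hs x h0 h1 h2
    have hs2 : s^2 = 1 := by rcases hs with rfl | rfl <;> norm_num
    have hs0 : s ≠ 0 := by rintro rfl; norm_num at hs2
    have hq : 1 - 4 * η^2 * x^2 ≠ 0 := by
      intro h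
      have : (x - 1/(2*η)) * (x + 1/(2*η)) = 0 := by
        field_simp
        linarith
      rcases mul_eq_zero.1 this with h | h
      · exact h1 (by linarith)
      · exact h2 (by linarith)
    have hE : (π/η)^2 - (s * (2*π*x))^2 = (π/η)^2 * (1 - 4*η^2*x^2) := by
      rw [mul_pow, hs2]; field_simp; ring
    rw [fK_int η _ hη (by positivity) (by rw [hE]; positivity), hE, hKeq x h0 h1 h2]
    congr 1
    have : Real.sin (s * (2*π*x)) + Real.sin (s * (2*π*x) * (1+η)) =
        s * (Real.sin (2 * π * x) + Real.sin (2 * π * (1 + η) * x)) := by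
      rcases hs with rfl | rfl
      · rw [show 2 * π * (1 + η) * x = 1 * (2*π*x) * (1+η) by ring]; ring_nf
      · rw [show -1 * (2*π*x) * (1+η) = -(2 * π * (1 + η) * x) by ring, neg_one_mul, Real.sin_neg, Real.sin_neg]; ring
    rw [this]
    generalize Real.sin (2 * π * x) + Real.sin (2 * π * (1 + η) * x) = S
    have hpi := pi_pos.ne'
    generalize hq' : 1 - 4 * η ^ 2 * x ^ 2 = q at hq ⊢
    rcases hs with rfl | rfl
    · field_simp; rw [← hq']; ring
    · field_simp; rw [← hq']; ring
  have hae : ∀ᵐ x : ℝ, x ≠ 0 ∧ x ≠ 1 / (2 * η) ∧ x ≠ -(1 / (2 * η)) := by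
    filter_upwards [Measure.ae_ne volume (0:ℝ), Measure.ae_ne volume (1/(2*η)),
      Measure.ae_ne volume (-(1/(2*η)))] with x a b c using ⟨a, b, c⟩
  have hF : 𝓕 (fK η) =ᵐ[volume] fun x => (K x : ℂ) := by
    filter_upwards [hae] with x hx
    rw [← hval (-1) (Or.inr rfl) x hx.1 hx.2.1 hx.2.2, Real.fourier_real_eq_integral_exp_smul]
    congr 1; ext v
    rw [smul_eq_mul, mul_comm]
    congr 2; push_cast; ring
  have hFi : 𝓕⁻ (fK η) =ᵐ[volume] fun x => (K x : ℂ) := by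
    filter_upwards [hae] with x hx
    rw [← hval 1 (Or.inl rfl) x hx.1 hx.2.1 hx.2.2, Real.fourierInv_eq']
    congr 1; ext v
    rw [smul_eq_mul, mul_comm]
    congr 2; simp; ring
  have hcs : HasCompactSupport (fK η) := by
    apply HasCompactSupport.of_support_subset_isCompact (isCompact_Icc (a := -(1+η)) (b := 1+η))
    intro v hv
    by_contra h
    apply hv
    apply fK_zero η hη
    by_contra h3
    push Not at h3
    exact h (abs_le.1 h3.le)
  have hmain : (∫ x : ℝ, (K x : ℂ) * Complex.exp (-(2 * (π : ℂ)) * Complex.I * (t : ℂ) * (x : ℂ)))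
      = fK η t := by
    rw [← congrFun ((fK_cont η).fourier_fourierInv_eq ((fK_cont η).integrable_of_hasCompactSupport hcs)
      (hKi.ofReal.congr hF.symm)) t, Real.fourier_real_eq_integral_exp_smul]
    apply integral_congr_ae
    filter_upwards [hFi] with x hx
    rw [hx, smul_eq_mul, mul_comm]
    congr 2; push_cast; ring
  rw [hmain]
  exact ⟨fK_one η hη t, fK_mid η t, fK_zero η hη t⟩
end
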